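/- Every planar 2-connected cubic simple graph on n > 4 vertices has a cycle double cover of size at most n/2. -/

import Mathlib

/-!
The argument takes place in the class of loopless 2-edge-connected multigraphs with all degrees at
most 3, some vertex of degree 3, and no `K₃,₃` minor (`MG.Good`); a cycle is a circuit, that is, a
minimal nonempty set of edges with even degrees. No embedding in the plane is used: the
role of the faces is played by a double cover of maximal size.

*A cover by `|E| - |V| + 2` circuits* (`MG.exists_max`), by induction. Vertices of degree 2 are
suppressed. Across a cut with at most three edges and at least two vertices on each side the graph
is split into two smaller ones by contracting either side, and their covers are glued along the
cut. Otherwise the graph is cubic and cyclically 4-edge-connected; an edge `uv` is deleted. A cover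
of the remaining graph by the maximal number of circuits behaves like the set of faces of a plane
graph: sets of its members are dual to edge cuts. If some member passes through both `u` and `v`,
it is divided into two circuits through `uv`; otherwise the duality exhibits a `K₃,₃` minor of the
original graph.

*Saving circuits* (`MG.exists_improved`). In a cyclically 4-edge-connected cubic graph take a member
`C` of such a cover. The members meeting `C` correspond to the edges of `C`; colouring
these edges with three colours and adding up, within each colour, `C` and its neighbours of that
colour replaces `|C| + 1` members by three, a saving of `|C| - 2`.

*Assembling.* `MG.rooted_bound` saves one circuit in a graph on at least three vertices that is
cubic except perhaps at a root vertex, at which all parallel edges meet, and `MG.cubic_bound` saves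
two in a cubic graph without parallel edges on more than
four vertices: such a graph either is cyclically 4-edge-connected or splits along a small cut into
two graphs rooted at the contracted vertices, each saving one. As `2|E| = 3|V|` in a cubic graph,
the resulting bound `|E| - |V|` equals `|V| / 2`.
-/

open SimpleGraph

attribute [local instance] Classical.propDecidable

/-- A cycle in a graph: a connected, 2-regular subgraph. -/
def IsCycleSubgraph {V : Type*} {G : SimpleGraph V} (C : G.Subgraph) : Prop :=
  C.coe.Connected ∧ ∀ v ∈ C.verts, (C.neighborSet v).ncard = 2

/-- A cycle double cover: a multiset of cycles covering every edge exactly twice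
(counted with multiplicity). -/
def IsCDC {V : Type*} (G : SimpleGraph V) (S : Multiset G.Subgraph) : Prop :=
  (∀ C ∈ S, IsCycleSubgraph C) ∧
  ∀ e ∈ G.edgeSet, S.countP (fun C => e ∈ C.edgeSet) = 2

/-- Graph minor relation (via branch sets). -/
def HasGraphMinor {V : Type*} {W : Type*} (G : SimpleGraph V) (H : SimpleGraph W) : Prop :=
  ∃ f : W → Set V,
    (∀ w, (f w).Nonempty) ∧
    (∀ w, (G.induce (f w)).Connected) ∧
    (Pairwise fun w₁ w₂ => Disjoint (f w₁) (f w₂)) ∧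
    ∀ ⦃w₁ w₂⦄, H.Adj w₁ w₂ → ∃ v₁ ∈ f w₁, ∃ v₂ ∈ f w₂, G.Adj v₁ v₂

/-- Planarity, via Wagner's theorem: no `K₅` minor and no `K_{3,3}` minor. -/
def IsPlanar {V : Type*} (G : SimpleGraph V) : Prop :=
  ¬ HasGraphMinor G (completeGraph (Fin 5)) ∧
  ¬ HasGraphMinor G (completeBipartiteGraph (Fin 3) (Fin 3))

/-- `k`-connectivity: more than `k` vertices, and removing fewer than `k`
vertices leaves a connected graph. -/
def IsKConnected {V : Type*} [Fintype V] (k : ℕ) (G : SimpleGraph V) : Prop :=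
  k < Fintype.card V ∧ ∀ s : Set V, s.ncard < k → (G.induce sᶜ).Connected

/-- A Hamiltonian cycle: a cycle through all vertices. -/
def IsHamCycle {V : Type*} (G : SimpleGraph V) (C : G.Subgraph) : Prop :=
  IsCycleSubgraph C ∧ C.verts = Set.univ

/-! ### Multigraphs, cuts and even sets -/

/-- A finite multigraph: vertices and edges are finite sets in fixed ambient types, and every edge
`e` joins `s e` to `t e` (the order of the two ends carries no meaning). Fixing the ambient types
lets deletions and contractions be compared by equality of edge sets. -/
structure MG (α E : Type*) where
  verts : Finset α
  edges : Finset E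
  s : E → α
  t : E → α

namespace MG

variable {α E : Type*} (G : MG α E)

/-- The set of edges with exactly one end in `X`. -/
noncomputable def cut (X : Finset α) : Finset E := G.edges.filter (fun e => ¬ (G.s e ∈ X ↔ G.t e ∈ X))

/-- `v` is an end of `e`. -/
def inc (e : E) (v : α) : Prop := G.s e = v ∨ G.t e = v

/-- The mod 2 boundary of an edge set: the parity of its degree at `v`. -/
noncomputable def bd (F : Finset E) (v : α) : ZMod 2 :=
  ∑ e ∈ F, ((if G.s e = v then 1 else 0) + (if G.t e = v then 1 else 0))

/-- A circuit: a minimal nonempty edge set with even degrees. -/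
structure Circuit (C : Finset E) : Prop where
  sub : C ⊆ G.edges
  ne : C.Nonempty
  ev : ∀ v, G.bd C v = 0
  min : ∀ D ⊆ C, D.Nonempty → (∀ v, G.bd D v = 0) → D = C

/-- All edges have two distinct ends, which are vertices. -/
def WF : Prop := ∀ e ∈ G.edges, G.s e ∈ G.verts ∧ G.t e ∈ G.verts ∧ G.s e ≠ G.t e

variable {G}

lemma mem_cut {X : Finset α} {e : E} :
    e ∈ G.cut X ↔ e ∈ G.edges ∧ ¬ (G.s e ∈ X ↔ G.t e ∈ X) := by
  simp [cut]

lemma cut_sub (X : Finset α) : G.cut X ⊆ G.edges := Finset.filter_subset _ _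

lemma mem_star (hG : G.WF) {v : α} {e : E} : e ∈ G.cut {v} ↔ e ∈ G.edges ∧ G.inc e v := by
  rw [mem_cut, inc, Finset.mem_singleton, Finset.mem_singleton]
  constructor
  · rintro ⟨h, h2⟩; exact ⟨h, by tauto⟩
  · rintro ⟨h, h2⟩
    refine ⟨h, fun h3 => (hG e h).2.2 ?_⟩
    rcases h2 with h2 | h2
    · rw [h2, h3.1 h2]
    · rw [h2, h3.2 h2]

lemma cut_compl (hG : G.WF) {X : Finset α} : G.cut (G.verts \ X) = G.cut X := by
  ext e
  simp only [mem_cut, Finset.mem_sdiff]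
  refine and_congr_right fun h => ?_
  have := hG e h
  tauto

lemma bd_empty (v : α) : G.bd ∅ v = 0 := by simp [bd]

lemma bd_union {A B : Finset E} (h : Disjoint A B) (v : α) :
    G.bd (A ∪ B) v = G.bd A v + G.bd B v := Finset.sum_union h

lemma bd_sdiff {A B : Finset E} (h : B ⊆ A) (v : α) :
    G.bd (A \ B) v = G.bd A v + G.bd B v := by
  have h1 : G.bd (A \ B) v + G.bd B v = G.bd A v := Finset.sum_sdiff h
  rw [← h1, add_assoc, CharTwo.add_self_eq_zero, add_zero]

lemma bd_symmDiff (A B : Finset E) (v : α) :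
    G.bd (symmDiff A B) v = G.bd A v + G.bd B v := by
  have h1 : symmDiff A B = (A \ (A ∩ B)) ∪ (B \ (A ∩ B)) := by
    ext x; simp [Finset.mem_symmDiff]
  have h2 : Disjoint (A \ (A ∩ B)) (B \ (A ∩ B)) := by
    rw [Finset.disjoint_left]; intro x; simp; tauto
  rw [h1, bd_union h2, bd_sdiff Finset.inter_subset_left, bd_sdiff Finset.inter_subset_right]
  have := CharTwo.add_self_eq_zero (G.bd (A ∩ B) v)
  linear_combination this

lemma sum_bd (X : Finset α) (F : Finset E) :
    ∑ v ∈ X, G.bd F v = ((F.filter (fun e => ¬ (G.s e ∈ X ↔ G.t e ∈ X))).card : ZMod 2) := by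
  unfold bd
  rw [Finset.sum_comm, Finset.natCast_card_filter]
  refine Finset.sum_congr rfl fun e _ => ?_
  rw [Finset.sum_add_distrib, Finset.sum_ite_eq, Finset.sum_ite_eq]
  by_cases h1 : G.s e ∈ X <;> by_cases h2 : G.t e ∈ X <;> simp [h1, h2]
  decide

lemma inter_cut {F : Finset E} (hF : F ⊆ G.edges) (X : Finset α) :
    F ∩ G.cut X = F.filter (fun e => ¬ (G.s e ∈ X ↔ G.t e ∈ X)) := by
  ext e
  simp only [Finset.mem_inter, mem_cut, Finset.mem_filter]
  constructor
  · tauto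
  · exact fun h => ⟨h.1, hF h.1, h.2⟩

lemma sum_bd_cut {F : Finset E} (hF : F ⊆ G.edges) (X : Finset α) :
    ∑ v ∈ X, G.bd F v = ((F ∩ G.cut X).card : ZMod 2) := by
  rw [sum_bd, inter_cut hF]

lemma bd_eq {F : Finset E} (hF : F ⊆ G.edges) (v : α) :
    G.bd F v = ((F ∩ G.cut {v}).card : ZMod 2) := by
  rw [← sum_bd_cut hF, Finset.sum_singleton]

lemma even_cut {F : Finset E} (hF : F ⊆ G.edges) (h : ∀ v, G.bd F v = 0) (X : Finset α) :
    Even (F ∩ G.cut X).card := by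
  rw [← ZMod.natCast_eq_zero_iff_even, ← sum_bd_cut hF]
  exact Finset.sum_eq_zero fun v _ => h v

lemma bd_eq_zero_of_not_inc {F : Finset E} {v : α} (h : ∀ e ∈ F, ¬ G.inc e v) :
    G.bd F v = 0 := by
  refine Finset.sum_eq_zero fun e he => ?_
  have := h e he
  simp only [inc, not_or] at this
  simp [this.1, this.2]

/-- The boundary at `v` only depends on the edges at `v`. -/
lemma bd_congr {F F' : Finset E} {v : α} (h : ∀ e, G.inc e v → (e ∈ F ↔ e ∈ F')) :
    G.bd F v = G.bd F' v := by
  have h0 : ∀ K : Finset E, G.bd K v = G.bd (K.filter (fun e => G.inc e v)) v := by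
    intro K
    unfold bd
    rw [Finset.sum_filter]
    refine Finset.sum_congr rfl fun e _ => ?_
    split_ifs <;> simp_all [inc]
  rw [h0 F, h0 F']
  congr 1
  ext e
  simp only [Finset.mem_filter]
  constructor
  · rintro ⟨a, b⟩; exact ⟨(h e b).1 a, b⟩
  · rintro ⟨a, b⟩; exact ⟨(h e b).2 a, b⟩

lemma sum_verts_bd (hG : G.WF) {F : Finset E} (hF : F ⊆ G.edges) :
    ∑ v ∈ G.verts, G.bd F v = 0 := by
  rw [sum_bd, Finset.filter_false_of_mem, Finset.card_empty, Nat.cast_zero]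
  intro e he
  have := hG e (hF he)
  tauto

/-- A circuit not crossing a cut lies on one side of it. -/
lemma Circuit.side {C : Finset E} (hC : G.Circuit C) {X : Finset α}
    (h : ∀ e ∈ C, (G.s e ∈ X ↔ G.t e ∈ X)) :
    (∀ e ∈ C, G.s e ∈ X) ∨ (∀ e ∈ C, G.s e ∉ X) := by
  by_cases hD : (C.filter (fun e => G.s e ∈ X)).Nonempty
  · left
    have := hC.min _ (Finset.filter_subset _ _) hD ?_
    · intro e he
      rw [← this] at he
      exact (Finset.mem_filter.1 he).2
    · intro v
      by_cases hv : v ∈ X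
      · rw [← hC.ev v]
        apply bd_congr
        intro e he
        simp only [Finset.mem_filter, and_iff_left_iff_imp]
        intro heC
        rcases he with he | he
        · rwa [he]
        · rw [h e heC, he]; exact hv
      · apply bd_eq_zero_of_not_inc
        intro e he hi
        rw [Finset.mem_filter] at he
        rcases hi with hi | hi
        · exact hv (hi ▸ he.2)
        · exact hv (hi ▸ (h e he.1).1 he.2)
  · right
    intro e he hx
    exact hD ⟨e, Finset.mem_filter.2 ⟨he, hx⟩⟩

/-- A circuit touching both sides of a cut crosses it. -/
lemma Circuit.cross {C : Finset E} (hC : G.Circuit C) {X : Finset α} {x y : α} {f g : E}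
    (hx : x ∈ X) (hy : y ∉ X) (hf : f ∈ C) (hfx : G.inc f x) (hg : g ∈ C) (hgy : G.inc g y) :
    ∃ e ∈ C, e ∈ G.cut X := by
  by_contra hcon
  push Not at hcon
  have h : ∀ e ∈ C, (G.s e ∈ X ↔ G.t e ∈ X) := by
    intro e he
    by_contra h
    exact hcon e he (mem_cut.2 ⟨hC.sub he, h⟩)
  rcases hC.side h with h1 | h1
  · rcases hgy with e1 | e1
    · exact hy (e1 ▸ h1 g hg)
    · exact hy (e1 ▸ (h g hg).1 (h1 g hg))
  · rcases hfx with e1 | e1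
    · exact h1 f hf (e1 ▸ hx)
    · exact h1 f hf ((h f hf).2 (e1 ▸ hx))

/-- In a graph of maximum degree at most 3, a circuit has degree 2 at each of its vertices. -/
lemma Circuit.deg (hG : G.WF) {C : Finset E} (hC : G.Circuit C) {v : α}
    (hd : (G.cut {v}).card ≤ 3) {e : E} (he : e ∈ C) (hev : G.inc e v) :
    (C ∩ G.cut {v}).card = 2 := by
  have h1 := even_cut hC.sub hC.ev {v}
  have h2 : (C ∩ G.cut {v}).card ≤ 3 := (Finset.card_le_card Finset.inter_subset_right).trans hd
  have h3 : 0 < (C ∩ G.cut {v}).card :=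
    Finset.card_pos.2 ⟨e, Finset.mem_inter.2 ⟨he, (mem_star hG).2 ⟨hC.sub he, hev⟩⟩⟩
  obtain ⟨k, hk⟩ := h1
  omega

lemma Circuit.exists_other (hG : G.WF) {C : Finset E} (hC : G.Circuit C) {v : α}
    (hd : (G.cut {v}).card ≤ 3) {e : E} (he : e ∈ C) (hev : G.inc e v) :
    ∃ f ∈ C, f ≠ e ∧ G.inc f v := by
  have h := hC.deg hG hd he hev
  obtain ⟨f, hf, hne⟩ := Finset.exists_mem_ne (by omega : 1 < (C ∩ G.cut {v}).card) e
  rw [Finset.mem_inter, mem_star hG] at hf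
  exact ⟨f, hf.1, hne, hf.2.2⟩

/-- In a graph of maximum degree at most 3, circuits with a common vertex have a common edge at that
vertex. -/
lemma Circuit.common (hG : G.WF) {C D : Finset E} (hC : G.Circuit C) (hD : G.Circuit D) {v : α}
    (hd : (G.cut {v}).card ≤ 3) {e f : E} (he : e ∈ C) (hev : G.inc e v) (hf : f ∈ D)
    (hfv : G.inc f v) : ∃ h ∈ C, h ∈ D ∧ G.inc h v := by
  have h1 := hC.deg hG hd he hev
  have h2 := hD.deg hG hd hf hfv
  by_contra hcon
  push Not at hcon
  have h3 : Disjoint (C ∩ G.cut {v}) (D ∩ G.cut {v}) := by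
    rw [Finset.disjoint_left]
    intro x hx hx'
    rw [Finset.mem_inter, mem_star hG] at hx hx'
    exact hcon x hx.1 hx'.1 hx.2.2
  have h4 := Finset.card_union_of_disjoint h3
  have h5 : ((C ∩ G.cut {v}) ∪ (D ∩ G.cut {v})).card ≤ (G.cut {v}).card :=
    Finset.card_le_card (Finset.union_subset Finset.inter_subset_right Finset.inter_subset_right)
  omega

lemma Circuit.two_le_card (hG : G.WF) {C : Finset E} (hC : G.Circuit C) : 2 ≤ C.card := by
  obtain ⟨e, he⟩ := hC.ne
  have h := hC.ev (G.s e)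
  rw [bd_eq hC.sub, ZMod.natCast_eq_zero_iff_even] at h
  have h3 : 0 < (C ∩ G.cut {G.s e}).card :=
    Finset.card_pos.2 ⟨e, Finset.mem_inter.2 ⟨he, (mem_star hG).2 ⟨hC.sub he, Or.inl rfl⟩⟩⟩
  have h2 : (C ∩ G.cut {G.s e}).card ≤ C.card := Finset.card_le_card Finset.inter_subset_left
  obtain ⟨k, hk⟩ := h
  omega


/-! ### Contractions, deletions and the class of graphs under consideration -/

/-- Contraction of the vertex set `X` to the vertex `x`. Edges inside `X` are dropped. -/
noncomputable def contract (G : MG α E) (X : Finset α) (x : α) : MG α E where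
  verts := insert x (G.verts \ X)
  edges := G.edges.filter (fun e => ¬ (G.s e ∈ X ∧ G.t e ∈ X))
  s := fun e => if G.s e ∈ X then x else G.s e
  t := fun e => if G.t e ∈ X then x else G.t e

/-- Deletion of an edge. -/
noncomputable def del (G : MG α E) (e : E) : MG α E := { G with edges := G.edges.erase e }

/-- The edge `e` joins the vertex sets `A` and `B`. -/
def joins (G : MG α E) (e : E) (A B : Finset α) : Prop :=
  (G.s e ∈ A ∧ G.t e ∈ B) ∨ (G.t e ∈ A ∧ G.s e ∈ B)

/-- `X` induces a connected subgraph, expressed through partitions of `X`. -/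
def Conn (G : MG α E) (X : Finset α) : Prop :=
  ∀ Z ⊆ X, Z.Nonempty → Z ≠ X → ∃ e ∈ G.edges, G.joins e Z (X \ Z)

/-- There is a `K_{3,3}` minor, given by its branch sets. -/
def HasK33 (G : MG α E) : Prop :=
  ∃ f : Fin 3 ⊕ Fin 3 → Finset α,
    (∀ w, (f w).Nonempty ∧ f w ⊆ G.verts ∧ G.Conn (f w)) ∧
    (Pairwise fun w₁ w₂ => Disjoint (f w₁) (f w₂)) ∧
    ∀ i j, ∃ e ∈ G.edges, G.joins e (f (Sum.inl i)) (f (Sum.inr j))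

/-- The class of graphs on which the induction runs: 2-edge-connected, all degrees 2 or 3, at least
one vertex of degree 3, and no `K_{3,3}` minor. -/
structure Good (G : MG α E) : Prop where
  wf : G.WF
  two : ∀ X ⊆ G.verts, X.Nonempty → X ≠ G.verts → 2 ≤ (G.cut X).card
  deg : ∀ v ∈ G.verts, (G.cut {v}).card ≤ 3
  branch : ∃ v ∈ G.verts, (G.cut {v}).card = 3
  k33 : ¬ G.HasK33

/-- `G` has a cycle double cover by `m` circuits, given as an indexed family. -/
def HasCDC (G : MG α E) (m : ℕ) : Prop :=
  ∃ (ι : Type) (_ : Fintype ι) (S : ι → Finset E), Fintype.card ι = m ∧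
    (∀ i, G.Circuit (S i)) ∧ ∀ e ∈ G.edges, (Finset.univ.filter (fun i => e ∈ S i)).card = 2

lemma contract_edges_sub (X : Finset α) (x : α) : (G.contract X x).edges ⊆ G.edges :=
  Finset.filter_subset _ _

lemma mem_contract_edges {X : Finset α} {x : α} {e : E} :
    e ∈ (G.contract X x).edges ↔ e ∈ G.edges ∧ ¬ (G.s e ∈ X ∧ G.t e ∈ X) := by
  simp [contract]

lemma contract_cut_mem {X Z : Finset α} {x : α} (hx : x ∈ Z) :
    (G.contract X x).cut Z = G.cut (Z ∪ X) := by
  ext e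
  simp only [mem_cut, mem_contract_edges, Finset.mem_union]
  simp only [contract]
  by_cases h1 : G.s e ∈ X <;> by_cases h2 : G.t e ∈ X <;> simp [h1, h2, hx]

lemma contract_cut_notMem {X Z : Finset α} {x : α} (hx : x ∉ Z)
    (hZ : Z ⊆ (G.contract X x).verts) : (G.contract X x).cut Z = G.cut Z := by
  have hd : ∀ a ∈ X, a ∉ Z := by
    intro a ha haZ
    have := hZ haZ
    simp only [contract, Finset.mem_insert, Finset.mem_sdiff] at this
    rcases this with h | h
    · exact hx (h ▸ haZ)
    · exact h.2 ha
  ext e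
  simp only [mem_cut, mem_contract_edges]
  simp only [contract]
  by_cases h1 : G.s e ∈ X <;> by_cases h2 : G.t e ∈ X <;> simp [h1, h2, hx, hd]

lemma contract_cut_self {X : Finset α} {x : α} (hx : x ∈ X) :
    (G.contract X x).cut {x} = G.cut X := by
  rw [contract_cut_mem (Finset.mem_singleton_self x)]
  congr 1
  ext a
  simp only [Finset.mem_union, Finset.mem_singleton]
  constructor
  · rintro (rfl | h) <;> assumption
  · exact Or.inr

lemma contract_cut_other {X : Finset α} {x v : α} (hx : x ∈ X) (hv : v ∈ G.verts) (hvX : v ∉ X) :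
    (G.contract X x).cut {v} = G.cut {v} := by
  apply contract_cut_notMem
  · simp only [Finset.mem_singleton]
    rintro rfl; exact hvX hx
  · simp [contract, hv, hvX]

lemma contract_wf (hG : G.WF) {X : Finset α} {x : α} (hx : x ∈ X) : (G.contract X x).WF := by
  intro e he
  rw [mem_contract_edges] at he
  have := hG e he.1
  simp only [contract, Finset.mem_insert, Finset.mem_sdiff]
  by_cases h1 : G.s e ∈ X <;> by_cases h2 : G.t e ∈ X <;> simp [h1, h2] <;> try tauto
  · refine ⟨Or.inr this.2.1, ?_⟩
    rintro rfl; exact h2 hx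
  · refine ⟨Or.inr this.1, ?_⟩
    intro h; exact h1 (h ▸ hx)

lemma card_contract_verts {X : Finset α} {x : α} (hX : X ⊆ G.verts) (hx : x ∈ X) :
    (G.contract X x).verts.card + X.card = G.verts.card + 1 := by
  simp only [contract]
  rw [Finset.card_insert_of_notMem (by simp [hx]), Finset.card_sdiff_of_subset hX]
  have := Finset.card_le_card hX
  omega

lemma contract_k33 {X : Finset α} {x : α} (hX : X ⊆ G.verts) (hx : x ∈ X) (hc : G.Conn X)
    (h : (G.contract X x).HasK33) : G.HasK33 := by
  obtain ⟨f, h1, h2, h3⟩ := h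
  -- the preimage of a vertex set under the contraction
  let π : Finset α → Finset α := fun Z => if x ∈ Z then Z ∪ X else Z
  have hd : ∀ w, ∀ a ∈ f w, a = x ∨ (a ∈ G.verts ∧ a ∉ X) := by
    intro w a ha
    have := (h1 w).2.1 ha
    simpa [contract] using this
  have hmem : ∀ w a, a ∈ π (f w) ↔ (if a ∈ X then x else a) ∈ f w := by
    intro w a
    simp only [π]
    by_cases hxw : x ∈ f w <;> by_cases ha : a ∈ X <;> simp [hxw, ha]
    intro haf
    rcases hd w a haf with h | h
    · exact hxw (h ▸ haf)
    · exact h.2 ha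
  have hjoin : ∀ e ∈ (G.contract X x).edges, ∀ w w',
      (G.contract X x).joins e (f w) (f w') → G.joins e (π (f w)) (π (f w')) := by
    intro e _ w w' hj
    simp only [joins, hmem] at *
    simpa [contract] using hj
  refine ⟨fun w => π (f w), ?_, ?_, ?_⟩
  · intro w
    refine ⟨?_, ?_, ?_⟩
    · obtain ⟨a, ha⟩ := (h1 w).1
      refine ⟨a, ?_⟩
      simp only [π]; split_ifs <;> simp [ha]
    · intro a ha
      rw [hmem] at ha
      by_cases haX : a ∈ X
      · exact hX haX
      · rw [if_neg haX] at ha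
        rcases hd w a ha with h | h
        · exact absurd (h ▸ hx) haX
        · exact h.1
    · intro Z hZ hZn hZne
      by_cases hsplit : (X ⊆ Z) ∨ Disjoint X Z
      · -- `Z` is a union of fibres, so its image splits `f w`
        have hfib : ∀ a, a ∈ X → (a ∈ Z ↔ x ∈ Z) := by
          intro a ha
          rcases hsplit with h | h
          · simp [h ha, h hx]
          · simp [Finset.disjoint_left.1 h ha, Finset.disjoint_left.1 h hx]
        have hfib' : ∀ a, a ∈ Z ↔ (if a ∈ X then x else a) ∈ Z := by
          intro a
          by_cases ha : a ∈ X
          · simp [ha, hfib a ha]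
          · simp [ha]
        have hne : (Z ∩ f w).Nonempty := by
          obtain ⟨a, ha⟩ := hZn
          refine ⟨if a ∈ X then x else a, Finset.mem_inter.2 ⟨(hfib' a).1 ha, ?_⟩⟩
          exact (hmem w a).1 (hZ ha)
        have hpr : Z ∩ f w ≠ f w := by
          intro heq
          apply hZne
          refine Finset.Subset.antisymm hZ fun a ha => ?_
          rw [hmem, ← heq, Finset.mem_inter] at ha
          exact (hfib' a).2 ha.1
        obtain ⟨e, he, hj⟩ := (h1 w).2.2 (Z ∩ f w) Finset.inter_subset_right hne hpr
        refine ⟨e, contract_edges_sub X x he, ?_⟩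
        simp only [joins, Finset.mem_sdiff, Finset.mem_inter, hmem, hfib' (G.s e),
          hfib' (G.t e)] at *
        simp only [contract] at hj
        tauto
      · push Not at hsplit
        obtain ⟨hs1, hs2⟩ := hsplit
        have hXw : X ⊆ π (f w) := by
          rw [Finset.not_disjoint_iff] at hs2
          obtain ⟨a, ha, haZ⟩ := hs2
          have := hZ haZ
          rw [hmem, if_pos ha] at this
          intro b hb
          rw [hmem, if_pos hb]; exact this
        obtain ⟨e, he, hj⟩ := hc (X ∩ Z) Finset.inter_subset_left
          (Finset.not_disjoint_iff_nonempty_inter.1 hs2)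
          (fun h => hs1 (Finset.inter_eq_left.1 h))
        refine ⟨e, he, ?_⟩
        simp only [joins, Finset.mem_sdiff, Finset.mem_inter] at *
        rcases hj with ⟨⟨a, b⟩, c, d⟩ | ⟨⟨a, b⟩, c, d⟩
        · exact Or.inl ⟨b, hXw c, fun h => d ⟨c, h⟩⟩
        · exact Or.inr ⟨b, hXw c, fun h => d ⟨c, h⟩⟩
  · intro w w' hne
    rw [Finset.disjoint_left]
    intro a ha ha'
    rw [hmem] at ha ha'
    exact Finset.disjoint_left.1 (h2 hne) ha ha'
  · intro i j
    obtain ⟨e, he, hj⟩ := h3 i j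
    exact ⟨e, contract_edges_sub X x he, hjoin e he _ _ hj⟩

lemma Good.contract (hG : G.Good) {X : Finset α} {x : α} (hX : X ⊆ G.verts) (hx : x ∈ X)
    (h3 : (G.cut X).card ≤ 3) (hc : G.Conn X)
    (hb : (G.cut X).card = 3 ∨ ∃ v ∈ G.verts, v ∉ X ∧ (G.cut {v}).card = 3) :
    (G.contract X x).Good where
  wf := contract_wf hG.wf hx
  two := by
    intro Z hZ hZn hZne
    by_cases hxZ : x ∈ Z
    · rw [contract_cut_mem hxZ]
      have hsub : ∀ a ∈ Z, a ∈ G.verts := by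
        intro a ha
        have := hZ ha
        simp only [MG.contract, Finset.mem_insert, Finset.mem_sdiff] at this
        rcases this with rfl | h
        · exact hX hx
        · exact h.1
      apply hG.two
      · exact Finset.union_subset hsub hX
      · exact hZn.mono Finset.subset_union_left
      · intro heq
        apply hZne
        refine Finset.Subset.antisymm hZ fun a ha => ?_
        simp only [MG.contract, Finset.mem_insert, Finset.mem_sdiff] at ha
        rcases ha with rfl | h
        · exact hxZ
        · have := h.1
          rw [← heq, Finset.mem_union] at this
          exact this.resolve_right h.2
    · rw [contract_cut_notMem hxZ hZ]
      have hsub : Z ⊆ G.verts \ X := by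
        intro a ha
        have := hZ ha
        simp only [MG.contract, Finset.mem_insert] at this
        rcases this with rfl | h
        · exact absurd ha hxZ
        · exact h
      apply hG.two _ (hsub.trans Finset.sdiff_subset) hZn
      rintro rfl
      exact hxZ (hX hx)
  deg := by
    intro v hv
    simp only [MG.contract, Finset.mem_insert, Finset.mem_sdiff] at hv
    by_cases hvx : v = x
    · subst hvx; rw [contract_cut_self hx]; exact h3
    · have hv' := hv.resolve_left hvx
      rw [contract_cut_other hx hv'.1 hv'.2]
      exact hG.deg v hv'.1
  branch := by
    rcases hb with h | ⟨v, hv, hvX, h⟩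
    · exact ⟨x, by simp [MG.contract], by rw [contract_cut_self hx]; exact h⟩
    · exact ⟨v, by simp [MG.contract, hv, hvX], by rw [contract_cut_other hx hv hvX]; exact h⟩
  k33 := fun h => hG.k33 (contract_k33 hX hx hc h)

/-- A side of a cut of at most three edges is connected, since both parts of a splitting would send
at least two edges across the cut. -/
lemma Good.conn (hG : G.Good) {X : Finset α} (hX : X ⊆ G.verts) (hne : X ≠ G.verts)
    (h3 : (G.cut X).card ≤ 3) : G.Conn X := by
  intro Z hZ hZn hZne
  by_contra hcon
  push Not at hcon
  have hp : ¬ X \ Z = ∅ := fun h => hZne (Finset.Subset.antisymm hZ (Finset.sdiff_eq_empty_iff_subset.1 h))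
  have h1 := hG.two Z (hZ.trans hX) hZn (fun h => hne (Finset.Subset.antisymm hX (h ▸ hZ)))
  have h2 := hG.two (X \ Z) (Finset.sdiff_subset.trans hX) (Finset.nonempty_iff_ne_empty.2 hp)
    (fun h => hne (Finset.Subset.antisymm hX (h ▸ Finset.sdiff_subset)))
  have hd : Disjoint (G.cut Z) (G.cut (X \ Z)) := by
    rw [Finset.disjoint_left]
    intro e he he'
    have := hcon e (cut_sub _ he)
    simp only [mem_cut, joins, Finset.mem_sdiff] at *
    tauto
  have hu : G.cut Z ∪ G.cut (X \ Z) ⊆ G.cut X := by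
    intro e he
    have he1 : e ∈ G.edges := by
      rcases Finset.mem_union.1 he with h | h <;> exact cut_sub _ h
    have := hcon e he1
    have a1 : G.s e ∈ Z → G.s e ∈ X := fun h => hZ h
    have a2 : G.t e ∈ Z → G.t e ∈ X := fun h => hZ h
    simp only [Finset.mem_union, mem_cut, joins, Finset.mem_sdiff] at *
    tauto
  have := Finset.card_le_card hu
  rw [Finset.card_union_of_disjoint hd] at this
  omega


/-! ### Gluing cycle double covers along a small cut -/

lemma bd_contract_out {X : Finset α} {x v : α} (hx : x ∈ X) (hv : v ∉ X) (F : Finset E) :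
    (G.contract X x).bd F v = G.bd F v := by
  have h0 : x ≠ v := by rintro rfl; exact hv hx
  refine Finset.sum_congr rfl fun e _ => ?_
  have h : ∀ a : α, ((if a ∈ X then x else a) = v) ↔ a = v := by
    intro a
    by_cases ha : a ∈ X
    · simp only [ha, if_true]
      constructor
      · exact fun h => absurd h h0
      · rintro rfl; exact absurd ha hv
    · simp [ha]
  simp only [contract, h]

lemma bd_contract_self {X : Finset α} {x : α} (hx : x ∈ X) (F : Finset E) :
    (G.contract X x).bd F x = ∑ v ∈ X, G.bd F v := by
  have h : ∀ a : α, ((if a ∈ X then x else a) = x) ↔ a ∈ X := by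
    intro a
    by_cases ha : a ∈ X
    · simp [ha]
    · simp only [ha, if_false, iff_false]
      rintro rfl; exact ha hx
  rw [sum_bd, ← Finset.sum_singleton (fun v => (G.contract X x).bd F v) x, sum_bd]
  simp only [contract, Finset.mem_singleton, h]

lemma bd_contract_in {X : Finset α} {x v : α} (hv : v ∈ X) (hvx : v ≠ x) (F : Finset E) :
    (G.contract X x).bd F v = 0 := by
  apply bd_eq_zero_of_not_inc
  intro e _
  have h : ∀ a : α, ¬ ((if a ∈ X then x else a) = v) := by
    intro a
    by_cases ha : a ∈ X
    · simp only [ha, if_true]; exact fun h => hvx h.symm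
    · simp only [ha, if_false]; rintro rfl; exact ha hv
  simp only [inc, contract, h, or_self, not_false_eq_true]

/-- Restricting an even set to a contraction keeps it even. -/
lemma even_contract {X : Finset α} {x : α} (hx : x ∈ X) {D : Finset E} (hD : D ⊆ G.edges)
    (h : ∀ v, G.bd D v = 0) (v : α) :
    (G.contract X x).bd (D ∩ (G.contract X x).edges) v = 0 := by
  have h1 : (G.contract X x).bd D v = 0 := by
    by_cases hv : v ∈ X
    · by_cases hvx : v = x
      · subst hvx
        rw [bd_contract_self hx]
        exact Finset.sum_eq_zero fun v _ => h v
      · exact bd_contract_in hv hvx D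
    · rw [bd_contract_out hx hv]; exact h v
  have h2 : (G.contract X x).bd (D \ (D ∩ (G.contract X x).edges)) v = 0 := by
    refine Finset.sum_eq_zero fun e he => ?_
    simp only [Finset.mem_sdiff, Finset.mem_inter, mem_contract_edges] at he
    have h3 : G.s e ∈ X ∧ G.t e ∈ X := by
      have := hD he.1
      tauto
    simp only [contract, h3.1, h3.2, if_true]
    exact CharTwo.add_self_eq_zero _
  rw [bd_sdiff Finset.inter_subset_left, h1, zero_add] at h2
  exact h2

lemma circuit_of_contract {Y : Finset α} {y : α} (hy : y ∈ Y) {C : Finset E}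
    (hC : (G.contract Y y).Circuit C) (h : ¬ (C ∩ G.cut Y).Nonempty) : G.Circuit C where
  sub := hC.sub.trans (contract_edges_sub Y y)
  ne := hC.ne
  ev := by
    intro v
    by_cases hv : v ∈ Y
    · apply bd_eq_zero_of_not_inc
      intro e he hev
      have h1 := mem_contract_edges.1 (hC.sub he)
      have h2 : e ∉ G.cut Y := fun h' => h ⟨e, Finset.mem_inter.2 ⟨he, h'⟩⟩
      rw [mem_cut] at h2
      rcases hev with rfl | rfl <;> tauto
    · rw [← bd_contract_out hy hv]; exact hC.ev v
  min := by
    intro D hD hDn hDe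
    apply hC.min D hD hDn
    intro v
    have := even_contract hy (hD.trans (hC.sub.trans (contract_edges_sub Y y))) hDe v
    rwa [Finset.inter_eq_left.2 (hD.trans hC.sub)] at this

/-- Gluing two circuits of the two contractions with the same trace on the cut. -/
lemma glue_circuit (hG : G.WF) {X : Finset α} {x y : α} (hx : x ∈ X)
    (hy : y ∈ G.verts \ X) {C₁ C₂ : Finset E} (h1 : (G.contract (G.verts \ X) y).Circuit C₁)
    (h2 : (G.contract X x).Circuit C₂) (htr : C₁ ∩ G.cut X = C₂ ∩ G.cut X)
    (hne : (C₁ ∩ G.cut X).Nonempty) : G.Circuit (C₁ ∪ C₂) := by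
  have hs1 := h1.sub.trans (contract_edges_sub (G.verts \ X) y)
  have hs2 := h2.sub.trans (contract_edges_sub X x)
  have hiff : ∀ e ∈ G.cut X, (e ∈ C₁ ↔ e ∈ C₂) := by
    intro e he
    have := Finset.ext_iff.1 htr e
    simpa [he] using this
  have hsub : C₁ ∪ C₂ ⊆ G.edges := Finset.union_subset hs1 hs2
  refine ⟨hsub, h1.ne.mono Finset.subset_union_left, ?_, ?_⟩
  · intro v
    by_cases hv : v ∈ G.verts
    swap
    · apply bd_eq_zero_of_not_inc
      intro e he hev
      have := hG e (hsub he)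
      rcases hev with rfl | rfl <;> tauto
    by_cases hvX : v ∈ X
    · rw [← h1.ev v, bd_contract_out hy (by simp [hvX])]
      apply bd_congr
      intro e he
      simp only [Finset.mem_union, or_iff_left_iff_imp]
      intro heC
      have h3 := mem_contract_edges.1 (h2.sub heC)
      refine (hiff e (mem_cut.2 ⟨h3.1, ?_⟩)).2 heC
      rcases he with rfl | rfl <;> tauto
    · rw [← h2.ev v, bd_contract_out hx hvX]
      apply bd_congr
      intro e he
      simp only [Finset.mem_union, or_iff_right_iff_imp]
      intro heC
      have h3 := mem_contract_edges.1 (h1.sub heC)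
      simp only [Finset.mem_sdiff] at h3
      have h4 := hG e h3.1
      refine (hiff e (mem_cut.2 ⟨h3.1, ?_⟩)).1 heC
      rcases he with rfl | rfl <;> tauto
  · intro D hD hDn hDe
    have hDG := hD.trans hsub
    have e1 := even_contract hy hDG hDe
    have e2 := even_contract hx hDG hDe
    set E1 := (G.contract (G.verts \ X) y).edges with hE1
    set E2 := (G.contract X x).edges with hE2
    have hcut : ∀ e, e ∈ G.edges → (e ∈ G.cut X ↔ e ∈ E1 ∧ e ∈ E2) := by
      intro e he
      have := hG e he
      simp only [hE1, hE2, mem_contract_edges, mem_cut, Finset.mem_sdiff]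
      tauto
    have hcov : ∀ e, e ∈ G.edges → e ∈ E1 ∨ e ∈ E2 := by
      intro e he
      have := hG e he
      simp only [hE1, hE2, mem_contract_edges, Finset.mem_sdiff]
      tauto
    have d1 : D ∩ E1 ⊆ C₁ := by
      intro e he
      rw [Finset.mem_inter] at he
      rcases Finset.mem_union.1 (hD he.1) with h | h
      · exact h
      · exact (hiff e ((hcut e (hs2 h)).2 ⟨he.2, h2.sub h⟩)).2 h
    have d2 : D ∩ E2 ⊆ C₂ := by
      intro e he
      rw [Finset.mem_inter] at he
      rcases Finset.mem_union.1 (hD he.1) with h | h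
      · exact (hiff e ((hcut e (hs1 h)).2 ⟨h1.sub h, he.2⟩)).1 h
      · exact h
    -- an edge of the trace lies in `D` as soon as one of the two restrictions is everything
    obtain ⟨g, hg⟩ := hne
    rw [Finset.mem_inter] at hg
    have hg2 := (hiff g hg.2).1 hg.1
    have hgE := (hcut g (hs1 hg.1)).1 hg.2
    have k1 : g ∈ D → D ∩ E1 = C₁ := fun h =>
      h1.min _ d1 ⟨g, Finset.mem_inter.2 ⟨h, hgE.1⟩⟩ e1
    have k2 : g ∈ D → D ∩ E2 = C₂ := fun h =>
      h2.min _ d2 ⟨g, Finset.mem_inter.2 ⟨h, hgE.2⟩⟩ e2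
    have hgD : g ∈ D := by
      obtain ⟨a, ha⟩ := hDn
      rcases hcov a (hDG ha) with h | h
      · have := h1.min _ d1 ⟨a, Finset.mem_inter.2 ⟨ha, h⟩⟩ e1
        rw [← this] at hg
        exact (Finset.mem_inter.1 hg.1).1
      · have := h2.min _ d2 ⟨a, Finset.mem_inter.2 ⟨ha, h⟩⟩ e2
        rw [← this] at hg2
        exact (Finset.mem_inter.1 hg2).1
    refine Finset.Subset.antisymm hD (Finset.union_subset ?_ ?_)
    · rw [← k1 hgD]; exact Finset.inter_subset_left
    · rw [← k2 hgD]; exact Finset.inter_subset_left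

/-- In a double cover the number of members with a given nonempty trace `T` on a set `δ` of two or
three edges, which all members meet evenly, depends only on `T` and `δ`. -/
lemma card_trace {ι : Type} [Fintype ι] {S : ι → Finset E} {δ : Finset E} (h2 : 2 ≤ δ.card)
    (h3 : δ.card ≤ 3) (hev : ∀ i, Even (S i ∩ δ).card)
    (hc : ∀ e ∈ δ, (Finset.univ.filter (fun i => e ∈ S i)).card = 2) {T : Finset E}
    (hT : T.Nonempty) :
    (Finset.univ.filter (fun i => S i ∩ δ = T)).card
      = if T ⊆ δ ∧ T.card = 2 then 4 - δ.card else 0 := by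
  have hle : ∀ i, (S i ∩ δ).card ≤ δ.card := fun i => Finset.card_le_card Finset.inter_subset_right
  split_ifs with hTT
  · obtain ⟨hTδ, hT2⟩ := hTT
    obtain ⟨a, b, hab, rfl⟩ := Finset.card_eq_two.1 hT2
    have ha : a ∈ δ := hTδ (by simp)
    have hb : b ∈ δ := hTδ (by simp)
    by_cases hδ : δ.card = 2
    · have hδT : ({a, b} : Finset E) = δ := Finset.eq_of_subset_of_card_le hTδ (by omega)
      rw [hδ]
      show _ = 2
      refine Eq.trans ?_ (hc a ha)
      congr 1
      ext i
      simp only [Finset.mem_filter, Finset.mem_univ, true_and]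
      constructor
      · intro h
        have : a ∈ S i ∩ δ := by rw [h]; simp
        exact (Finset.mem_inter.1 this).1
      · intro h
        rw [hδT]
        have hpos : 0 < (S i ∩ δ).card := Finset.card_pos.2 ⟨a, Finset.mem_inter.2 ⟨h, ha⟩⟩
        obtain ⟨k, hk⟩ := hev i
        exact Finset.eq_of_subset_of_card_le Finset.inter_subset_right (by omega)
    · have hδ3 : δ.card = 3 := by omega
      have : (δ \ {a, b}).card = 1 := by rw [Finset.card_sdiff_of_subset hTδ]; omega
      obtain ⟨c, hcc⟩ := Finset.card_eq_one.1 this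
      have hcm : c ∈ δ \ {a, b} := by rw [hcc]; simp
      simp only [Finset.mem_sdiff, Finset.mem_insert, Finset.mem_singleton, not_or] at hcm
      obtain ⟨hcδ, hca, hcb⟩ := hcm
      have hδe : δ = {a, b, c} := by
        symm
        apply Finset.eq_of_subset_of_card_le
        · intro z; simp only [Finset.mem_insert, Finset.mem_singleton]
          rintro (rfl | rfl | rfl) <;> assumption
        · rw [Finset.card_eq_three.2 ⟨a, b, c, hab, fun h => hca h.symm, fun h => hcb h.symm, rfl⟩]
          omega
      have key : ∀ i, 2 * (if S i ∩ δ = {a, b} then 1 else 0) + (if c ∈ S i then 1 else 0)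
          = (if a ∈ S i then 1 else 0) + (if b ∈ S i then 1 else 0) := by
        intro i
        have hm : S i ∩ δ = {a, b} ↔ (a ∈ S i ∧ b ∈ S i ∧ c ∉ S i) := by
          constructor
          · intro h
            have ma := Finset.ext_iff.1 h a
            have mb := Finset.ext_iff.1 h b
            have mc := Finset.ext_iff.1 h c
            simp [ha, hb, hcδ, hca, hcb] at ma mb mc
            exact ⟨ma, mb, mc⟩
          · rintro ⟨h1, h2, h3⟩
            ext z
            simp only [hδe, Finset.mem_inter, Finset.mem_insert, Finset.mem_singleton]
            constructor
            · rintro ⟨hz, rfl | rfl | rfl⟩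
              · simp
              · simp
              · exact absurd hz h3
            · rintro (rfl | rfl)
              · exact ⟨h1, by simp⟩
              · exact ⟨h2, by simp⟩
        have hac : a ≠ c := fun h => hca h.symm
        have hbc : b ≠ c := fun h => hcb h.symm
        have hcard : (S i ∩ δ).card
            = (if a ∈ S i then 1 else 0) + (if b ∈ S i then 1 else 0)
              + (if c ∈ S i then 1 else 0) := by
          rw [Finset.inter_comm, ← Finset.filter_mem_eq_inter, Finset.card_filter, hδe,
            Finset.sum_insert (by simp [hab, hac]),
            Finset.sum_insert (by simp [hbc]), Finset.sum_singleton,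
            add_assoc]
        obtain ⟨k, hk⟩ := hev i
        rw [hcard] at hk
        simp only [hm]
        by_cases m1 : a ∈ S i <;> by_cases m2 : b ∈ S i <;> by_cases m3 : c ∈ S i <;>
          simp [m1, m2, m3] at hk ⊢ <;> omega
      have hsum := Finset.sum_congr (rfl : (Finset.univ : Finset ι) = Finset.univ)
        (fun i _ => key i)
      rw [Finset.sum_add_distrib, Finset.sum_add_distrib, ← Finset.mul_sum, ← Finset.card_filter,
        ← Finset.card_filter, ← Finset.card_filter, ← Finset.card_filter, hc a ha, hc b hb,
        hc c hcδ] at hsum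
      omega
  · rw [Finset.card_eq_zero, Finset.filter_eq_empty_iff]
    rintro i - rfl
    apply hTT
    refine ⟨Finset.inter_subset_right, ?_⟩
    have := Finset.card_pos.2 hT
    have := hle i
    obtain ⟨k, hk⟩ := hev i
    omega

lemma card_trace_nonempty {ι : Type} [Fintype ι] {S : ι → Finset E} {δ : Finset E}
    (h3 : δ.card ≤ 3) (hev : ∀ i, Even (S i ∩ δ).card)
    (hc : ∀ e ∈ δ, (Finset.univ.filter (fun i => e ∈ S i)).card = 2) :
    (Finset.univ.filter (fun i => (S i ∩ δ).Nonempty)).card = δ.card := by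
  have h1 : ∑ i, (S i ∩ δ).card = δ.card * 2 := by
    have : ∀ i, (S i ∩ δ).card = ∑ e ∈ δ, if e ∈ S i then 1 else 0 := by
      intro i
      rw [Finset.inter_comm, ← Finset.filter_mem_eq_inter, Finset.card_filter]
    simp only [this]
    rw [Finset.sum_comm, ← smul_eq_mul, ← Finset.sum_const]
    refine Finset.sum_congr rfl fun e he => ?_
    rw [← Finset.card_filter, hc e he]
  have h2 : ∀ i, (S i ∩ δ).card = (if (S i ∩ δ).Nonempty then 1 else 0) * 2 := by
    intro i
    have hle : (S i ∩ δ).card ≤ δ.card := Finset.card_le_card Finset.inter_subset_right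
    obtain ⟨k, hk⟩ := hev i
    split_ifs with h
    · have := Finset.card_pos.2 h
      omega
    · rw [Finset.not_nonempty_iff_eq_empty.1 h]; simp
  simp only [h2] at h1
  rw [← Finset.sum_mul, ← Finset.card_filter] at h1
  omega

lemma exists_equiv_of_fibers {A B T : Type*} [Fintype A] [Fintype B] (f : A → T) (g : B → T)
    (h : ∀ t, Nat.card {a // f a = t} = Nat.card {b // g b = t}) :
    ∃ σ : A ≃ B, ∀ a, g (σ a) = f a := by
  let τ : ∀ t, {a // f a = t} ≃ {b // g b = t} := fun t => (Finite.card_eq.1 (h t)).some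
  refine ⟨(Equiv.sigmaFiberEquiv f).symm.trans
    ((Equiv.sigmaCongrRight τ).trans (Equiv.sigmaFiberEquiv g)), fun a => ?_⟩
  exact (τ (f a) ⟨a, rfl⟩).2

lemma card_filter_subtype {ι : Type} [Fintype ι] (p q : ι → Prop) [DecidablePred p]
    [DecidablePred q] [Fintype {i // p i}] :
    (Finset.univ.filter (fun i : {i // p i} => q i)).card
      = (Finset.univ.filter (fun i => p i ∧ q i)).card := by
  rw [← Fintype.card_subtype, ← Fintype.card_subtype]
  exact Fintype.card_congr (Equiv.subtypeSubtypeEquivSubtypeInter p q)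

lemma card_filter_split {ι : Type} [Fintype ι] (p q : ι → Prop) [DecidablePred p]
    [DecidablePred q] :
    (Finset.univ.filter (fun i => ¬ p i ∧ q i)).card
      + (Finset.univ.filter (fun i => p i ∧ q i)).card = (Finset.univ.filter q).card := by
  rw [← Finset.card_filter_add_card_filter_not (s := Finset.univ.filter q) p,
    Finset.filter_filter, Finset.filter_filter, add_comm]
  congr 2 <;> (ext i; simp [and_comm])

/-- Cycle double covers of the two contractions along a cut of two or three edges combine to one of
the whole graph. -/
theorem glue (hG : G.WF) {X : Finset α} {x y : α} (hx : x ∈ X)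
    (hy : y ∈ G.verts \ X) (h2 : 2 ≤ (G.cut X).card) (h3 : (G.cut X).card ≤ 3) {m₁ m₂ : ℕ}
    (hm₁ : (G.contract (G.verts \ X) y).HasCDC m₁) (hm₂ : (G.contract X x).HasCDC m₂) :
    ∃ m, G.HasCDC m ∧ m + (G.cut X).card = m₁ + m₂ := by
  obtain ⟨ι₁, _, S₁, hc₁, hS₁, hd₁⟩ := hm₁
  obtain ⟨ι₂, _, S₂, hc₂, hS₂, hd₂⟩ := hm₂
  set δ := G.cut X with hδ
  have hδ1 : ∀ e ∈ δ, e ∈ (G.contract (G.verts \ X) y).edges := by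
    intro e he
    rw [hδ, mem_cut] at he
    rw [mem_contract_edges]
    simp only [Finset.mem_sdiff]
    tauto
  have hδ2 : ∀ e ∈ δ, e ∈ (G.contract X x).edges := by
    intro e he
    rw [hδ, mem_cut] at he
    rw [mem_contract_edges]
    tauto
  have hev₁ : ∀ i, Even (S₁ i ∩ δ).card := by
    intro i
    have := even_cut (hS₁ i).sub (hS₁ i).ev {y}
    rwa [contract_cut_self hy, cut_compl hG] at this
  have hev₂ : ∀ i, Even (S₂ i ∩ δ).card := by
    intro i
    have := even_cut (hS₂ i).sub (hS₂ i).ev {x}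
    rwa [contract_cut_self hx] at this
  have ht₁ := fun T hT => card_trace h2 h3 hev₁ (fun e he => hd₁ e (hδ1 e he)) (T := T) hT
  have ht₂ := fun T hT => card_trace h2 h3 hev₂ (fun e he => hd₂ e (hδ2 e he)) (T := T) hT
  have hn₁ := card_trace_nonempty h3 hev₁ (fun e he => hd₁ e (hδ1 e he))
  have hn₂ := card_trace_nonempty h3 hev₂ (fun e he => hd₂ e (hδ2 e he))
  obtain ⟨p, hp⟩ : ∃ p : ι₁ → Prop, ∀ i, p i ↔ (S₁ i ∩ δ).Nonempty := ⟨_, fun _ => Iff.rfl⟩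
  obtain ⟨q, hq⟩ : ∃ q : ι₂ → Prop, ∀ i, q i ↔ (S₂ i ∩ δ).Nonempty := ⟨_, fun _ => Iff.rfl⟩
  obtain ⟨σ, hσ⟩ : ∃ σ : {i // p i} ≃ {j // q j}, ∀ a, S₂ (σ a) ∩ δ = S₁ a ∩ δ := by
    refine exists_equiv_of_fibers (fun i : {i // p i} => S₁ i ∩ δ)
      (fun j : {j // q j} => S₂ j ∩ δ) fun T => ?_
    rw [Nat.card_eq_fintype_card, Nat.card_eq_fintype_card, Fintype.card_subtype,
      Fintype.card_subtype, card_filter_subtype p (fun i => S₁ i ∩ δ = T),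
      card_filter_subtype q (fun i => S₂ i ∩ δ = T)]
    by_cases hT : T.Nonempty
    · have e1 : (Finset.univ.filter (fun i => p i ∧ S₁ i ∩ δ = T))
          = Finset.univ.filter (fun i => S₁ i ∩ δ = T) := by
        ext i; simp only [hp, Finset.mem_filter, Finset.mem_univ, true_and, and_iff_right_iff_imp]
        rintro h; rwa [h]
      have e2 : (Finset.univ.filter (fun i => q i ∧ S₂ i ∩ δ = T))
          = Finset.univ.filter (fun i => S₂ i ∩ δ = T) := by
        ext i; simp only [hq, Finset.mem_filter, Finset.mem_univ, true_and, and_iff_right_iff_imp]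
        rintro h; rwa [h]
      rw [e1, e2, ht₁ T hT, ht₂ T hT]
    · have e1 : (Finset.univ.filter (fun i => p i ∧ S₁ i ∩ δ = T)) = ∅ := by
        refine Finset.filter_false_of_mem ?_
        rintro i - ⟨h, h'⟩; exact hT (h' ▸ (hp i).1 h)
      have e2 : (Finset.univ.filter (fun i => q i ∧ S₂ i ∩ δ = T)) = ∅ := by
        refine Finset.filter_false_of_mem ?_
        rintro i - ⟨h, h'⟩; exact hT (h' ▸ (hq i).1 h)
      rw [e1, e2]; rfl
  refine ⟨_, ⟨({i // ¬ p i} ⊕ {j // ¬ q j}) ⊕ {i // p i}, inferInstance,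
    Sum.elim (Sum.elim (fun i => S₁ i) (fun j => S₂ j)) (fun i => S₁ i ∪ S₂ (σ i)),
    rfl, ?_, ?_⟩, ?_⟩
  · rintro ((i | j) | i)
    · exact circuit_of_contract hy (hS₁ i) (by rw [cut_compl hG]; exact fun h => i.2 ((hp i).2 h))
    · exact circuit_of_contract hx (hS₂ j) (fun h => j.2 ((hq j).2 h))
    · exact glue_circuit hG hx hy (hS₁ i) (hS₂ (σ i)) (hσ i).symm ((hp i).1 i.2)
  · intro e he
    have hsum : (Finset.univ.filter (fun k : ({i // ¬ p i} ⊕ {j // ¬ q j}) ⊕ {i // p i} =>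
        e ∈ Sum.elim (Sum.elim (fun i : {i // ¬ p i} => S₁ i) (fun j : {j // ¬ q j} => S₂ j))
          (fun i : {i // p i} => S₁ i ∪ S₂ (σ i)) k)).card
        = (Finset.univ.filter (fun i => ¬ p i ∧ e ∈ S₁ i)).card
          + (Finset.univ.filter (fun j => ¬ q j ∧ e ∈ S₂ j)).card
          + (Finset.univ.filter (fun i : {i // p i} => e ∈ S₁ i ∪ S₂ (σ i))).card := by
      rw [← card_filter_subtype (fun i => ¬ p i) (fun i => e ∈ S₁ i),
        ← card_filter_subtype (fun i => ¬ q i) (fun i => e ∈ S₂ i)]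
      simp only [Finset.card_filter, Fintype.sum_sum_type, Sum.elim_inl, Sum.elim_inr]
      congr!
    rw [hsum]
    by_cases heδ : e ∈ δ
    · rw [Finset.filter_false_of_mem (s := Finset.univ) (p := fun i => ¬ p i ∧ e ∈ S₁ i),
        Finset.filter_false_of_mem (s := Finset.univ) (p := fun i => ¬ q i ∧ e ∈ S₂ i)]
      · have : (Finset.univ.filter (fun i : {i // p i} => e ∈ S₁ i ∪ S₂ (σ i)))
            = Finset.univ.filter (fun i : {i // p i} => e ∈ S₁ i) := by
          ext i
          have := Finset.ext_iff.1 (hσ i) e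
          simp only [Finset.mem_inter, heδ, and_true] at this
          simp [this]
        rw [this, card_filter_subtype p (fun i => e ∈ S₁ i), ← hd₁ e (hδ1 e heδ)]
        simp only [Finset.card_empty, zero_add]
        congr 1
        ext i
        simp only [hp, Finset.mem_filter, Finset.mem_univ, true_and, and_iff_right_iff_imp]
        exact fun h => ⟨e, Finset.mem_inter.2 ⟨h, heδ⟩⟩
      · rintro i - ⟨h, h'⟩; exact h ((hq i).2 ⟨e, Finset.mem_inter.2 ⟨h', heδ⟩⟩)
      · rintro i - ⟨h, h'⟩; exact h ((hp i).2 ⟨e, Finset.mem_inter.2 ⟨h', heδ⟩⟩)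
    · by_cases he1 : e ∈ (G.contract (G.verts \ X) y).edges
      · have he2 : ∀ j, e ∉ S₂ j := by
          intro j hj
          have h5 := mem_contract_edges.1 ((hS₂ j).sub hj)
          have h6 := mem_contract_edges.1 he1
          have h7 := hG e he
          rw [hδ, mem_cut] at heδ
          simp only [Finset.mem_sdiff] at h6
          tauto
        simp only [he2, and_false, Finset.filter_false, Finset.card_empty, add_zero,
          Finset.mem_union, or_false]
        rw [card_filter_subtype p (fun i => e ∈ S₁ i), card_filter_split, hd₁ e he1]
      · have he2 : e ∈ (G.contract X x).edges := by
          have h7 := hG e he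
          simp only [mem_contract_edges, Finset.mem_sdiff] at he1 ⊢
          tauto
        have he3 : ∀ i, e ∉ S₁ i := fun i hi => he1 ((hS₁ i).sub hi)
        simp only [he3, and_false, Finset.filter_false, Finset.card_empty, zero_add,
          Finset.mem_union, false_or]
        have : (Finset.univ.filter (fun i : {i // p i} => e ∈ S₂ (σ i))).card
            = (Finset.univ.filter (fun j : {j // q j} => e ∈ S₂ j)).card := by
          rw [Finset.card_filter, Finset.card_filter]
          exact Equiv.sum_comp σ (fun j : {j // q j} => if e ∈ S₂ j then 1 else 0)
        rw [this, card_filter_subtype q (fun i => e ∈ S₂ i), card_filter_split, hd₂ e he2]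
  · have c1 := Fintype.card_subtype_compl p
    have c2 := Fintype.card_subtype_compl q
    have c3 : Fintype.card {i // p i} = δ.card := by
      rw [Fintype.card_subtype, ← hn₁]; simp only [hp]
    have c4 : Fintype.card {i // q i} = δ.card := by
      rw [Fintype.card_subtype, ← hn₂]; simp only [hq]
    have c5 := Fintype.card_subtype_le p
    have c6 := Fintype.card_subtype_le q
    rw [Fintype.card_sum, Fintype.card_sum]
    omega

lemma card_contract_edges (hG : G.WF) {X : Finset α} {x y : α} :
    (G.contract X x).edges.card + (G.contract (G.verts \ X) y).edges.card
      = G.edges.card + (G.cut X).card := by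
  rw [← Finset.card_union_add_card_inter]
  congr 2
  · ext e
    simp only [Finset.mem_union, mem_contract_edges, Finset.mem_sdiff]
    have := hG e
    tauto
  · ext e
    simp only [Finset.mem_inter, mem_contract_edges, Finset.mem_sdiff, mem_cut]
    have := hG e
    tauto

/-- The double cover of a graph obtained by suppressing a vertex `v` of degree 2 (with edges `e`,
`f`, where `e = vw`) lifts to the graph itself. -/
theorem suppress (hG : G.WF) {v w : α} {e f : E} (hef : e ≠ f) (hv : G.cut {v} = {e, f})
    (hw : G.inc e w) (hvw : v ≠ w) (hfw : ¬ G.inc f w) {m : ℕ}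
    (hm : (G.contract {v, w} w).HasCDC m) : G.HasCDC m := by
  obtain ⟨ι, _, S, hc, hS, hd⟩ := hm
  have hwX : w ∈ ({v, w} : Finset α) := by simp
  have heE : e ∈ G.edges ∧ G.inc e v := (mem_star hG).1 (by rw [hv]; simp)
  have hfE : f ∈ G.edges ∧ G.inc f v := (mem_star hG).1 (by rw [hv]; simp)
  have hse : G.s e ∈ ({v, w} : Finset α) ∧ G.t e ∈ ({v, w} : Finset α) := by
    have h1 := heE.2
    simp only [inc] at h1 hw
    simp only [Finset.mem_insert, Finset.mem_singleton]
    rcases h1 with h1 | h1 <;> rcases hw with h2 | h2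
    · exact absurd (h1.symm.trans h2) hvw
    · exact ⟨Or.inl h1, Or.inr h2⟩
    · exact ⟨Or.inr h2, Or.inl h1⟩
    · exact absurd (h1.symm.trans h2) hvw
  have hE : ∀ g, g ∈ (G.contract {v, w} w).edges ↔ g ∈ G.edges ∧ g ≠ e := by
    intro g
    rw [mem_contract_edges]
    refine and_congr_right fun hg => ?_
    constructor
    · rintro h rfl; exact h hse
    · intro hge hin
      have hne := (hG g hg).2.2
      simp only [Finset.mem_insert, Finset.mem_singleton] at hin
      have hgv : G.inc g v ∧ G.inc g w := by
        simp only [inc]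
        rcases hin with ⟨h1 | h1, h2 | h2⟩
        · exact absurd (h1.trans h2.symm) hne
        · exact ⟨Or.inl h1, Or.inr h2⟩
        · exact ⟨Or.inr h2, Or.inl h1⟩
        · exact absurd (h1.trans h2.symm) hne
      have : g ∈ G.cut {v} := (mem_star hG).2 ⟨hg, hgv.1⟩
      rw [hv] at this
      simp only [Finset.mem_insert, Finset.mem_singleton] at this
      rcases this with rfl | rfl
      · exact hge rfl
      · exact hfw hgv.2
  let φ : Finset E → Finset E := fun C => if f ∈ C then insert e C else C
  have hφ : ∀ C g, g ∈ φ C ↔ g ∈ C ∨ (g = e ∧ f ∈ C) := by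
    intro C g
    simp only [φ]
    split_ifs with h <;> simp [h]; tauto
  have hCe : ∀ i, e ∉ S i := fun i h => ((hE e).1 ((hS i).sub h)).2 rfl
  -- the edges at `v` meet an even set in nothing or in both `e` and `f`
  have hpar : ∀ D ⊆ G.edges, G.bd D v = 0 ↔ (e ∈ D ↔ f ∈ D) := by
    intro D hD
    rw [bd_eq hD, hv]
    by_cases h1 : e ∈ D <;> by_cases h2 : f ∈ D
    · rw [Finset.inter_insert_of_mem h1, Finset.inter_singleton_of_mem h2,
        Finset.card_pair hef]
      simp [h1, h2]; decide
    · rw [Finset.inter_insert_of_mem h1, Finset.inter_singleton_of_notMem h2]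
      simp [h1, h2]
    · rw [Finset.inter_insert_of_notMem h1, Finset.inter_singleton_of_mem h2]
      simp [h1, h2]
    · rw [Finset.inter_insert_of_notMem h1, Finset.inter_singleton_of_notMem h2]
      simp [h1, h2]
  refine ⟨ι, inferInstance, fun i => φ (S i), hc, ?_, ?_⟩
  · intro i
    have hsub : φ (S i) ⊆ G.edges := by
      intro g hg
      rcases (hφ _ _).1 hg with h | h
      · exact ((hE g).1 ((hS i).sub h)).1
      · rw [h.1]; exact heE.1
    have hbv : G.bd (φ (S i)) v = 0 := by
      rw [hpar _ hsub, hφ, hφ]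
      simp [hCe i, hef.symm]
    refine ⟨hsub, ?_, ?_, ?_⟩
    · obtain ⟨g, hg⟩ := (hS i).ne
      exact ⟨g, (hφ _ _).2 (Or.inl hg)⟩
    · intro u
      by_cases huX : u ∈ ({v, w} : Finset α)
      · simp only [Finset.mem_insert, Finset.mem_singleton] at huX
        rcases huX with rfl | rfl
        · exact hbv
        · have h1 : ∑ z ∈ {v, u}, G.bd (φ (S i)) z = ∑ z ∈ {v, u}, G.bd (S i) z := by
            rw [sum_bd, sum_bd]
            congr 2
            ext g
            simp only [Finset.mem_filter, hφ]
            constructor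
            · rintro ⟨h | ⟨rfl, h⟩, h'⟩
              · exact ⟨h, h'⟩
              · exact absurd (by simp only [hse.1, hse.2]) h'
            · rintro ⟨h, h'⟩; exact ⟨Or.inl h, h'⟩
          rw [← bd_contract_self hwX (S i), (hS i).ev, Finset.sum_pair hvw, hbv, zero_add] at h1
          exact h1
      · rw [← (hS i).ev u, bd_contract_out hwX huX]
        apply bd_congr
        intro g hg
        rw [hφ]
        constructor
        · rintro (h | ⟨rfl, h⟩)
          · exact h
          · exfalso
            rcases hg with rfl | rfl
            · exact huX hse.1
            · exact huX hse.2
        · exact Or.inl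
    · intro D hD hDn hDe
      have hDG := hD.trans hsub
      have hDp := (hpar D hDG).1 (hDe v)
      have h1 : D ∩ (G.contract {v, w} w).edges = S i := by
        apply (hS i).min
        · intro g hg
          rw [Finset.mem_inter, hE] at hg
          exact ((hφ _ _).1 (hD hg.1)).resolve_right fun h => hg.2.2 h.1
        · obtain ⟨g, hg⟩ := hDn
          by_cases hge : g = e
          · subst hge
            exact ⟨f, Finset.mem_inter.2 ⟨hDp.1 hg, (hE f).2 ⟨hfE.1, hef.symm⟩⟩⟩
          · exact ⟨g, Finset.mem_inter.2 ⟨hg, (hE g).2 ⟨hDG hg, hge⟩⟩⟩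
        · exact even_contract hwX hDG hDe
      refine Finset.Subset.antisymm hD fun g hg => ?_
      rcases (hφ _ _).1 hg with h | ⟨rfl, h⟩
      · rw [← h1] at h; exact (Finset.mem_inter.1 h).1
      · rw [← h1] at h; exact hDp.2 (Finset.mem_inter.1 h).1
  · intro g hg
    by_cases hge : g = e
    · subst hge
      rw [← hd f ((hE f).2 ⟨hfE.1, hef.symm⟩)]
      congr 1
      ext i
      simp [hφ, hCe i]
    · rw [← hd g ((hE g).2 ⟨hg, hge⟩)]
      congr 1
      ext i
      simp [hφ, hge]


/-! ### Cycle double covers of maximal size: the cuts they detect -/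

lemma card_pair_of_filter {ι : Type} [Fintype ι] {p : ι → Prop} [DecidablePred p]
    (h : (Finset.univ.filter p).card = 2) {i j : ι} (hij : i ≠ j) (hi : p i) (hj : p j) :
    Finset.univ.filter p = {i, j} := by
  symm
  apply Finset.eq_of_subset_of_card_le
  · intro k
    simp only [Finset.mem_insert, Finset.mem_singleton, Finset.mem_filter, Finset.mem_univ,
      true_and]
    rintro (rfl | rfl) <;> assumption
  · rw [h, Finset.card_pair hij]

lemma edge_ends (hG : G.WF) {e : E} (he : e ∈ G.edges) {v : α} (hv : G.inc e v) : v ∈ G.verts := by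
  have := hG e he
  rcases hv with rfl | rfl <;> tauto

/-- A function on the members of a double cover that takes equal values on members with a common
edge is constant. -/
lemma cover_const (hG : G.Good) {ι : Type} [Fintype ι] {S : ι → Finset E}
    (hS : ∀ i, G.Circuit (S i))
    (hd : ∀ e ∈ G.edges, (Finset.univ.filter (fun i => e ∈ S i)).card = 2) {K : Type*} (g : ι → K)
    (hg : ∀ i j e, e ∈ S i → e ∈ S j → g i = g j) (i j : ι) : g i = g j := by
  by_contra hne
  have hv : ∀ i j v e f, e ∈ S i → G.inc e v → f ∈ S j → G.inc f v → g i = g j := by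
    intro i j v e f he hev hf hfv
    obtain ⟨h, h1, h2, -⟩ := (hS i).common hG.wf (hS j)
      (hG.deg v (edge_ends hG.wf ((hS i).sub he) hev)) he hev hf hfv
    exact hg i j h h1 h2
  let X := G.verts.filter (fun v => ∃ k, g k = g i ∧ ∃ e ∈ S k, G.inc e v)
  obtain ⟨e, he⟩ := (hS i).ne
  obtain ⟨f, hf⟩ := (hS j).ne
  have h1 := hG.two X (Finset.filter_subset _ _)
    ⟨G.s e, Finset.mem_filter.2 ⟨(hG.wf e ((hS i).sub he)).1, i, rfl, e, he, Or.inl rfl⟩⟩ (by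
      intro hX
      have h2 : G.s f ∈ X := by rw [hX]; exact (hG.wf f ((hS j).sub hf)).1
      obtain ⟨-, k, hk, e', he', hev'⟩ := Finset.mem_filter.1 h2
      exact hne (hk.symm.trans (hv k j _ e' f he' hev' hf (Or.inl rfl))))
  obtain ⟨c, hc⟩ := Finset.card_pos.1 (by omega : 0 < (G.cut X).card)
  rw [mem_cut] at hc
  obtain ⟨k, hk⟩ := Finset.card_pos.1 (by rw [hd c hc.1]; norm_num :
    0 < (Finset.univ.filter (fun i => c ∈ S i)).card)
  simp only [Finset.mem_filter, Finset.mem_univ, true_and] at hk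
  have hw := hG.wf c hc.1
  have key : ∀ a b, G.inc c a → G.inc c b → a ∈ X → b ∈ X := by
    intro a b ha hb haX
    obtain ⟨-, l, hl, e', he', hev'⟩ := Finset.mem_filter.1 haX
    exact Finset.mem_filter.2 ⟨edge_ends hG.wf hc.1 hb, k,
      (hv k l a c e' hk ha he' hev').trans hl, c, hk, hb⟩
  exact hc.2 ⟨key _ _ (Or.inl rfl) (Or.inr rfl), key _ _ (Or.inr rfl) (Or.inl rfl)⟩

/-- If a double cover has the size `|E| - |V| + 2` of the set of faces of a plane graph, then an
edge set meeting all its members evenly is a cut. The reason is that the members span a space of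
dimension at least `|E| - |V| + 1`, which is the dimension of the cycle space. -/
theorem dual_cut (hG : G.Good) {ι : Type} [Fintype ι] {S : ι → Finset E}
    (hS : ∀ i, G.Circuit (S i))
    (hd : ∀ e ∈ G.edges, (Finset.univ.filter (fun i => e ∈ S i)).card = 2)
    (hcard : Fintype.card ι + G.verts.card = G.edges.card + 2) {T : Finset E} (hT : T ⊆ G.edges)
    (hev : ∀ i, Even (T ∩ S i).card) : ∃ X ⊆ G.verts, G.cut X = T := by
  let A : Matrix ι G.edges (ZMod 2) := fun i e => if (e : E) ∈ S i then 1 else 0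
  let B : Matrix G.edges G.verts (ZMod 2) := fun e v =>
    (if G.s e = v then 1 else 0) + (if G.t e = v then 1 else 0)
  have hAmul : ∀ (i : ι) (x : G.edges → ZMod 2), A.mulVec x i
      = ∑ e ∈ G.edges.attach, if (e : E) ∈ S i then x e else 0 := by
    intro i x
    simp only [Matrix.mulVec, dotProduct, A, ite_mul, one_mul, zero_mul]
    rfl
  have hBmul : ∀ (f : G.verts → ZMod 2) (e : G.edges), B.mulVec f e
      = f ⟨G.s e, (hG.wf e e.2).1⟩ + f ⟨G.t e, (hG.wf e e.2).2.1⟩ := by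
    intro f e
    simp only [Matrix.mulVec, dotProduct, B, add_mul, ite_mul, one_mul, zero_mul,
      Finset.sum_add_distrib]
    congr 1
    · rw [Finset.sum_eq_single ⟨G.s e, (hG.wf e e.2).1⟩]
      · simp
      · intro b _ hb
        rw [if_neg]
        intro h; exact hb (Subtype.ext h.symm)
      · simp
    · rw [Finset.sum_eq_single ⟨G.t e, (hG.wf e e.2).2.1⟩]
      · simp
      · intro b _ hb
        rw [if_neg]
        intro h; exact hb (Subtype.ext h.symm)
      · simp
  have hAB : A * B = 0 := by
    ext i v
    have := (hS i).ev v
    rw [Matrix.mul_apply]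
    simp only [A, B, ite_mul, one_mul, zero_mul, Matrix.zero_apply]
    refine Eq.trans ?_ this
    rw [bd, ← Finset.sum_filter]
    refine Finset.sum_bij (fun e _ => (e : E)) ?_ ?_ ?_ ?_
    · intro e he; exact (Finset.mem_filter.1 he).2
    · intro a _ b _ h; exact Subtype.ext h
    · intro e he; exact ⟨⟨e, (hS i).sub he⟩, by simpa using he, rfl⟩
    · intro e _; rfl
  have hle : LinearMap.range B.mulVecLin ≤ LinearMap.ker A.mulVecLin := by
    rintro _ ⟨f, rfl⟩
    rw [LinearMap.mem_ker, Matrix.mulVecLin_apply, Matrix.mulVecLin_apply, Matrix.mulVec_mulVec,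
      hAB, Matrix.zero_mulVec]
  have kB : Module.finrank (ZMod 2) (LinearMap.ker B.mulVecLin) ≤ 1 := by
    refine finrank_le_one ⟨fun _ => 1, ?_⟩ ?_
    · rw [LinearMap.mem_ker]
      ext e
      rw [Matrix.mulVecLin_apply, hBmul]
      exact CharTwo.add_self_eq_zero _
    · rintro ⟨f, hf⟩
      have hf' : ∀ e : G.edges, f ⟨G.s e, (hG.wf e e.2).1⟩ = f ⟨G.t e, (hG.wf e e.2).2.1⟩ := by
        intro e
        have h1 := congrFun (LinearMap.mem_ker.1 hf) e
        rw [Matrix.mulVecLin_apply, hBmul] at h1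
        exact CharTwo.add_eq_zero.1 h1
      obtain ⟨v₀, hv₀, -⟩ := hG.branch
      refine ⟨f ⟨v₀, hv₀⟩, Subtype.ext (funext fun w => ?_)⟩
      simp only [SetLike.mk_smul_mk, Pi.smul_apply, smul_eq_mul, mul_one]
      by_contra hne
      let X := G.verts.filter (fun v => ∃ h : v ∈ G.verts, f ⟨v, h⟩ = f ⟨v₀, hv₀⟩)
      have h1 := hG.two X (Finset.filter_subset _ _)
        ⟨v₀, Finset.mem_filter.2 ⟨hv₀, hv₀, rfl⟩⟩ (by
          intro hX
          have h2 : (w : α) ∈ X := by rw [hX]; exact w.2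
          obtain ⟨-, h, h3⟩ := Finset.mem_filter.1 h2
          exact hne h3.symm)
      obtain ⟨c, hc⟩ := Finset.card_pos.1 (by omega : 0 < (G.cut X).card)
      rw [mem_cut] at hc
      have h4 := hf' ⟨c, hc.1⟩
      have hw := hG.wf c hc.1
      apply hc.2
      simp only [X, Finset.mem_filter, hw.1, hw.2.1, true_and, exists_true_left]
      simp only at h4
      rw [h4]
  have kA : Module.finrank (ZMod 2) (LinearMap.ker A.transpose.mulVecLin) ≤ 1 := by
    have hker : ∀ g : ι → ZMod 2, g ∈ LinearMap.ker A.transpose.mulVecLin ↔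
        ∀ e ∈ G.edges, ∑ i ∈ Finset.univ.filter (fun i => e ∈ S i), g i = 0 := by
      intro g
      rw [LinearMap.mem_ker]
      have h1 : ∀ e : G.edges, A.transpose.mulVecLin g e
          = ∑ i ∈ Finset.univ.filter (fun i => (e : E) ∈ S i), g i := by
        intro e
        rw [Matrix.mulVecLin_apply, Finset.sum_filter]
        refine Finset.sum_congr rfl fun i _ => ?_
        change (if (e : E) ∈ S i then (1 : ZMod 2) else 0) * g i = _
        rw [ite_mul, one_mul, zero_mul]
      constructor
      · intro h e he
        rw [← h1 ⟨e, he⟩, h]; rfl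
      · intro h
        ext e
        rw [h1, h e e.2]; rfl
    refine finrank_le_one ⟨fun _ => 1, ?_⟩ ?_
    · rw [hker]
      intro e he
      rw [Finset.sum_const, hd e he]
      decide
    · rintro ⟨g, hg⟩
      rw [hker] at hg
      have hc := cover_const hG hS hd g (by
        intro i j e hi hj
        by_cases hij : i = j
        · rw [hij]
        have h1 := hg e ((hS i).sub hi)
        rw [card_pair_of_filter (hd e ((hS i).sub hi)) hij hi hj, Finset.sum_pair hij] at h1
        exact CharTwo.add_eq_zero.1 h1)
      by_cases hι : Nonempty ι
      · obtain ⟨i⟩ := hι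
        refine ⟨g i, Subtype.ext (funext fun j => ?_)⟩
        simp only [SetLike.mk_smul_mk, Pi.smul_apply, smul_eq_mul, mul_one]
        exact hc i j
      · refine ⟨0, Subtype.ext (funext fun j => (hι ⟨j⟩).elim)⟩
  have n1 := B.mulVecLin.finrank_range_add_finrank_ker
  have n2 := A.mulVecLin.finrank_range_add_finrank_ker
  have n3 := A.transpose.mulVecLin.finrank_range_add_finrank_ker
  have n4 : A.transpose.rank = A.rank := Matrix.rank_transpose A
  unfold Matrix.rank at n4
  rw [Module.finrank_fintype_fun_eq_card, Fintype.card_coe] at n1 n2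
  rw [Module.finrank_fintype_fun_eq_card] at n3
  have heq := Submodule.eq_of_le_of_finrank_le hle (by omega)
  let x : G.edges → ZMod 2 := fun e => if (e : E) ∈ T then 1 else 0
  have hx : x ∈ LinearMap.ker A.mulVecLin := by
    rw [LinearMap.mem_ker]
    ext i
    rw [Matrix.mulVecLin_apply, hAmul, Pi.zero_apply]
    have h1 : ((T ∩ S i).card : ZMod 2) = 0 := (ZMod.natCast_eq_zero_iff_even).2 (hev i)
    refine Eq.trans ?_ h1
    rw [← Finset.sum_filter, Finset.card_eq_sum_ones, Nat.cast_sum]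
    simp only [x]
    rw [← Finset.sum_filter, Finset.filter_filter]
    symm
    refine Finset.sum_bij' (fun e he => (⟨e, hT (Finset.mem_inter.1 he).1⟩ : G.edges))
      (fun e _ => (e : E)) ?_ ?_ ?_ ?_ ?_
    · intro e he
      have := Finset.mem_inter.1 he
      simp [this.1, this.2]
    · intro e he
      simp only [Finset.mem_filter] at he
      exact Finset.mem_inter.2 ⟨he.2.2, he.2.1⟩
    · intro e _; rfl
    · intro e _; rfl
    · intro e _; simp
  rw [← heq] at hx
  obtain ⟨f, hf⟩ := hx
  refine ⟨G.verts.filter (fun v => ∃ h : v ∈ G.verts, f ⟨v, h⟩ = 1), Finset.filter_subset _ _, ?_⟩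
  ext e
  by_cases he : e ∈ G.edges
  · have hw := hG.wf e he
    have h1 := congrFun hf ⟨e, he⟩
    rw [Matrix.mulVecLin_apply, hBmul] at h1
    simp only [x] at h1
    simp only [mem_cut, Finset.mem_filter, hw.1, hw.2.1, he, true_and, exists_true_left]
    generalize f ⟨G.s e, hw.1⟩ = a at *
    generalize f ⟨G.t e, hw.2.1⟩ = b at *
    by_cases heT : e ∈ T
    · simp only [heT, if_true, iff_true] at h1 ⊢
      revert a b; decide
    · simp only [heT, if_false, iff_false] at h1 ⊢
      revert a b; decide
  · exact ⟨fun h => absurd (cut_sub _ h) he, fun h => absurd (hT h) he⟩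

/-! ### Deleting and restoring an edge -/

/-- Every cut separating two sets of at least two vertices has at least four edges. For cubic graphs
this is a form of cyclic 4-edge-connectivity. -/
def Cyc4 (G : MG α E) : Prop :=
  ∀ X ⊆ G.verts, 2 ≤ X.card → 2 ≤ (G.verts \ X).card → 4 ≤ (G.cut X).card

lemma ends_cases {e : E} {a b : α} (ha : G.inc e a) (hb : G.inc e b) (hab : a ≠ b) :
    (G.s e = a ∧ G.t e = b) ∨ (G.s e = b ∧ G.t e = a) := by
  rcases ha with ha | ha <;> rcases hb with hb | hb
  · exact absurd (ha.symm.trans hb) hab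
  · exact Or.inl ⟨ha, hb⟩
  · exact Or.inr ⟨hb, ha⟩
  · exact absurd (ha.symm.trans hb) hab

lemma exists_other_end (hG : G.WF) {e : E} (he : e ∈ G.edges) {a : α} (ha : G.inc e a) :
    ∃ b, G.inc e b ∧ a ≠ b := by
  have := hG e he
  rcases ha with rfl | rfl
  · exact ⟨_, Or.inr rfl, this.2.2⟩
  · exact ⟨_, Or.inl rfl, fun h => this.2.2 h.symm⟩

lemma inc_cases {e : E} {a b c : α} (ha : G.inc e a) (hb : G.inc e b) (hab : a ≠ b)
    (hc : G.inc e c) : c = a ∨ c = b := by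
  rcases ends_cases ha hb hab with ⟨h1, h2⟩ | ⟨h1, h2⟩ <;> rcases hc with rfl | rfl <;> simp_all

lemma mem_cut_inc {e : E} {a b : α} (he : e ∈ G.edges) (ha : G.inc e a) (hb : G.inc e b)
    (hab : a ≠ b) {X : Finset α} : e ∈ G.cut X ↔ ¬ (a ∈ X ↔ b ∈ X) := by
  rw [mem_cut]
  rcases ends_cases ha hb hab with ⟨h1, h2⟩ | ⟨h1, h2⟩ <;> rw [h1, h2] <;> tauto

lemma joins_of_inc {e : E} {a b : α} (ha : G.inc e a) (hb : G.inc e b) (hab : a ≠ b)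
    {A B : Finset α} (hA : a ∈ A) (hB : b ∈ B) : G.joins e A B := by
  rcases ends_cases ha hb hab with ⟨h1, h2⟩ | ⟨h1, h2⟩
  · left; rw [h1, h2]; exact ⟨hA, hB⟩
  · right; rw [h1, h2]; exact ⟨hA, hB⟩

lemma exists_of_mem_cut {e : E} {X : Finset α} (h : e ∈ G.cut X) :
    ∃ a b, G.inc e a ∧ G.inc e b ∧ a ∈ X ∧ b ∉ X := by
  rw [mem_cut] at h
  by_cases h1 : G.s e ∈ X
  · exact ⟨_, _, Or.inl rfl, Or.inr rfl, h1, by tauto⟩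
  · exact ⟨_, _, Or.inr rfl, Or.inl rfl, by tauto, h1⟩

lemma cut_empty : G.cut ∅ = ∅ := by
  ext e; simp [mem_cut]

lemma cut_verts (hG : G.WF) : G.cut G.verts = ∅ := by
  rw [← cut_empty (G := G), ← cut_compl hG, Finset.sdiff_self]

lemma small_cut (hG : G.WF) (h4 : G.Cyc4) {X : Finset α} (hX : X ⊆ G.verts)
    (hne : (G.cut X).Nonempty) (h3 : (G.cut X).card ≤ 3) : ∃ v ∈ G.verts, G.cut X = G.cut {v} := by
  have h1 : X.card ≠ 0 := by
    intro h
    rw [Finset.card_eq_zero.1 h, cut_empty] at hne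
    exact Finset.not_nonempty_empty hne
  have h2 : (G.verts \ X).card ≠ 0 := by
    intro h
    rw [← cut_compl hG, Finset.card_eq_zero.1 h, cut_empty] at hne
    exact Finset.not_nonempty_empty hne
  have h5 := h4 X hX
  rcases (by omega : X.card = 1 ∨ (G.verts \ X).card = 1) with h | h
  · obtain ⟨v, rfl⟩ := Finset.card_eq_one.1 h
    exact ⟨v, hX (by simp), rfl⟩
  · obtain ⟨v, hv⟩ := Finset.card_eq_one.1 h
    refine ⟨v, ?_, ?_⟩
    · have : v ∈ G.verts \ X := by rw [hv]; simp
      exact (Finset.mem_sdiff.1 this).1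
    · rw [← hv, cut_compl hG]

lemma del_cut (e : E) (X : Finset α) : (G.del e).cut X = (G.cut X).erase e := by
  ext g
  simp only [mem_cut, del, Finset.mem_erase]
  tauto

lemma Circuit.of_del {e : E} {C : Finset E} (h : (G.del e).Circuit C) : G.Circuit C :=
  ⟨h.sub.trans (Finset.erase_subset _ _), h.ne, h.ev, h.min⟩

lemma Good.del (hG : G.Good) (h3 : ∀ v ∈ G.verts, (G.cut {v}).card = 3) (h4 : G.Cyc4)
    (hV : 3 ≤ G.verts.card) (e : E) : (G.del e).Good where
  wf := fun g hg => hG.wf g (Finset.mem_of_mem_erase hg)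
  two := by
    intro X hX hXn hXne
    have hX' : X ⊆ G.verts := hX
    have h1 := hG.two X hX hXn hXne
    have h2 := Finset.pred_card_le_card_erase (s := G.cut X) (a := e)
    rw [del_cut]
    by_cases h5 : (G.cut X).card ≤ 3
    · obtain ⟨v, hv, h6⟩ := small_cut hG.wf h4 hX' (Finset.card_pos.1 (by omega)) h5
      have := h3 v hv
      rw [← h6] at this
      omega
    · omega
  deg := by
    intro v hv
    rw [del_cut]
    exact (Finset.card_erase_le).trans (hG.deg v hv)
  branch := by
    obtain ⟨w, hw, hwn⟩ := Finset.exists_mem_notMem_of_card_lt_card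
      (lt_of_le_of_lt Finset.card_le_two hV : ({G.s e, G.t e} : Finset α).card < G.verts.card)
    refine ⟨w, hw, ?_⟩
    rw [del_cut, Finset.erase_eq_of_notMem]
    · exact h3 w hw
    · intro h
      rw [mem_star hG.wf] at h
      simp only [Finset.mem_insert, Finset.mem_singleton, not_or] at hwn
      rcases h.2 with h | h
      · exact hwn.1 h.symm
      · exact hwn.2 h.symm
  k33 := by
    rintro ⟨f, h1, h2, h3⟩
    refine hG.k33 ⟨f, fun w => ⟨(h1 w).1, (h1 w).2.1, fun Z hZ hn hne => ?_⟩, h2, fun i j => ?_⟩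
    · obtain ⟨g, hg, hj⟩ := (h1 w).2.2 Z hZ hn hne
      exact ⟨g, Finset.mem_of_mem_erase hg, hj⟩
    · obtain ⟨g, hg, hj⟩ := h3 i j
      exact ⟨g, Finset.mem_of_mem_erase hg, hj⟩

lemma bd_singleton (e : E) (z : α) :
    G.bd {e} z = (if G.s e = z then 1 else 0) + (if G.t e = z then 1 else 0) := by
  simp [bd]

lemma bd_singleton_s {e : E} (he : G.s e ≠ G.t e) : G.bd {e} (G.s e) = 1 := by
  rw [bd_singleton]; simp [he.symm]

lemma Circuit.insert_arc {C A : Finset E} (hC : G.Circuit C) {e : E} (heC : e ∉ C)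
    (he : e ∈ G.edges) (hst : G.s e ≠ G.t e) (hA : A ⊆ C) (hbd : ∀ z, G.bd A z = G.bd {e} z) :
    G.Circuit (insert e A) := by
  have heA : e ∉ A := fun h => heC (hA h)
  have hne : A ≠ C := by
    rintro rfl
    have := hbd (G.s e)
    rw [hC.ev, bd_singleton_s hst] at this
    exact zero_ne_one this
  have hins : ∀ D : Finset E, e ∉ D → ∀ z, G.bd (insert e D) z = G.bd {e} z + G.bd D z := by
    intro D hD z
    rw [Finset.insert_eq, bd_union (by simpa using hD)]
  refine ⟨Finset.insert_subset he (hA.trans hC.sub), Finset.insert_nonempty _ _, ?_, ?_⟩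
  · intro z
    rw [hins A heA, hbd]
    exact CharTwo.add_self_eq_zero _
  · intro D hD hDn hDe
    by_cases heD : e ∈ D
    · have hsub : D.erase e ⊆ A := by
        intro g hg
        rw [Finset.mem_erase] at hg
        exact (Finset.mem_insert.1 (hD hg.2)).resolve_left hg.1
      have hb : ∀ z, G.bd (D.erase e) z = G.bd {e} z := by
        intro z
        have := hDe z
        rw [← Finset.insert_erase heD, hins _ (by simp)] at this
        exact (CharTwo.add_eq_zero.1 this).symm
      have hA' : A \ D.erase e = ∅ := by
        by_contra h
        have h2 := hC.min (A \ D.erase e) (Finset.sdiff_subset.trans hA)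
          (Finset.nonempty_iff_ne_empty.2 h) (fun z => by
            rw [bd_sdiff hsub, hbd, hb]; exact CharTwo.add_self_eq_zero _)
        exact hne (Finset.Subset.antisymm hA (h2 ▸ Finset.sdiff_subset))
      rw [← Finset.insert_erase heD]
      congr 1
      exact Finset.Subset.antisymm hsub (Finset.sdiff_eq_empty_iff_subset.1 hA')
    · exfalso
      have hsub : D ⊆ A := by
        intro g hg
        exact (Finset.mem_insert.1 (hD hg)).resolve_left (by rintro rfl; exact heD hg)
      have := hC.min D (hsub.trans hA) hDn hDe
      exact hne (Finset.Subset.antisymm hA (this ▸ hsub))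

lemma Circuit.exists_arc (hG : G.WF) {C : Finset E} (hC : G.Circuit C) {e f g : E}
    (he : e ∈ G.edges) (hf : f ∈ C) (hfs : G.inc f (G.s e)) (hg : g ∈ C) (hgt : G.inc g (G.t e)) :
    ∃ A ⊆ C, ∀ z, G.bd A z = G.bd {e} z := by
  let P : α → Prop := fun w => ∃ A ⊆ C, ∀ z, G.bd A z
    = (if G.s e = z then 1 else 0) + (if w = z then 1 else 0)
  let X := G.verts.filter P
  have hsX : G.s e ∈ X := Finset.mem_filter.2 ⟨(hG e he).1, ∅, Finset.empty_subset _, fun z => by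
    rw [bd_empty]; exact (CharTwo.add_self_eq_zero _).symm⟩
  by_cases hX : G.t e ∈ X
  · obtain ⟨A, hA, h⟩ := (Finset.mem_filter.1 hX).2
    exact ⟨A, hA, fun z => by rw [h z, bd_singleton]⟩
  · exfalso
    obtain ⟨k, hkC, hk⟩ := hC.cross hsX hX hf hfs hg hgt
    obtain ⟨a, b, ha, hb, haX, hbX⟩ := exists_of_mem_cut hk
    have hab : a ≠ b := by rintro rfl; exact hbX haX
    apply hbX
    refine Finset.mem_filter.2 ⟨edge_ends hG (hC.sub hkC) hb, ?_⟩
    obtain ⟨A, hA, h⟩ := (Finset.mem_filter.1 haX).2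
    refine ⟨symmDiff A {k}, ?_, fun z => ?_⟩
    · intro x hx
      rcases Finset.mem_symmDiff.1 hx with h | h
      · exact hA h.1
      · rw [Finset.mem_singleton.1 h.1]; exact hkC
    · rw [bd_symmDiff, h, bd_singleton]
      have h2 := CharTwo.add_self_eq_zero (if a = z then (1 : ZMod 2) else 0)
      rcases ends_cases ha hb hab with ⟨h1, h3⟩ | ⟨h1, h3⟩ <;> rw [h1, h3] <;>
        linear_combination h2

/-- A double cover of `G - e` with a member through both ends of `e` gives one of `G` with one
more member: that member is split into two circuits through `e`. -/
lemma hasCDC_of_del (hG : G.WF) {e : E} (he : e ∈ G.edges) {ι : Type} [Fintype ι]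
    {S : ι → Finset E} (hS : ∀ i, (G.del e).Circuit (S i))
    (hd : ∀ g ∈ (G.del e).edges, (Finset.univ.filter (fun i => g ∈ S i)).card = 2) {i : ι}
    {f g : E} (hf : f ∈ S i) (hfs : G.inc f (G.s e)) (hg : g ∈ S i) (hgt : G.inc g (G.t e)) :
    G.HasCDC (Fintype.card ι + 1) := by
  have hst := (hG e he).2.2
  have heS : ∀ j, e ∉ S j := fun j h => by simpa [del] using (hS j).sub h
  obtain ⟨A, hA, hbd⟩ := (hS i).of_del.exists_arc hG he hf hfs hg hgt
  have hbd' : ∀ z, G.bd (S i \ A) z = G.bd {e} z := by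
    intro z
    rw [bd_sdiff hA, (hS i).of_del.ev, zero_add, hbd]
  obtain ⟨S', hi, hj⟩ : ∃ S' : ι → Finset E, S' i = insert e A ∧ ∀ j, j ≠ i → S' j = S j :=
    ⟨fun j => if j = i then insert e A else S j, by simp, fun j h => by simp [h]⟩
  refine ⟨Option ι, inferInstance, fun o => o.elim (insert e (S i \ A)) S', by simp, ?_, ?_⟩
  · rintro (_ | j)
    · exact (hS i).of_del.insert_arc (heS i) he hst Finset.sdiff_subset hbd'
    · simp only [Option.elim_some]
      by_cases h : j = i
      · rw [h, hi]
        exact (hS i).of_del.insert_arc (heS i) he hst hA hbd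
      · rw [hj j h]
        exact (hS j).of_del
  · intro x hx
    rw [Finset.card_filter, Fintype.sum_option]
    simp only [Option.elim_none, Option.elim_some]
    by_cases hxe : x = e
    · subst hxe
      rw [Finset.sum_eq_single i]
      · simp [hi]
      · intro j _ h
        simp [hj j h, heS]
      · simp
    · rw [← hd x (Finset.mem_erase.2 ⟨hxe, hx⟩), Finset.card_filter,
        ← Finset.add_sum_erase _ _ (Finset.mem_univ i), ← Finset.add_sum_erase _ _
        (Finset.mem_univ i), ← add_assoc]
      congr 1
      · by_cases h1 : x ∈ A
        · simp [hi, h1, hA h1, hxe]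
        · by_cases h2 : x ∈ S i <;> simp [hi, h1, h2, hxe]
      · refine Finset.sum_congr rfl fun j h => ?_
        simp only [hj j (Finset.ne_of_mem_erase h)]

lemma circuit_pair (hG : G.WF) {x y : E} (hx : x ∈ G.edges) (hy : y ∈ G.edges) (hxy : x ≠ y)
    (h : ∀ z, G.bd {x} z = G.bd {y} z) : G.Circuit {x, y} := by
  have hb : ∀ z, G.bd {x, y} z = G.bd {x} z + G.bd {y} z := fun z => by
    rw [Finset.insert_eq, bd_union (by simpa using hxy)]
  refine ⟨?_, by simp, fun z => ?_, ?_⟩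
  · intro z; simp only [Finset.mem_insert, Finset.mem_singleton]; rintro (rfl | rfl) <;> assumption
  · rw [hb, h]; exact CharTwo.add_self_eq_zero _
  · intro D hD hDn hDe
    have hno : ∀ z ∈ G.edges, D ≠ {z} := by
      rintro z hz rfl
      have := hDe (G.s z)
      rw [bd_singleton_s (hG z hz).2.2] at this
      exact one_ne_zero this
    by_contra hne
    have h1 : D.card < ({x, y} : Finset E).card :=
      Finset.card_lt_card (Finset.ssubset_iff_subset_ne.2 ⟨hD, hne⟩)
    rw [Finset.card_pair hxy] at h1
    have h2 := Finset.card_pos.2 hDn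
    obtain ⟨z, hz⟩ := Finset.card_eq_one.1 (by omega : D.card = 1)
    refine hno z ?_ hz
    have : z ∈ ({x, y} : Finset E) := hD (by rw [hz]; simp)
    simp only [Finset.mem_insert, Finset.mem_singleton] at this
    rcases this with rfl | rfl <;> assumption

/-- The cubic graph with two vertices. -/
lemma hasCDC_theta (hG : G.WF) (hV : G.verts.card = 2)
    (h3 : ∀ v ∈ G.verts, (G.cut {v}).card = 3) : G.HasCDC 3 ∧ G.edges.card = 3 := by
  obtain ⟨a, b, hab, hv⟩ := Finset.card_eq_two.1 hV
  have hst : ∀ e ∈ G.edges, G.inc e a ∧ G.inc e b := by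
    intro e he
    have := hG e he
    simp only [hv, Finset.mem_insert, Finset.mem_singleton] at this
    obtain ⟨h1 | h1, h2 | h2, h3⟩ := this
    · exact absurd (h1.trans h2.symm) h3
    · exact ⟨Or.inl h1, Or.inr h2⟩
    · exact ⟨Or.inr h2, Or.inl h1⟩
    · exact absurd (h1.trans h2.symm) h3
  have hE : G.edges = G.cut {a} := by
    ext e
    rw [mem_star hG]
    exact ⟨fun h => ⟨h, (hst e h).1⟩, fun h => h.1⟩
  have hc := h3 a (by rw [hv]; simp)
  rw [← hE] at hc
  refine ⟨?_, hc⟩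
  obtain ⟨x, y, z, hxy, hxz, hyz, hxyz⟩ := Finset.card_eq_three.1 hc
  have hbd : ∀ e ∈ G.edges, ∀ u, G.bd {e} u
      = (if a = u then 1 else 0) + (if b = u then 1 else 0) := by
    intro e he u
    rw [bd_singleton]
    rcases ends_cases (hst e he).1 (hst e he).2 hab with ⟨h1, h2⟩ | ⟨h1, h2⟩ <;> rw [h1, h2]
    rw [add_comm]
  have hx : x ∈ G.edges := by rw [hxyz]; simp
  have hy : y ∈ G.edges := by rw [hxyz]; simp
  have hz : z ∈ G.edges := by rw [hxyz]; simp
  refine ⟨Fin 3, inferInstance, ![{x, y}, {x, z}, {y, z}], by simp, ?_, ?_⟩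
  · intro i
    fin_cases i
    · exact circuit_pair hG hx hy hxy fun u => by rw [hbd x hx, hbd y hy]
    · exact circuit_pair hG hx hz hxz fun u => by rw [hbd x hx, hbd z hz]
    · exact circuit_pair hG hy hz hyz fun u => by rw [hbd y hy, hbd z hz]
  · intro e he
    rw [hxyz] at he
    rw [Finset.card_filter, Fin.sum_univ_three]
    simp only [Finset.mem_insert, Finset.mem_singleton] at he
    rcases he with rfl | rfl | rfl <;> simp [hxy, hxz, hyz, hxy.symm, hxz.symm, hyz.symm]

/-! ### Finding a `K_{3,3}` minor when no member passes through both ends of the deleted edge -/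

/-- The vertices touched by an edge set. -/
noncomputable def vset (G : MG α E) (C : Finset E) : Finset α :=
  G.verts.filter (fun x => ∃ f ∈ C, G.inc f x)

lemma mem_vset (hG : G.WF) {C : Finset E} (hC : C ⊆ G.edges) {x : α} :
    x ∈ G.vset C ↔ ∃ f ∈ C, G.inc f x := by
  simp only [vset, Finset.mem_filter, and_iff_right_iff_imp]
  rintro ⟨f, hf, hx⟩
  exact edge_ends hG (hC hf) hx

/-- In a double cover of `G - e`, `e = uv`, of maximal size, two members with two common edges share
exactly the two edges at `u` or the two edges at `v`. -/
lemma two_common (hG : G.Good) (h3 : ∀ v ∈ G.verts, (G.cut {v}).card = 3) (h4 : G.Cyc4)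
    (hV : 3 ≤ G.verts.card) {e : E} (he : e ∈ G.edges) {u v : α} (hu : G.inc e u)
    (hv : G.inc e v) (huv : u ≠ v) {ι : Type} [Fintype ι]
    {S : ι → Finset E} (hS : ∀ i, (G.del e).Circuit (S i))
    (hd : ∀ g ∈ (G.del e).edges, (Finset.univ.filter (fun i => g ∈ S i)).card = 2)
    (hcard : Fintype.card ι + G.verts.card = G.edges.card + 1) (i j : ι) (g g' : E)
    (hij : i ≠ j) (hgg : g ≠ g') (hgi : g ∈ S i) (hgj : g ∈ S j) (hgi' : g' ∈ S i)
    (hgj' : g' ∈ S j) : (G.inc g u ∧ G.inc g' u) ∨ (G.inc g v ∧ G.inc g' v) := by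
  have hgood := hG.del h3 h4 hV e
  have hE : (G.del e).edges.card + 1 = G.edges.card := Finset.card_erase_add_one he
  have hgE := (hS i).sub hgi
  have hgE' := (hS i).sub hgi'
  have hf := card_pair_of_filter (hd g hgE) hij hgi hgj
  have hf' := card_pair_of_filter (hd g' hgE') hij hgi' hgj'
  have hk : ∀ k, g ∈ S k ↔ g' ∈ S k := by
    intro k
    have e1 := Finset.ext_iff.1 hf k
    have e2 := Finset.ext_iff.1 hf' k
    simp only [Finset.mem_filter, Finset.mem_univ, true_and] at e1 e2
    rw [e1, e2]
  obtain ⟨X, hX, hcut⟩ := dual_cut hgood hS hd (show Fintype.card ι + G.verts.card = _ by omega)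
    (T := {g, g'}) (by
      intro x; simp only [Finset.mem_insert, Finset.mem_singleton]
      rintro (rfl | rfl) <;> assumption) (by
      intro k
      by_cases h : g ∈ S k
      · rw [Finset.insert_inter_of_mem h, Finset.singleton_inter_of_mem ((hk k).1 h),
          Finset.card_pair hgg]
        exact ⟨1, rfl⟩
      · rw [Finset.insert_inter_of_notMem h,
          Finset.singleton_inter_of_notMem (fun h' => h ((hk k).2 h'))]
        simp)
  rw [del_cut] at hcut
  have hg1 : g ∈ G.cut X ∧ g' ∈ G.cut X := by
    constructor
    · exact Finset.mem_of_mem_erase (a := e) (by rw [hcut]; simp)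
    · exact Finset.mem_of_mem_erase (a := e) (by rw [hcut]; simp)
  have hc2 : ((G.cut X).erase e).card = 2 := by rw [hcut, Finset.card_pair hgg]
  have hc3 := Finset.pred_card_le_card_erase (s := G.cut X) (a := e)
  obtain ⟨w, hw, hcw⟩ := small_cut hG.wf h4 hX ⟨g, hg1.1⟩ (by omega)
  have hw3 := h3 w hw
  rw [hcw] at hc2 hg1
  have hew : e ∈ G.cut {w} := by
    by_contra h
    rw [Finset.erase_eq_of_notMem h] at hc2
    omega
  rw [mem_star hG.wf] at hew
  rw [mem_star hG.wf, mem_star hG.wf] at hg1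
  rcases inc_cases hu hv huv hew.2 with rfl | rfl
  · exact Or.inl ⟨hg1.1.2, hg1.2.2⟩
  · exact Or.inr ⟨hg1.1.2, hg1.2.2⟩

/-- The configuration around the end `u` of the deleted edge `e = uv`: no member of the double cover
`S` of `G - e` touches both `u` and `v`, the members `S i` and `S j` share exactly the two edges
`a₁ = up` and `a₂ = uq`, the further edges at `p` are `b₁ ∈ S i` and `c₁ ∈ S j`, and those at `q`
are `b₂ ∈ S i` and `c₂ ∈ S j`. -/
structure Cfg (G : MG α E) (e : E) (u v : α) {ι : Type} [Fintype ι] (S : ι → Finset E) (i j : ι)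
    (a₁ a₂ : E) (p q : α) (b₁ c₁ b₂ c₂ : E) : Prop where
  good : G.Good
  cubic : ∀ v ∈ G.verts, (G.cut {v}).card = 3
  cyc : G.Cyc4
  he : e ∈ G.edges
  eu : G.inc e u
  ev : G.inc e v
  uv : u ≠ v
  hS : ∀ k, (G.del e).Circuit (S k)
  hd : ∀ g ∈ (G.del e).edges, (Finset.univ.filter (fun i => g ∈ S i)).card = 2
  kf : ∀ i j g g', i ≠ j → g ≠ g' → g ∈ S i → g ∈ S j → g' ∈ S i → g' ∈ S j →
    (G.inc g u ∧ G.inc g' u) ∨ (G.inc g v ∧ G.inc g' v)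
  no : ∀ k f g, f ∈ S k → G.inc f u → g ∈ S k → ¬ G.inc g v
  ij : i ≠ j
  a1i : a₁ ∈ S i
  a1j : a₁ ∈ S j
  a2i : a₂ ∈ S i
  a2j : a₂ ∈ S j
  a1u : G.inc a₁ u
  a2u : G.inc a₂ u
  a1p : G.inc a₁ p
  a2q : G.inc a₂ q
  up : u ≠ p
  uq : u ≠ q
  pq : p ≠ q
  starU : G.cut {u} = {e, a₁, a₂}
  starP : G.cut {p} = {a₁, b₁, c₁}
  starQ : G.cut {q} = {a₂, b₂, c₂}
  f1 : ∀ g, g ∈ S i → g ∈ S j → g = a₁ ∨ g = a₂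
  b1i : b₁ ∈ S i
  b1j : b₁ ∉ S j
  c1i : c₁ ∉ S i
  c1j : c₁ ∈ S j
  b2i : b₂ ∈ S i
  b2j : b₂ ∉ S j
  c2i : c₂ ∉ S i
  c2j : c₂ ∈ S j

namespace Cfg

variable {e : E} {u v : α} {ι : Type} [Fintype ι] {S : ι → Finset E} {i j : ι} {a₁ a₂ : E}
  {p q : α} {b₁ c₁ b₂ c₂ : E}

lemma swap (c : G.Cfg e u v S i j a₁ a₂ p q b₁ c₁ b₂ c₂) :
    G.Cfg e u v S j i a₁ a₂ p q c₁ b₁ c₂ b₂ :=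
  { c with
    ij := c.ij.symm, a1i := c.a1j, a1j := c.a1i, a2i := c.a2j, a2j := c.a2i
    starP := by rw [c.starP, Finset.pair_comm], starQ := by rw [c.starQ, Finset.pair_comm]
    f1 := fun g h h' => c.f1 g h' h
    b1i := c.c1j, b1j := c.c1i, c1i := c.b1j, c1j := c.b1i
    b2i := c.c2j, b2j := c.c2i, c2i := c.b2j, c2j := c.b2i }

lemma flip (c : G.Cfg e u v S i j a₁ a₂ p q b₁ c₁ b₂ c₂) :
    G.Cfg e u v S i j a₂ a₁ q p b₂ c₂ b₁ c₁ :=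
  { c with
    a1i := c.a2i, a1j := c.a2j, a2i := c.a1i, a2j := c.a1j, a1u := c.a2u, a2u := c.a1u
    a1p := c.a2q, a2q := c.a1p, up := c.uq, uq := c.up, pq := c.pq.symm
    starU := by rw [c.starU, Finset.pair_comm a₁], starP := c.starQ, starQ := c.starP
    f1 := fun g h h' => (c.f1 g h h').symm
    b1i := c.b2i, b1j := c.b2j, c1i := c.c2i, c1j := c.c2j
    b2i := c.b1i, b2j := c.b1j, c2i := c.c1i, c2j := c.c1j }

variable (c : G.Cfg e u v S i j a₁ a₂ p q b₁ c₁ b₂ c₂)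
include c

lemma sub (k : ι) : S k ⊆ G.edges := (c.hS k).of_del.sub

lemma ne_e (k : ι) {g : E} (hg : g ∈ S k) : g ≠ e := by
  have := (c.hS k).sub hg
  simp only [del, Finset.mem_erase] at this
  exact this.1

lemma atU {g : E} (hg : g ∈ G.edges) (h : G.inc g u) : g = e ∨ g = a₁ ∨ g = a₂ := by
  have : g ∈ G.cut {u} := (mem_star c.good.wf).2 ⟨hg, h⟩
  rwa [c.starU, Finset.mem_insert, Finset.mem_insert, Finset.mem_singleton] at this

lemma atP {g : E} (hg : g ∈ G.edges) (h : G.inc g p) : g = a₁ ∨ g = b₁ ∨ g = c₁ := by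
  have : g ∈ G.cut {p} := (mem_star c.good.wf).2 ⟨hg, h⟩
  rwa [c.starP, Finset.mem_insert, Finset.mem_insert, Finset.mem_singleton] at this

lemma b1p : G.inc b₁ p := by
  have : b₁ ∈ G.cut {p} := by rw [c.starP]; simp
  exact ((mem_star c.good.wf).1 this).2

lemma c1p : G.inc c₁ p := c.swap.b1p

lemma pv : p ≠ v := by
  rintro rfl
  exact c.no i a₁ a₁ c.a1i c.a1u c.a1i c.a1p

lemma qv : q ≠ v := c.flip.pv

/-- The other end of `b₁` is a vertex of `S i` different from `u`, `p`, `q`. -/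
lemma b1_end : ∃ y, G.inc b₁ y ∧ p ≠ y ∧ y ∈ G.vset (S i) \ {u, p, q} := by
  have hwf := c.good.wf
  have hb := c.sub i c.b1i
  obtain ⟨y, hy, hpy⟩ := exists_other_end hwf hb c.b1p
  refine ⟨y, hy, hpy, Finset.mem_sdiff.2 ⟨(mem_vset hwf (c.sub i)).2 ⟨b₁, c.b1i, hy⟩, ?_⟩⟩
  simp only [Finset.mem_insert, Finset.mem_singleton, not_or]
  have ha1 : b₁ ≠ a₁ := by intro h; exact c.b1j (h ▸ c.a1j)
  have ha2 : b₁ ≠ a₂ := by intro h; exact c.b1j (h ▸ c.a2j)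
  refine ⟨?_, hpy.symm, ?_⟩
  · rintro rfl
    rcases c.atU hb hy with h | h | h
    · exact c.ne_e i c.b1i h
    · exact ha1 h
    · exact ha2 h
  · rintro rfl
    have hb12 : b₁ = b₂ := by
      rcases c.flip.atP hb hy with h | h | h
      · exact absurd h ha2
      · exact h
      · exact absurd (h ▸ c.b1i) c.c2i
    have hX : ({u, p, y} : Finset α) ⊆ G.verts := by
      intro x; simp only [Finset.mem_insert, Finset.mem_singleton]
      rintro (rfl | rfl | rfl)
      · exact edge_ends hwf c.he c.eu
      · exact edge_ends hwf hb c.b1p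
      · exact edge_ends hwf hb hy
    have hsub : G.cut {u, p, y} ⊆ {e, c₁, c₂} := by
      intro g hg
      obtain ⟨x, z, hx, hz, hxX, hzX⟩ := exists_of_mem_cut hg
      have hgE := cut_sub _ hg
      have hxz : x ≠ z := by rintro rfl; exact hzX hxX
      simp only [Finset.mem_insert, Finset.mem_singleton, not_or] at hxX hzX ⊢
      have n1 : g ≠ a₁ := by
        rintro rfl
        rcases inc_cases c.a1u c.a1p c.up hz with rfl | rfl <;> tauto
      have n2 : g ≠ a₂ := by
        rintro rfl
        rcases inc_cases c.a2u c.a2q c.uq hz with rfl | rfl <;> tauto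
      have n3 : g ≠ b₁ := by
        rintro rfl
        rcases inc_cases c.b1p hy hpy hz with rfl | rfl <;> tauto
      rcases hxX with rfl | rfl | rfl
      · have := c.atU hgE hx; tauto
      · have := c.atP hgE hx; tauto
      · have := c.flip.atP hgE hx
        rw [← hb12] at this; tauto
    have hne : e ∈ G.cut {u, p, y} := by
      rw [mem_cut_inc c.he c.eu c.ev c.uv]
      simp [c.uv.symm, c.pv.symm, c.qv.symm]
    have hcard : ({e, c₁, c₂} : Finset E).card ≤ 3 := Finset.card_le_three
    obtain ⟨w, hw, hcw⟩ := small_cut hwf c.cyc hX ⟨e, hne⟩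
      ((Finset.card_le_card hsub).trans hcard)
    have hw3 := c.cubic w hw
    rw [hcw] at hsub hne
    have hEq : G.cut {w} = {e, c₁, c₂} := Finset.eq_of_subset_of_card_le hsub (by omega)
    have hc1w : G.inc c₁ w := by
      have : c₁ ∈ G.cut {w} := by rw [hEq]; simp
      exact ((mem_star hwf).1 this).2
    rcases inc_cases c.eu c.ev c.uv ((mem_star hwf).1 hne).2 with rfl | rfl
    · rcases c.atU (c.sub j c.c1j) hc1w with h | h | h
      · exact c.ne_e j c.c1j h
      · exact c.c1i (h ▸ c.a1i)
      · exact c.c1i (h ▸ c.a2i)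
    · exact c.no j a₁ c₁ c.a1j c.a1u c.c1j hc1w

lemma conn : G.Conn (G.vset (S i) \ {u, p, q}) := by
  have hwf := c.good.wf
  have hC := (c.hS i).of_del
  set B := G.vset (S i) \ {u, p, q} with hB
  obtain ⟨y₁, hy1, hpy1, hy1B⟩ := c.b1_end
  have hmB : ∀ x, x ∈ B ↔ (∃ f ∈ S i, G.inc f x) ∧ x ≠ u ∧ x ≠ p ∧ x ≠ q := by
    intro x
    rw [hB, Finset.mem_sdiff, mem_vset hwf (c.sub i)]
    simp
  have hbne : b₁ ≠ b₂ := by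
    intro h
    have h1 : G.inc b₁ q := h ▸ c.flip.b1p
    rcases inc_cases c.b1p hy1 hpy1 h1 with h2 | h2
    · exact c.pq h2.symm
    · exact ((hmB y₁).1 hy1B).2.2.2 h2.symm
  -- a part of `B` without edges to the rest of `B` is entered by `S i` through `b₁` and `b₂`
  have key : ∀ Z ⊆ B, Z.Nonempty → (∀ g ∈ G.edges, ¬ G.joins g Z (B \ Z)) → b₁ ∈ G.cut Z := by
    intro Z hZ hZn hno
    have hsub : S i ∩ G.cut Z ⊆ {b₁, b₂} := by
      intro g hg
      obtain ⟨hgi, hgc⟩ := Finset.mem_inter.1 hg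
      obtain ⟨x, y, hx, hy, hxZ, hyZ⟩ := exists_of_mem_cut hgc
      have hxy : x ≠ y := by rintro rfl; exact hyZ hxZ
      have hgE := c.sub i hgi
      have hxB := (hmB x).1 (hZ hxZ)
      have hyB : y ∉ B := fun h =>
        hno g hgE (joins_of_inc hx hy hxy hxZ (Finset.mem_sdiff.2 ⟨h, hyZ⟩))
      have hy3 : y = u ∨ y = p ∨ y = q := by
        by_contra h
        push Not at h
        exact hyB ((hmB y).2 ⟨⟨g, hgi, hy⟩, h⟩)
      have n1 : g ≠ a₁ := by
        rintro rfl
        rcases inc_cases c.a1u c.a1p c.up hx with rfl | rfl <;> tauto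
      have n2 : g ≠ a₂ := by
        rintro rfl
        rcases inc_cases c.a2u c.a2q c.uq hx with rfl | rfl <;> tauto
      have n3 : g ≠ e := c.ne_e i hgi
      have n4 : g ≠ c₁ := by rintro rfl; exact c.c1i hgi
      have n5 : g ≠ c₂ := by rintro rfl; exact c.c2i hgi
      simp only [Finset.mem_insert, Finset.mem_singleton]
      rcases hy3 with rfl | rfl | rfl
      · have := c.atU hgE hy; tauto
      · have := c.atP hgE hy; tauto
      · have := c.flip.atP hgE hy; tauto
    obtain ⟨x, hx⟩ := hZn
    obtain ⟨⟨f, hf, hfx⟩, -⟩ := (hmB x).1 (hZ hx)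
    have huZ : u ∉ Z := fun h => ((hmB u).1 (hZ h)).2.1 rfl
    obtain ⟨g, hgi, hgc⟩ := hC.cross hx huZ hf hfx c.a1i c.a1u
    have hev := even_cut hC.sub hC.ev Z
    have hpos := Finset.card_pos.2 ⟨g, Finset.mem_inter.2 ⟨hgi, hgc⟩⟩
    have h2 : ({b₁, b₂} : Finset E).card = 2 := Finset.card_pair hbne
    have hle := Finset.card_le_card hsub
    obtain ⟨k, hk⟩ := hev
    have := Finset.eq_of_subset_of_card_le hsub (by omega)
    have hb : b₁ ∈ S i ∩ G.cut Z := by rw [this]; simp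
    exact (Finset.mem_inter.1 hb).2
  intro Z hZ hZn hZne
  by_contra hcon
  push Not at hcon
  have k1 := key Z hZ hZn hcon
  have k2 := key (B \ Z) Finset.sdiff_subset (by
      rw [Finset.nonempty_iff_ne_empty, Ne, Finset.sdiff_eq_empty_iff_subset]
      exact fun h => hZne (Finset.Subset.antisymm hZ h)) (by
      intro g hg hj
      apply hcon g hg
      rw [Finset.sdiff_sdiff_eq_self hZ] at hj
      unfold joins at hj ⊢
      tauto)
  have hpB : p ∉ B := fun h => ((hmB p).1 h).2.2.1 rfl
  have hpZ : p ∉ Z := fun h => hpB (hZ h)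
  rw [mem_cut_inc (c.sub i c.b1i) c.b1p hy1 hpy1] at k1 k2
  simp only [Finset.mem_sdiff] at k2
  tauto

/-- A union `A` of components of the subgraph on the vertices touched by neither `S i` nor `S j`
that contains `v` is joined to the vertices of `S j` other than `u`, `p`, `q`. -/
lemma join {A : Finset α} (hv : v ∈ A) (hA : A ⊆ G.verts \ (G.vset (S i) ∪ G.vset (S j)))
    (hcl : ∀ g ∈ G.edges, ∀ x y, G.inc g x → G.inc g y → x ∈ A →
      y ∈ G.verts \ (G.vset (S i) ∪ G.vset (S j)) → y ∈ A) :
    ∃ g ∈ G.edges, G.joins g A (G.vset (S j) \ {u, p, q}) := by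
  by_contra hcon
  push Not at hcon
  have hwf := c.good.wf
  have hC := (c.hS i).of_del
  have hAi : ∀ x ∈ A, ∀ g ∈ S i, ¬ G.inc g x := by
    intro x hx g hg hgx
    have := hA hx
    simp only [Finset.mem_sdiff, Finset.mem_union, mem_vset hwf (c.sub i), not_or] at this
    exact this.2.1 ⟨g, hg, hgx⟩
  have hAj : ∀ x ∈ A, ∀ g ∈ S j, ¬ G.inc g x := by
    intro x hx g hg hgx
    have := hA hx
    simp only [Finset.mem_sdiff, Finset.mem_union, mem_vset hwf (c.sub j), not_or] at this
    exact this.2.2 ⟨g, hg, hgx⟩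
  have huA : u ∉ A := fun h => hAi u h a₁ c.a1i c.a1u
  -- apart from `e`, the edges leaving `A` lead to vertices of `S i` other than `u`, `p`, `q`
  have hcut : ∀ g ∈ G.cut A, g ≠ e → ∃ x y, G.inc g x ∧ G.inc g y ∧ x ∈ A ∧ y ∉ A ∧
      (∃ f ∈ S i, G.inc f y) ∧ y ≠ u ∧ y ≠ p ∧ y ≠ q := by
    intro g hg hge
    obtain ⟨x, y, hx, hy, hxA, hyA⟩ := exists_of_mem_cut hg
    have hgE := cut_sub _ hg
    have hxy : x ≠ y := by rintro rfl; exact hyA hxA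
    have hgi : g ∉ S i := fun h => hAi x hxA g h hx
    have hgj : g ∉ S j := fun h => hAj x hxA g h hx
    have n1 : g ≠ a₁ := by rintro rfl; exact hgi c.a1i
    have n2 : g ≠ a₂ := by rintro rfl; exact hgi c.a2i
    have n3 : g ≠ b₁ := by rintro rfl; exact hgi c.b1i
    have n4 : g ≠ b₂ := by rintro rfl; exact hgi c.b2i
    have n5 : g ≠ c₁ := by rintro rfl; exact hgj c.c1j
    have n6 : g ≠ c₂ := by rintro rfl; exact hgj c.c2j
    have m1 : y ≠ u := by rintro rfl; have := c.atU hgE hy; tauto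
    have m2 : y ≠ p := by rintro rfl; have := c.atP hgE hy; tauto
    have m3 : y ≠ q := by rintro rfl; have := c.flip.atP hgE hy; tauto
    refine ⟨x, y, hx, hy, hxA, hyA, ?_, m1, m2, m3⟩
    by_contra hno
    by_cases hyj : ∃ f ∈ S j, G.inc f y
    · apply hcon g hgE
      refine joins_of_inc hx hy hxy hxA (Finset.mem_sdiff.2 ⟨(mem_vset hwf (c.sub j)).2 hyj, ?_⟩)
      simp [m1, m2, m3]
    · apply hyA
      refine hcl g hgE x y hx hy hxA (Finset.mem_sdiff.2 ⟨edge_ends hwf hgE hy, ?_⟩)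
      rw [Finset.mem_union, mem_vset hwf (c.sub i), mem_vset hwf (c.sub j)]
      exact fun h => h.elim hno hyj
  let Z := G.verts.filter (fun y => y ∉ A ∧ (∃ f ∈ S i, G.inc f y) ∧ (y ≠ u ∧ y ≠ p ∧ y ≠ q) ∧
    ∃ g ∈ G.cut A, g ≠ e ∧ G.inc g y)
  have hZn : Z.Nonempty := by
    have h2 := c.good.two A (hA.trans Finset.sdiff_subset) ⟨v, hv⟩
      (fun h => huA (h ▸ edge_ends hwf c.he c.eu))
    obtain ⟨g, hg, hge⟩ := Finset.exists_mem_ne (by omega : 1 < (G.cut A).card) e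
    obtain ⟨x, y, hx, hy, hxA, hyA, hyi, hy3⟩ := hcut g hg hge
    exact ⟨y, Finset.mem_filter.2 ⟨edge_ends hwf (cut_sub _ hg) hy, hyA, hyi, hy3, g, hg, hge, hy⟩⟩
  have huZ : u ∉ Z := fun h => (Finset.mem_filter.1 h).2.2.2.1.1 rfl
  obtain ⟨z, hz⟩ := hZn
  obtain ⟨f₀, hf₀, hf₀z⟩ := (Finset.mem_filter.1 hz).2.2.1
  obtain ⟨g, hgi, hgc⟩ := hC.cross hz huZ hf₀ hf₀z c.a1i c.a1u
  obtain ⟨x, y, hx, hy, hxZ, hyZ⟩ := exists_of_mem_cut hgc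
  have hxy : x ≠ y := by rintro rfl; exact hyZ hxZ
  obtain ⟨hxV, hxA, -, hx3, l, hlA, hle, hlx⟩ := Finset.mem_filter.1 hxZ
  have hAcut : ∀ k ∈ S i, k ∉ G.cut A := by
    intro k hk hkc
    obtain ⟨a, b, ha, hb, haA, -⟩ := exists_of_mem_cut hkc
    exact hAi a haA k hk ha
  have hli : l ∉ S i := fun h => hAcut l h hlA
  have hgu : ¬ G.inc g u := by
    intro h
    rcases c.atU (c.sub i hgi) h with rfl | rfl | rfl
    · exact c.ne_e i hgi rfl
    · rcases inc_cases c.a1u c.a1p c.up hx with rfl | rfl <;> tauto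
    · rcases inc_cases c.a2u c.a2q c.uq hx with rfl | rfl <;> tauto
  have hgv : ¬ G.inc g v := c.no i a₁ g c.a1i c.a1u hgi
  -- the other member through `g`
  obtain ⟨k, hk, hki⟩ := Finset.exists_mem_ne
    (by rw [c.hd g ((c.hS i).sub hgi)]; norm_num :
      1 < (Finset.univ.filter (fun i => g ∈ S i)).card) i
  simp only [Finset.mem_filter, Finset.mem_univ, true_and] at hk
  have hD := (c.hS k).of_del
  have hcap : ∀ g' ∈ S k, g' ∈ S i → g' = g := by
    intro g' h1 h2
    by_contra hne
    rcases c.kf k i g g' hki (fun h => hne h.symm) hk hgi h1 h2 with h | h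
    · exact hgu h.1
    · exact hgv h.1
  obtain ⟨g₂, hg2i, hg2g, hg2x⟩ := hC.exists_other hwf (c.good.deg x hxV) hgi hx
  obtain ⟨f, hfk, hfg, hfx⟩ := hD.exists_other hwf (c.good.deg x hxV) hk hx
  have hstar : G.cut {x} = {g, g₂, l} := by
    symm
    have hgl : g ≠ l := by rintro rfl; exact hli hgi
    have hg2l : g₂ ≠ l := by rintro rfl; exact hli hg2i
    apply Finset.eq_of_subset_of_card_le
    · intro w
      simp only [Finset.mem_insert, Finset.mem_singleton]
      rintro (rfl | rfl | rfl)
      · exact (mem_star hwf).2 ⟨c.sub i hgi, hx⟩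
      · exact (mem_star hwf).2 ⟨c.sub i hg2i, hg2x⟩
      · exact (mem_star hwf).2 ⟨cut_sub _ hlA, hlx⟩
    · rw [c.cubic x hxV, Finset.card_eq_three.2 ⟨g, g₂, l, hg2g.symm, hgl, hg2l, rfl⟩]
  have atX : ∀ w ∈ G.edges, G.inc w x → w = g ∨ w = g₂ ∨ w = l := by
    intro w hw hwx
    have : w ∈ G.cut {x} := (mem_star hwf).2 ⟨hw, hwx⟩
    rwa [hstar, Finset.mem_insert, Finset.mem_insert, Finset.mem_singleton] at this
  have hlk : l ∈ S k := by
    rcases atX f (c.sub k hfk) hfx with h | h | h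
    · exact absurd h hfg
    · exact absurd (hcap f hfk (h ▸ hg2i)) hfg
    · exact h ▸ hfk
  have hone : S k ∩ G.cut A = {l} := by
    ext l'
    rw [Finset.mem_inter, Finset.mem_singleton]
    refine ⟨?_, fun h => h ▸ ⟨hlk, hlA⟩⟩
    rintro ⟨h1, h2⟩
    obtain ⟨a, b, ha, hb, haA, hbA, ⟨f', hf', hfb⟩, hb3⟩ := hcut l' h2 (c.ne_e k h1)
    have hbV := edge_ends hwf (cut_sub _ h2) hb
    obtain ⟨h, hhk, hhi, hhb⟩ := hD.common hwf hC (c.good.deg b hbV) h1 hb hf' hfb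
    have hhg := hcap h hhk hhi
    subst hhg
    rcases inc_cases hx hy hxy hhb with rfl | rfl
    · rcases atX l' (cut_sub _ h2) hb with h | h | h
      · exact absurd h2 (hAcut l' (h ▸ hgi))
      · exact absurd h2 (hAcut l' (h ▸ hg2i))
      · exact h
    · exact absurd (Finset.mem_filter.2 ⟨hbV, hbA, ⟨f', hf', hfb⟩, hb3, l', h2, c.ne_e k h1, hb⟩) hyZ
  have hev := even_cut hD.sub hD.ev A
  rw [hone, Finset.card_singleton] at hev
  exact absurd hev (by decide)

omit c in
lemma conn_singleton (x : α) : G.Conn {x} := by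
  intro Z hZ hZn hZne
  rcases Finset.subset_singleton_iff.1 hZ with h | h
  · rw [h] at hZn; exact absurd hZn Finset.not_nonempty_empty
  · exact absurd h hZne

omit c in
lemma pairwise_six {A₁ A₂ A₃ B₁ B₂ B₃ : Finset α} (h12 : Disjoint A₁ A₂) (h13 : Disjoint A₁ A₃)
    (h23 : Disjoint A₂ A₃) (k11 : Disjoint A₁ B₁) (k12 : Disjoint A₁ B₂) (k13 : Disjoint A₁ B₃)
    (k21 : Disjoint A₂ B₁) (k22 : Disjoint A₂ B₂) (k23 : Disjoint A₂ B₃) (k31 : Disjoint A₃ B₁)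
    (k32 : Disjoint A₃ B₂) (k33 : Disjoint A₃ B₃) (l12 : Disjoint B₁ B₂) (l13 : Disjoint B₁ B₃)
    (l23 : Disjoint B₂ B₃) :
    Pairwise fun w₁ w₂ => Disjoint ((Sum.elim ![A₁, A₂, A₃] ![B₁, B₂, B₃] : _ → Finset α) w₁)
      ((Sum.elim ![A₁, A₂, A₃] ![B₁, B₂, B₃] : _ → Finset α) w₂) := by
  rintro (k | k) (k' | k') hne <;> fin_cases k <;> fin_cases k' <;>
    first
    | exact absurd rfl hne
    | assumption
    | (apply Disjoint.symm; assumption)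

theorem contra : False := by
  have hwf := c.good.wf
  set W := G.verts \ (G.vset (S i) ∪ G.vset (S j)) with hW
  have mi : ∀ x, x ∈ G.vset (S i) ↔ ∃ f ∈ S i, G.inc f x := fun x => mem_vset hwf (c.sub i)
  have mj : ∀ x, x ∈ G.vset (S j) ↔ ∃ f ∈ S j, G.inc f x := fun x => mem_vset hwf (c.sub j)
  have hvW : v ∈ W := by
    rw [hW, Finset.mem_sdiff, Finset.mem_union, mi, mj]
    refine ⟨edge_ends hwf c.he c.ev, ?_⟩
    rintro (⟨f, hf, h⟩ | ⟨f, hf, h⟩)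
    · exact c.no i a₁ f c.a1i c.a1u hf h
    · exact c.no j a₁ f c.a1j c.a1u hf h
  -- the component of `v` in the subgraph on `W`, as a minimal union of components
  let Q : Finset α → Prop := fun A => v ∈ A ∧ A ⊆ W ∧
    ∀ g ∈ G.edges, ∀ x y, G.inc g x → G.inc g y → x ∈ A → y ∈ W → y ∈ A
  obtain ⟨A, hAm, hmin⟩ := Finset.exists_min_image (W.powerset.filter Q) Finset.card
    ⟨W, Finset.mem_filter.2 ⟨Finset.mem_powerset_self W, hvW, Finset.Subset.refl _,
      fun _ _ _ _ _ _ _ h => h⟩⟩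
  obtain ⟨hvA, hAW, hcl⟩ := (Finset.mem_filter.1 hAm).2
  have hAconn : G.Conn A := by
    have key : ∀ Z ⊆ A, Z ≠ A → v ∈ Z → ∃ e ∈ G.edges, G.joins e Z (A \ Z) := by
      intro Z hZ hZne hvZ
      by_contra hcon
      push Not at hcon
      have hQ : Q Z := by
        refine ⟨hvZ, hZ.trans hAW, fun g hg x y hx hy hxZ hyW => ?_⟩
        by_contra hyZ
        have hyA := hcl g hg x y hx hy (hZ hxZ) hyW
        exact hcon g hg (joins_of_inc hx hy (by rintro rfl; exact hyZ hxZ) hxZ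
          (Finset.mem_sdiff.2 ⟨hyA, hyZ⟩))
      have h1 := hmin Z (Finset.mem_filter.2 ⟨Finset.mem_powerset.2 (hZ.trans hAW), hQ⟩)
      exact hZne (Finset.eq_of_subset_of_card_le hZ h1)
    intro Z hZ hZn hZne
    by_cases hvZ : v ∈ Z
    · exact key Z hZ hZne hvZ
    · obtain ⟨g, hg, hj⟩ := key (A \ Z) Finset.sdiff_subset (by
        intro h
        obtain ⟨z, hz⟩ := hZn
        have := hZ hz
        rw [← h, Finset.mem_sdiff] at this
        exact this.2 hz) (Finset.mem_sdiff.2 ⟨hvA, hvZ⟩)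
      refine ⟨g, hg, ?_⟩
      rw [Finset.sdiff_sdiff_eq_self hZ] at hj
      unfold joins at hj ⊢
      tauto
  obtain ⟨gj, hgj, jj⟩ := c.join hvA hAW hcl
  have hW' : W = G.verts \ (G.vset (S j) ∪ G.vset (S i)) := by rw [hW, Finset.union_comm]
  obtain ⟨gi, hgi, ji⟩ := c.swap.join hvA (hW' ▸ hAW) (hW' ▸ hcl)
  obtain ⟨y1, hy1, hpy1, hy1B⟩ := c.b1_end
  obtain ⟨y2, hy2, hqy2, hy2B⟩ := c.flip.b1_end
  obtain ⟨z1, hz1, hpz1, hz1B⟩ := c.swap.b1_end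
  obtain ⟨z2, hz2, hqz2, hz2B⟩ := c.swap.flip.b1_end
  have hset : ({u, q, p} : Finset α) = {u, p, q} := by rw [Finset.pair_comm]
  rw [hset] at hy2B hz2B
  set B := G.vset (S i) \ {u, p, q} with hB
  set B' := G.vset (S j) \ {u, p, q} with hB'
  have hBV : B ⊆ G.verts := Finset.sdiff_subset.trans (Finset.filter_subset _ _)
  have hBV' : B' ⊆ G.verts := Finset.sdiff_subset.trans (Finset.filter_subset _ _)
  have hpV := edge_ends hwf (c.sub i c.a1i) c.a1p
  have hqV := edge_ends hwf (c.sub i c.a2i) c.a2q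
  have huV := edge_ends hwf (c.sub i c.a1i) c.a1u
  have huA : u ∉ A := fun h => by
    have := hAW h
    rw [hW, Finset.mem_sdiff, Finset.mem_union, mi, mj] at this
    exact this.2 (Or.inl ⟨a₁, c.a1i, c.a1u⟩)
  have hpA : p ∉ A := fun h => by
    have := hAW h
    rw [hW, Finset.mem_sdiff, Finset.mem_union, mi, mj] at this
    exact this.2 (Or.inl ⟨a₁, c.a1i, c.a1p⟩)
  have hqA : q ∉ A := fun h => by
    have := hAW h
    rw [hW, Finset.mem_sdiff, Finset.mem_union, mi, mj] at this
    exact this.2 (Or.inl ⟨a₂, c.a2i, c.a2q⟩)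
  have dAB : Disjoint A B := by
    rw [Finset.disjoint_left]
    intro x hx hxB
    have := hAW hx
    rw [hW, Finset.mem_sdiff, Finset.mem_union] at this
    exact this.2 (Or.inl (Finset.mem_sdiff.1 hxB).1)
  have dAB' : Disjoint A B' := by
    rw [Finset.disjoint_left]
    intro x hx hxB
    have := hAW hx
    rw [hW, Finset.mem_sdiff, Finset.mem_union] at this
    exact this.2 (Or.inr (Finset.mem_sdiff.1 hxB).1)
  have dBB' : Disjoint B B' := by
    rw [Finset.disjoint_left]
    intro x hx hx'
    rw [hB, Finset.mem_sdiff, mi] at hx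
    rw [hB', Finset.mem_sdiff, mj] at hx'
    obtain ⟨⟨f, hf, hfx⟩, hx3⟩ := hx
    obtain ⟨⟨f', hf', hfx'⟩, -⟩ := hx'
    have hxV := edge_ends hwf (c.sub i hf) hfx
    obtain ⟨h, h1, h2, hhx⟩ := (c.hS i).of_del.common hwf (c.hS j).of_del (c.good.deg x hxV)
      hf hfx hf' hfx'
    apply hx3
    simp only [Finset.mem_insert, Finset.mem_singleton]
    rcases c.f1 h h1 h2 with rfl | rfl
    · have := inc_cases c.a1u c.a1p c.up hhx; tauto
    · have := inc_cases c.a2u c.a2q c.uq hhx; tauto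
  have nB : ∀ x, x = u ∨ x = p ∨ x = q → x ∉ B ∧ x ∉ B' := by
    intro x hx
    rw [hB, hB']
    simp only [Finset.mem_sdiff, Finset.mem_insert, Finset.mem_singleton]
    tauto
  have hnu := nB u (by simp)
  have hnp := nB p (by simp)
  have hnq := nB q (by simp)
  have hup := c.up
  have huq := c.uq
  have hpq := c.pq
  have sw : ∀ {g : E} {X Y : Finset α}, G.joins g X Y → G.joins g Y X := by
    intro g X Y h; unfold joins at h ⊢; tauto
  apply c.good.k33
  refine ⟨Sum.elim ![{p}, {q}, A] ![{u}, B, B'], ?_, ?_, ?_⟩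
  · rintro (k | k) <;> fin_cases k
    · exact ⟨Finset.singleton_nonempty _, by simpa using hpV, conn_singleton _⟩
    · exact ⟨Finset.singleton_nonempty _, by simpa using hqV, conn_singleton _⟩
    · exact ⟨⟨v, hvA⟩, hAW.trans Finset.sdiff_subset, hAconn⟩
    · exact ⟨Finset.singleton_nonempty _, by simpa using huV, conn_singleton _⟩
    · exact ⟨⟨y1, hy1B⟩, hBV, c.conn⟩
    · exact ⟨⟨z1, hz1B⟩, hBV', c.swap.conn⟩
  · have ds : ∀ {x : α} {X : Finset α}, x ∉ X → Disjoint {x} X :=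
      fun h => Finset.disjoint_singleton_left.2 h
    have dss : ∀ {x y : α}, x ≠ y → Disjoint ({x} : Finset α) {y} :=
      fun h => Finset.disjoint_singleton.2 h
    exact pairwise_six (dss hpq) (ds hpA) (ds hqA) (dss hup.symm) (ds hnp.1) (ds hnp.2)
      (dss huq.symm) (ds hnq.1) (ds hnq.2) (ds huA).symm dAB dAB' (ds hnu.1) (ds hnu.2) dBB'
  · intro k k'
    fin_cases k <;> fin_cases k'
    · exact ⟨a₁, c.sub i c.a1i, joins_of_inc c.a1p c.a1u hup.symm (by simp) (by simp)⟩
    · exact ⟨b₁, c.sub i c.b1i, joins_of_inc c.b1p hy1 hpy1 (by simp) hy1B⟩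
    · exact ⟨c₁, c.sub j c.c1j, joins_of_inc c.c1p hz1 hpz1 (by simp) hz1B⟩
    · exact ⟨a₂, c.sub i c.a2i, joins_of_inc c.a2q c.a2u huq.symm (by simp) (by simp)⟩
    · exact ⟨b₂, c.sub i c.b2i, joins_of_inc c.flip.b1p hy2 hqy2 (by simp) hy2B⟩
    · exact ⟨c₂, c.sub j c.c2j, joins_of_inc c.flip.c1p hz2 hqz2 (by simp) hz2B⟩
    · exact ⟨e, c.he, joins_of_inc c.ev c.eu c.uv.symm hvA (by simp)⟩
    · exact ⟨gi, hgi, ji⟩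
    · exact ⟨gj, hgj, jj⟩

end Cfg

/-! ### A double cover attaining the Euler bound -/

lemma cut_pair (hG : G.WF) {a b : α} (hab : a ≠ b) :
    (G.cut {a, b}).card + 2 * (G.cut {a} ∩ G.cut {b}).card
      = (G.cut {a}).card + (G.cut {b}).card := by
  have h : G.cut {a, b} = symmDiff (G.cut {a}) (G.cut {b}) := by
    ext e
    rw [Finset.mem_symmDiff]
    by_cases he : e ∈ G.edges
    · have := (hG e he).2.2
      simp only [mem_cut, Finset.mem_insert, Finset.mem_singleton, he, true_and]
      have h1 : G.s e = a → G.s e ≠ b := fun h h' => hab (h.symm.trans h')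
      have h2 : G.t e = a → G.t e ≠ b := fun h h' => hab (h.symm.trans h')
      have h3 : G.s e = a → G.t e ≠ a := fun h h' => this (h.trans h'.symm)
      have h4 : G.s e = b → G.t e ≠ b := fun h h' => this (h.trans h'.symm)
      by_cases p1 : G.s e = a
      · simp [p1, h3 p1, hab]
      · by_cases p2 : G.s e = b
        · simp [p2, h4 p2, hab.symm]
        · by_cases p3 : G.t e = a <;> simp [p1, p2, p3, hab]
    · simp only [mem_cut, he, false_and, or_self]
  rw [h, symmDiff_def, Finset.sup_eq_union,
    Finset.card_union_of_disjoint (disjoint_sdiff_sdiff)]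
  have h1 := Finset.card_sdiff_add_card_inter (G.cut {a}) (G.cut {b})
  have h2 := Finset.card_sdiff_add_card_inter (G.cut {b}) (G.cut {a})
  rw [Finset.inter_comm] at h2
  omega

lemma two_le_inter {a b : α} (hG : G.WF) {e f : E} (he : e ∈ G.edges) (hf : f ∈ G.edges)
    (hef : e ≠ f) (hea : G.inc e a) (heb : G.inc e b) (hfa : G.inc f a) (hfb : G.inc f b) :
    2 ≤ (G.cut {a} ∩ G.cut {b}).card := by
  have : ({e, f} : Finset E) ⊆ G.cut {a} ∩ G.cut {b} := by
    intro g
    simp only [Finset.mem_insert, Finset.mem_singleton, Finset.mem_inter, mem_star hG]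
    rintro (rfl | rfl) <;> tauto
  have h := Finset.card_le_card this
  rwa [Finset.card_pair hef] at h

lemma pair_sub {a b : α} (ha : a ∈ G.verts) (hb : b ∈ G.verts) : {a, b} ⊆ G.verts := by
  intro x; simp only [Finset.mem_insert, Finset.mem_singleton]; rintro (rfl | rfl) <;> assumption

lemma no_parallel (hG : G.Good) (h3 : ∀ v ∈ G.verts, (G.cut {v}).card = 3) (h4 : G.Cyc4)
    (hV : 3 ≤ G.verts.card) {a b : α} {e f : E} (he : e ∈ G.edges) (hf : f ∈ G.edges)
    (hef : e ≠ f) (hea : G.inc e a) (heb : G.inc e b) (hfa : G.inc f a) (hfb : G.inc f b)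
    (hab : a ≠ b) : False := by
  have h1 := cut_pair hG.wf hab
  have h2 := two_le_inter hG.wf he hf hef hea heb hfa hfb
  have ha := edge_ends hG.wf he hea
  have hb := edge_ends hG.wf he heb
  rw [h3 a ha, h3 b hb] at h1
  have h5 := hG.two {a, b} (pair_sub ha hb) ⟨a, by simp⟩ (by
    intro h; rw [← h, Finset.card_pair hab] at hV; omega)
  obtain ⟨w, hw, hcw⟩ := small_cut hG.wf h4 (pair_sub ha hb) (Finset.card_pos.1 (by omega))
    (by omega)
  rw [hcw, h3 w hw] at h1
  omega

/-- At a vertex `p` at which the circuits `C` and `D` have the single common edge `a`, the two other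
edges belong to one of them each. -/
lemma corner (hG : G.WF) {C D : Finset E} (hC : G.Circuit C) (hD : G.Circuit D) {p : α}
    (hp : (G.cut {p}).card = 3) {a : E} (haC : a ∈ C) (haD : a ∈ D) (hap : G.inc a p)
    (hcap : ∀ g ∈ C, g ∈ D → G.inc g p → g = a) :
    ∃ b c, b ∈ C ∧ b ∉ D ∧ c ∉ C ∧ c ∈ D ∧ G.cut {p} = {a, b, c} := by
  obtain ⟨b, hb, hba, hbp⟩ := hC.exists_other hG hp.le haC hap
  obtain ⟨c, hc, hca, hcp⟩ := hD.exists_other hG hp.le haD hap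
  have hbD : b ∉ D := fun h => hba (hcap b hb h hbp)
  have hcC : c ∉ C := fun h => hca (hcap c h hc hcp)
  refine ⟨b, c, hb, hbD, hcC, hc, ?_⟩
  symm
  have hbc : b ≠ c := by rintro rfl; exact hbD hc
  apply Finset.eq_of_subset_of_card_le
  · intro w
    simp only [Finset.mem_insert, Finset.mem_singleton]
    rintro (rfl | rfl | rfl)
    · exact (mem_star hG).2 ⟨hC.sub haC, hap⟩
    · exact (mem_star hG).2 ⟨hC.sub hb, hbp⟩
    · exact (mem_star hG).2 ⟨hD.sub hc, hcp⟩
  · rw [hp, Finset.card_eq_three.2 ⟨a, b, c, hba.symm, hca.symm, hbc, rfl⟩]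

/-- In a cyclically 4-edge-connected cubic graph without `K_{3,3}` minor, every double cover of
`G - e` of maximal size has a member through both ends of `e`; hence it extends to `G`. -/
theorem extend_del (hG : G.Good) (h3 : ∀ v ∈ G.verts, (G.cut {v}).card = 3) (h4 : G.Cyc4)
    (hV : 3 ≤ G.verts.card) {e : E} (he : e ∈ G.edges) {ι : Type} [Fintype ι]
    {S : ι → Finset E} (hS : ∀ i, (G.del e).Circuit (S i))
    (hd : ∀ g ∈ (G.del e).edges, (Finset.univ.filter (fun i => g ∈ S i)).card = 2)
    (hcard : Fintype.card ι + G.verts.card = G.edges.card + 1) :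
    G.HasCDC (Fintype.card ι + 1) := by
  by_contra hcon
  have no : ∀ k f g, f ∈ S k → G.inc f (G.s e) → g ∈ S k → ¬ G.inc g (G.t e) :=
    fun k f g h1 h2 h3 h4 => hcon (hasCDC_of_del hG.wf he hS hd h1 h2 h3 h4)
  have hwf := hG.wf
  obtain ⟨hu, hv, huv⟩ := hwf e he
  have eu : G.inc e (G.s e) := Or.inl rfl
  have ev : G.inc e (G.t e) := Or.inr rfl
  generalize G.s e = u at *
  generalize G.t e = v at *
  have kf := two_common hG h3 h4 hV he eu ev huv hS hd hcard
  have heu : e ∈ G.cut {u} := (mem_star hwf).2 ⟨he, eu⟩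
  obtain ⟨a₁, ha1, hne1⟩ := Finset.exists_mem_ne (by rw [h3 u hu]; norm_num : 1 < (G.cut {u}).card) e
  obtain ⟨ha1E, a1u⟩ := (mem_star hwf).1 ha1
  have hE1 : a₁ ∈ (G.del e).edges := Finset.mem_erase.2 ⟨hne1, ha1E⟩
  obtain ⟨i, j, hij, hfil⟩ := Finset.card_eq_two.1 (hd a₁ hE1)
  have hmem : ∀ k, k = i ∨ k = j → a₁ ∈ S k := by
    intro k hk
    have : k ∈ Finset.univ.filter (fun i => a₁ ∈ S i) := by
      rw [hfil]; simpa using hk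
    exact (Finset.mem_filter.1 this).2
  have a1i := hmem i (Or.inl rfl)
  have a1j := hmem j (Or.inr rfl)
  have neE : ∀ k, ∀ g ∈ S k, g ≠ e := fun k g hg => (Finset.mem_erase.1 ((hS k).sub hg)).1
  obtain ⟨a₂, a2i, ha21, a2u⟩ := (hS i).of_del.exists_other hwf (h3 u hu).le a1i a1u
  obtain ⟨a₃, a3j, ha31, a3u⟩ := (hS j).of_del.exists_other hwf (h3 u hu).le a1j a1u
  have starU : G.cut {u} = {e, a₁, a₂} := by
    symm
    apply Finset.eq_of_subset_of_card_le
    · intro w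
      simp only [Finset.mem_insert, Finset.mem_singleton]
      rintro (rfl | rfl | rfl)
      · exact heu
      · exact ha1
      · exact (mem_star hwf).2 ⟨(hS i).of_del.sub a2i, a2u⟩
    · rw [h3 u hu, Finset.card_eq_three.2 ⟨e, a₁, a₂, hne1.symm, (neE i a₂ a2i).symm, ha21.symm, rfl⟩]
  have h32 : a₃ = a₂ := by
    have : a₃ ∈ G.cut {u} := (mem_star hwf).2 ⟨(hS j).of_del.sub a3j, a3u⟩
    rw [starU, Finset.mem_insert, Finset.mem_insert, Finset.mem_singleton] at this
    rcases this with h | h | h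
    · exact absurd h (neE j a₃ a3j)
    · exact absurd h ha31
    · exact h
  subst h32
  have ha2E := (hS i).of_del.sub a2i
  have f1 : ∀ g, g ∈ S i → g ∈ S j → g = a₁ ∨ g = a₃ := by
    intro g hgi hgj
    by_contra hne
    push Not at hne
    rcases kf i j g a₁ hij hne.1 hgi hgj a1i a1j with h | h
    · have : g ∈ G.cut {u} := (mem_star hwf).2 ⟨(hS j).of_del.sub hgj, h.1⟩
      rw [starU, Finset.mem_insert, Finset.mem_insert, Finset.mem_singleton] at this
      have := neE i g hgi
      tauto
    · exact no i a₁ a₁ a1i a1u a1i h.2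
  obtain ⟨p, a1p, up⟩ := exists_other_end hwf ha1E a1u
  obtain ⟨q, a2q, uq⟩ := exists_other_end hwf ha2E a2u
  have pq : p ≠ q := by
    rintro rfl
    exact no_parallel hG h3 h4 hV ha1E ha2E ha21.symm a1u a1p a2u a2q up
  obtain ⟨b₁, c₁, b1i, b1j, c1i, c1j, starP⟩ := corner hwf (hS i).of_del (hS j).of_del
    (h3 p (edge_ends hwf ha1E a1p)) a1i a1j a1p (by
      intro g hgi hgj hgp
      rcases f1 g hgi hgj with h | rfl
      · exact h
      · rcases inc_cases a2u a2q uq hgp with h | h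
        · exact absurd h.symm up
        · exact absurd h pq)
  obtain ⟨b₂, c₂, b2i, b2j, c2i, c2j, starQ⟩ := corner hwf (hS i).of_del (hS j).of_del
    (h3 q (edge_ends hwf ha2E a2q)) a2i a3j a2q (by
      intro g hgi hgj hgp
      rcases f1 g hgi hgj with rfl | h
      · rcases inc_cases a1u a1p up hgp with h | h
        · exact absurd h.symm uq
        · exact absurd h.symm pq
      · exact h)
  exact Cfg.contra (G := G) (e := e) (u := u) (v := v) (S := S) (i := i) (j := j) (a₁ := a₁)
    (a₂ := a₃) (p := p) (q := q) (b₁ := b₁) (c₁ := c₁) (b₂ := b₂) (c₂ := c₂)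
    { good := hG, cubic := h3, cyc := h4, he := he, eu := eu, ev := ev, uv := huv, hS := hS, hd := hd
      kf := kf, no := no, ij := hij, a1i := a1i, a1j := a1j, a2i := a2i, a2j := a3j, a1u := a1u
      a2u := a2u, a1p := a1p, a2q := a2q, up := up, uq := uq, pq := pq, starU := starU
      starP := starP, starQ := starQ, f1 := f1, b1i := b1i, b1j := b1j, c1i := c1i, c1j := c1j
      b2i := b2i, b2j := b2j, c2i := c2i, c2j := c2j }

lemma two_le_verts (hG : G.Good) : 2 ≤ G.verts.card := by
  obtain ⟨v, hv, h3⟩ := hG.branch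
  obtain ⟨e, he⟩ := Finset.card_pos.1 (by omega : 0 < (G.cut {v}).card)
  obtain ⟨he, hev⟩ := (mem_star hG.wf).1 he
  obtain ⟨w, hw, hvw⟩ := exists_other_end hG.wf he hev
  have := Finset.card_le_card (pair_sub hv (edge_ends hG.wf he hw))
  rwa [Finset.card_pair hvw] at this

/-- Data of a vertex `v` of degree 2 that is to be suppressed into its neighbour `w`. -/
lemma exists_suppress (hG : G.Good) {v : α} (hv : v ∈ G.verts) (h2 : (G.cut {v}).card ≠ 3) :
    ∃ w e f, w ∈ G.verts ∧ v ≠ w ∧ e ≠ f ∧ G.cut {v} = {e, f} ∧ G.inc e w ∧ ¬ G.inc f w ∧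
      (G.contract {v, w} w).Good ∧ (G.contract {v, w} w).verts.card + 1 = G.verts.card ∧
      (G.contract {v, w} w).edges.card + 1 = G.edges.card ∧
      (G.cut {v, w}).card = (G.cut {w}).card ∧ e ∈ G.edges ∧ G.inc e v := by
  have hwf := hG.wf
  have hV := two_le_verts hG
  have hcv : (G.cut {v}).card = 2 := by
    have := hG.deg v hv
    have := hG.two {v} (by simpa using hv) ⟨v, by simp⟩ (by intro h; rw [← h] at hV; simp at hV)
    omega
  obtain ⟨e, f, hef, hc⟩ := Finset.card_eq_two.1 hcv
  obtain ⟨heE, hev⟩ := (mem_star hwf).1 (by rw [hc]; simp : e ∈ G.cut {v})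
  obtain ⟨hfE, hfv⟩ := (mem_star hwf).1 (by rw [hc]; simp : f ∈ G.cut {v})
  obtain ⟨w, hew, hvw⟩ := exists_other_end hwf heE hev
  have hw := edge_ends hwf heE hew
  have hX := pair_sub hv hw
  have hp := cut_pair hwf hvw
  have hfw : ¬ G.inc f w := by
    intro hfw
    have h2 := two_le_inter hwf heE hfE hef hev hew hfv hfw
    have hw3 := hG.deg w hw
    have hXV : {v, w} = G.verts := by
      by_contra h
      have := hG.two {v, w} hX ⟨v, by simp⟩ h
      omega
    obtain ⟨x, hx, hx3⟩ := hG.branch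
    rw [hXV, cut_verts hwf, Finset.card_empty] at hp
    rw [← hXV, Finset.mem_insert, Finset.mem_singleton] at hx
    rcases hx with rfl | rfl
    · omega
    · have := Finset.card_le_card (Finset.inter_subset_left (s₁ := G.cut {v}) (s₂ := G.cut {x}))
      omega
  have hcap : G.cut {v} ∩ G.cut {w} = {e} := by
    ext g
    rw [Finset.mem_inter, hc, mem_star hwf, Finset.mem_singleton, Finset.mem_insert,
      Finset.mem_singleton]
    constructor
    · rintro ⟨rfl | rfl, h⟩
      · rfl
      · exact absurd h.2 hfw
    · rintro rfl; exact ⟨Or.inl rfl, heE, hew⟩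
  rw [hcap, Finset.card_singleton] at hp
  have hcw : (G.cut {v, w}).card = (G.cut {w}).card := by omega
  have hne : {v, w} ≠ G.verts := by
    intro h
    obtain ⟨b, hfb, hvb⟩ := exists_other_end hwf hfE hfv
    have := edge_ends hwf hfE hfb
    rw [← h, Finset.mem_insert, Finset.mem_singleton] at this
    rcases this with rfl | rfl
    · exact hvb rfl
    · exact hfw hfb
  have hw3 := hG.deg w hw
  refine ⟨w, e, f, hw, hvw, hef, hc, hew, hfw, ?_, ?_, ?_, hcw, heE, hev⟩
  · apply hG.contract hX (by simp) (by omega) (hG.conn hX hne (by omega))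
    obtain ⟨x, hx, hx3⟩ := hG.branch
    by_cases hxw : x = w
    · left; rw [hcw, ← hxw, hx3]
    · right
      refine ⟨x, hx, ?_, hx3⟩
      simp only [Finset.mem_insert, Finset.mem_singleton, not_or]
      exact ⟨by rintro rfl; exact h2 hx3, hxw⟩
  · have := card_contract_verts hX (by simp : w ∈ ({v, w} : Finset α))
    rw [Finset.card_pair hvw] at this
    omega
  · have : (G.contract {v, w} w).edges = G.edges.erase e := by
      ext g
      rw [mem_contract_edges, Finset.mem_erase, and_comm]
      refine and_congr_left fun hg => ?_
      rw [not_iff_not]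
      simp only [Finset.mem_insert, Finset.mem_singleton]
      constructor
      · intro h
        have hst := (hwf g hg).2.2
        have : g ∈ G.cut {v} ∩ G.cut {w} := by
          rw [Finset.mem_inter, mem_star hwf, mem_star hwf]
          unfold inc
          rcases h with ⟨h1 | h1, h2 | h2⟩
          · exact absurd (h1.trans h2.symm) hst
          · tauto
          · tauto
          · exact absurd (h1.trans h2.symm) hst
        rwa [hcap, Finset.mem_singleton] at this
      · rintro rfl
        rcases ends_cases hev hew hvw with h | h <;> simp [h]
    rw [this, Finset.card_erase_add_one heE]

/-- A nontrivial cut of size at most 3 splits a cubic graph into two smaller graphs. -/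
lemma split_good (hG : G.Good) (h3 : ∀ v ∈ G.verts, (G.cut {v}).card = 3) {X : Finset α}
    (hX : X ⊆ G.verts) (hXn : 2 ≤ X.card) (hYn : 2 ≤ (G.verts \ X).card) (hc : (G.cut X).card ≤ 3)
    {x : α} (hx : x ∈ X) : (G.contract X x).Good ∧ 2 ≤ (G.cut X).card := by
  have hne : X ≠ G.verts := by rintro rfl; simp at hYn
  refine ⟨hG.contract hX hx hc (hG.conn hX hne hc) (Or.inr ?_), hG.two X hX ⟨x, hx⟩ hne⟩
  obtain ⟨v, hv⟩ := Finset.card_pos.1 (by omega : 0 < (G.verts \ X).card)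
  have hv' := Finset.mem_sdiff.1 hv
  exact ⟨v, hv'.1, hv'.2, h3 v hv'.1⟩

/-- Every graph of the class has a double cover by `|E| - |V| + 2` circuits. -/
theorem exists_max : ∀ (n : ℕ) (G : MG α E), G.verts.card + G.edges.card ≤ n → G.Good →
    ∃ m, G.HasCDC m ∧ m + G.verts.card = G.edges.card + 2 := by
  intro n
  induction n with
  | zero =>
    intro G hn hG
    have := two_le_verts hG
    omega
  | succ n ih =>
    intro G hn hG
    have hwf := hG.wf
    by_cases hcub : ∃ v ∈ G.verts, (G.cut {v}).card ≠ 3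
    · obtain ⟨v, hv, h2⟩ := hcub
      obtain ⟨w, e, f, hw, hvw, hef, hc, hew, hfw, hgood, hcv, hce, -⟩ := exists_suppress hG hv h2
      obtain ⟨m, hm, hmc⟩ := ih _ (by omega) hgood
      exact ⟨m, suppress hwf hef hc hew hvw hfw hm, by omega⟩
    push Not at hcub
    by_cases h4 : G.Cyc4
    · have hV := two_le_verts hG
      rcases Nat.lt_or_ge 2 G.verts.card with hV3 | hV2
      · obtain ⟨v, hv, hv3⟩ := hG.branch
        obtain ⟨e, he⟩ := Finset.card_pos.1 (by omega : 0 < (G.cut {v}).card)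
        have heE := cut_sub _ he
        have hE : (G.del e).edges.card + 1 = G.edges.card := Finset.card_erase_add_one heE
        have hV' : (G.del e).verts.card = G.verts.card := rfl
        obtain ⟨m, ⟨ι, _, S, hm, hS, hd⟩, hmc⟩ := ih (G.del e) (by omega) (hG.del hcub h4 hV3 e)
        exact ⟨m + 1, hm ▸ extend_del hG hcub h4 hV3 heE hS hd (by omega), by omega⟩
      · obtain ⟨h1, h2⟩ := hasCDC_theta hwf (by omega) hcub
        exact ⟨3, h1, by omega⟩
    · simp only [Cyc4, not_forall, not_le] at h4
      obtain ⟨X, hX, hX2, hY2, hc⟩ := h4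
      obtain ⟨x, hx⟩ := Finset.card_pos.1 (by omega : 0 < X.card)
      obtain ⟨y, hy⟩ := Finset.card_pos.1 (by omega : 0 < (G.verts \ X).card)
      obtain ⟨g1, hc2⟩ := split_good hG hcub hX hX2 hY2 (by omega) hx
      obtain ⟨g2, -⟩ := split_good hG hcub Finset.sdiff_subset hY2
        (by rwa [Finset.sdiff_sdiff_eq_self hX]) (by rw [cut_compl hwf]; omega) hy
      have e1 := card_contract_verts hX hx
      have e2 := card_contract_verts Finset.sdiff_subset hy
      have e3 := card_contract_edges hwf (X := X) (x := x) (y := y)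
      have e4 := Finset.card_sdiff_add_card_eq_card hX
      have e5 : (G.contract X x).edges.card ≤ G.edges.card :=
        Finset.card_le_card (contract_edges_sub _ _)
      have e6 : (G.contract (G.verts \ X) y).edges.card ≤ G.edges.card :=
        Finset.card_le_card (contract_edges_sub _ _)
      obtain ⟨m₁, hm1, hc1⟩ := ih _ (by omega) g1
      obtain ⟨m₂, hm2, hc2'⟩ := ih _ (by omega) g2
      obtain ⟨m, hm, hmc⟩ := glue hwf hx hy hc2 (by omega) hm2 hm1
      exact ⟨m, hm, by omega⟩

/-! ### Merging circuits -/

/-- Two circuits of a graph with maximum degree 3 that share a single edge merge into one. -/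
lemma Circuit.symmDiff (hG : G.WF) (hdeg : ∀ v ∈ G.verts, (G.cut {v}).card ≤ 3) {C D : Finset E}
    (hC : G.Circuit C) (hD : G.Circuit D) {h : E} (hcap : C ∩ D = {h}) :
    G.Circuit (symmDiff C D) := by
  have hhC : h ∈ C := Finset.mem_of_mem_inter_left (by rw [hcap]; simp : h ∈ C ∩ D)
  have hhD : h ∈ D := Finset.mem_of_mem_inter_right (by rw [hcap]; simp : h ∈ C ∩ D)
  have hcap : ∀ g ∈ C, g ∈ D → g = h := fun g h1 h2 => by
    have : g ∈ C ∩ D := Finset.mem_inter.2 ⟨h1, h2⟩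
    rwa [hcap, Finset.mem_singleton] at this
  have hhE := hC.sub hhC
  have hst := (hG h hhE).2.2
  refine ⟨?_, ?_, fun v => ?_, ?_⟩
  · intro g hg
    rcases Finset.mem_symmDiff.1 hg with h1 | h1
    · exact hC.sub h1.1
    · exact hD.sub h1.1
  · obtain ⟨g, hg, hne⟩ := Finset.exists_mem_ne (hC.two_le_card hG) h
    exact ⟨g, Finset.mem_symmDiff.2 (Or.inl ⟨hg, fun h' => hne (hcap g hg h')⟩)⟩
  · rw [bd_symmDiff, hC.ev, hD.ev, add_zero]
  · intro F hF hFn hFev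
    have hF1 : F ∩ C ⊆ C := Finset.inter_subset_right
    have hF2 : F ∩ D ⊆ D := Finset.inter_subset_right
    have hFmem : ∀ g ∈ F, (g ∈ C ∧ g ∉ D) ∨ (g ∈ D ∧ g ∉ C) := fun g hg =>
      Finset.mem_symmDiff.1 (hF hg)
    have hh1 : h ∉ F := fun hh => by have := hFmem h hh; tauto
    have hU : F = (F ∩ C) ∪ (F ∩ D) := by
      ext g
      have := hFmem g
      simp only [Finset.mem_union, Finset.mem_inter]
      tauto
    have hdis : Disjoint (F ∩ C) (F ∩ D) := by
      rw [Finset.disjoint_left]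
      intro g hg hg'
      have := hFmem g
      simp only [Finset.mem_inter] at hg hg'
      tauto
    have hsum : ∀ v, G.bd (F ∩ C) v = G.bd (F ∩ D) v := by
      intro v
      have := hFev v
      rw [hU, bd_union hdis] at this
      exact CharTwo.add_eq_zero.1 this
    -- away from the ends of `h`, one of the two parts has no edge at `v`
    have hzero : ∀ v, ¬ G.inc h v → G.bd (F ∩ C) v = 0 := by
      intro v hv
      by_cases h1 : ∃ g ∈ F ∩ C, G.inc g v
      · by_cases h2 : ∃ g ∈ F ∩ D, G.inc g v
        · obtain ⟨g, hg, hgv⟩ := h1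
          obtain ⟨g', hg', hgv'⟩ := h2
          obtain ⟨k, hk1, hk2, hkv⟩ := hC.common hG hD
            (hdeg v (edge_ends hG (hC.sub (hF1 hg)) hgv)) (hF1 hg) hgv (hF2 hg') hgv'
          exact absurd (hcap k hk1 hk2 ▸ hkv) hv
        · rw [hsum]
          exact bd_eq_zero_of_not_inc fun g hg hgv => h2 ⟨g, hg, hgv⟩
      · exact bd_eq_zero_of_not_inc fun g hg hgv => h1 ⟨g, hg, hgv⟩
    have hends : G.bd (F ∩ C) (G.s h) = G.bd (F ∩ C) (G.t h) := by
      have h1 := sum_verts_bd hG (hF1.trans hC.sub)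
      have h2 : ∑ v ∈ ({G.s h, G.t h} : Finset α), G.bd (F ∩ C) v = 0 := by
        rw [← h1]
        refine Finset.sum_subset (pair_sub (hG h hhE).1 (hG h hhE).2.1) fun v _ hv => hzero v ?_
        simp only [Finset.mem_insert, Finset.mem_singleton, not_or] at hv
        rintro (h | h)
        · exact hv.1 h.symm
        · exact hv.2 h.symm
      rw [Finset.sum_pair hst] at h2
      exact CharTwo.add_eq_zero.1 h2
    have hbd : (∀ v, G.bd (F ∩ C) v = 0) ∨ (∀ v, G.bd (F ∩ C) v = G.bd {h} v) := by
      have : ∀ a : ZMod 2, a = 0 ∨ a = 1 := by decide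
      rcases this (G.bd (F ∩ C) (G.s h)) with h0 | h0
      · left
        intro v
        by_cases hv : G.inc h v
        · rcases hv with rfl | rfl
          · exact h0
          · rw [← hends, h0]
        · exact hzero v hv
      · right
        intro v
        rw [bd_singleton]
        by_cases hv : G.inc h v
        · rcases hv with rfl | rfl
          · simp [h0, hst.symm]
          · simp [← hends, h0, hst]
        · rw [hzero v hv]
          simp only [inc, not_or] at hv
          simp [hv.1, hv.2]
    rcases hbd with h0 | h0
    · exfalso
      rcases Finset.eq_empty_or_nonempty (F ∩ C) with e1 | e1
      · rcases Finset.eq_empty_or_nonempty (F ∩ D) with e2 | e2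
        · rw [hU, e1, e2] at hFn
          simp at hFn
        · have := hD.min _ hF2 e2 (fun v => by rw [← hsum, h0])
          exact hh1 (Finset.mem_of_mem_inter_left (by rw [this]; exact hhD : h ∈ F ∩ D))
      · have := hC.min _ hF1 e1 h0
        exact hh1 (Finset.mem_of_mem_inter_left (by rw [this]; exact hhC : h ∈ F ∩ C))
    · have key : ∀ B : Finset E, G.Circuit B → h ∈ B → (∀ v, G.bd (F ∩ B) v = G.bd {h} v) →
          insert h (F ∩ B) = B := by
        intro B hB hhB hb
        apply hB.min
        · exact Finset.insert_subset hhB Finset.inter_subset_right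
        · exact ⟨h, by simp⟩
        · intro v
          rw [Finset.insert_eq, bd_union (by simp [hh1]), hb]
          exact CharTwo.add_self_eq_zero _
      have k1 := key C hC hhC h0
      have k2 := key D hD hhD (fun v => by rw [← hsum, h0])
      apply Finset.Subset.antisymm hF
      intro g hg
      rcases Finset.mem_symmDiff.1 hg with h1 | h1
      · have := h1.1
        rw [← k1, Finset.mem_insert] at this
        rcases this with rfl | h2
        · exact absurd hhD h1.2
        · exact Finset.mem_of_mem_inter_left h2
      · have := h1.1
        rw [← k2, Finset.mem_insert] at this
        rcases this with rfl | h2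
        · exact absurd hhC h1.2
        · exact Finset.mem_of_mem_inter_left h2

/-- Merging a circuit with pairwise disjoint circuits, each of which meets it in one edge. -/
lemma circuit_merge (hG : G.WF) (hdeg : ∀ v ∈ G.verts, (G.cut {v}).card ≤ 3) {C : Finset E}
    (hC : G.Circuit C) {D : E → Finset E} (T : Finset E) (hD : ∀ g ∈ T, G.Circuit (D g))
    (hcap : ∀ g ∈ T, C ∩ D g = {g})
    (hdis : ∀ g ∈ T, ∀ g' ∈ T, g ≠ g' → Disjoint (D g) (D g')) :
    G.Circuit (_root_.symmDiff C (T.biUnion D)) := by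
  induction T using Finset.induction_on with
  | empty =>
    rw [Finset.biUnion_empty, ← Finset.bot_eq_empty, symmDiff_bot]
    exact hC
  | insert a T ha ih =>
    have h1 := ih (fun g hg => hD g (Finset.mem_insert_of_mem hg))
      (fun g hg => hcap g (Finset.mem_insert_of_mem hg))
      (fun g hg g' hg' => hdis g (Finset.mem_insert_of_mem hg) g' (Finset.mem_insert_of_mem hg'))
    have hd : ∀ x ∈ D a, x ∉ T.biUnion D := by
      intro x hx hx'
      obtain ⟨g, hg, hxg⟩ := Finset.mem_biUnion.1 hx'
      exact Finset.disjoint_left.1 (hdis a (Finset.mem_insert_self _ _) g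
        (Finset.mem_insert_of_mem hg) (fun h => ha (h ▸ hg))) hx hxg
    have hI := hcap a (Finset.mem_insert_self _ _)
    have h2 := h1.symmDiff hG hdeg (hD a (Finset.mem_insert_self _ _)) (h := a) (by
      rw [← hI]
      ext x
      have := hd x
      simp only [Finset.mem_inter, Finset.mem_symmDiff]
      tauto)
    convert h2 using 1
    rw [Finset.biUnion_insert]
    ext x
    have := hd x
    simp only [Finset.mem_symmDiff, Finset.mem_union]
    tauto

/-- Greedy colouring with three colours when every element has at most two conflicts. -/
lemma greedy {β : Type*} (r : β → β → Prop) (hr : ∀ a b, r a b → r b a) (C : Finset β)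
    (h2 : ∀ a ∈ C, (C.filter (fun b => r a b)).card ≤ 2) :
    ∃ col : β → Fin 3, ∀ a ∈ C, ∀ b ∈ C, a ≠ b → r a b → col a ≠ col b := by
  suffices h : ∀ T ⊆ C, ∃ col : β → Fin 3, ∀ a ∈ T, ∀ b ∈ T, a ≠ b → r a b → col a ≠ col b from
    h C (Finset.Subset.refl _)
  intro T
  induction T using Finset.induction_on with
  | empty => exact fun _ => ⟨fun _ => 0, by simp⟩
  | insert x T hx ih =>
    intro hT
    obtain ⟨col, hcol⟩ := ih ((Finset.subset_insert _ _).trans hT)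
    have hxC := hT (Finset.mem_insert_self _ _)
    obtain ⟨k, hk⟩ : ∃ k : Fin 3, k ∉ (C.filter (fun b => r x b)).image col := by
      by_contra hcon
      push Not at hcon
      have h1 : (Finset.univ : Finset (Fin 3)) ⊆ (C.filter (fun b => r x b)).image col :=
        fun k _ => hcon k
      have h3 := (Finset.card_le_card h1).trans (Finset.card_image_le.trans (h2 x hxC))
      simp at h3
    have hk' : ∀ b ∈ T, r x b → col b ≠ k := fun b hb hrb h => hk (Finset.mem_image.2
      ⟨b, Finset.mem_filter.2 ⟨hT (Finset.mem_insert_of_mem hb), hrb⟩, h⟩)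
    refine ⟨Function.update col x k, fun a ha b hb hab hrab => ?_⟩
    rcases Finset.mem_insert.1 ha with rfl | haT
    · rcases Finset.mem_insert.1 hb with rfl | hbT
      · exact absurd rfl hab
      · rw [Function.update_self, Function.update_of_ne hab.symm]
        exact (hk' b hbT hrab).symm
    · rcases Finset.mem_insert.1 hb with rfl | hbT
      · rw [Function.update_self, Function.update_of_ne hab]
        exact hk' a haT (hr _ _ hrab)
      · rw [Function.update_of_ne (by rintro rfl; exact hx haT),
          Function.update_of_ne (by rintro rfl; exact hx hbT)]
        exact hcol a haT b hbT hab hrab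

lemma handshake (hG : G.WF) {F : Finset E} (hF : F ⊆ G.edges) :
    ∑ v ∈ G.verts, (F ∩ G.cut {v}).card = 2 * F.card := by
  have h1 : ∀ v, (F ∩ G.cut {v}).card = ∑ e ∈ F, if G.inc e v then 1 else 0 := by
    intro v
    rw [← Finset.card_filter]
    congr 1
    ext e
    rw [Finset.mem_inter, Finset.mem_filter, mem_star hG]
    exact and_congr_right fun he => and_iff_right (hF he)
  simp only [h1]
  rw [Finset.sum_comm, mul_comm, ← smul_eq_mul, ← Finset.sum_const]
  refine Finset.sum_congr rfl fun e he => ?_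
  obtain ⟨hs, ht, hst⟩ := hG e (hF he)
  rw [← Finset.card_filter, ← Finset.card_pair hst]
  congr 1
  ext v
  rw [Finset.mem_filter, Finset.mem_insert, Finset.mem_singleton]
  constructor
  · rintro ⟨-, h | h⟩ <;> simp [h]
  · rintro (rfl | rfl)
    · exact ⟨hs, Or.inl rfl⟩
    · exact ⟨ht, Or.inr rfl⟩

/-- A circuit misses at most one vertex or has at least four edges. -/
lemma circuit_length (hG : G.WF) (h3 : ∀ v ∈ G.verts, (G.cut {v}).card = 3) (h4 : G.Cyc4)
    {C : Finset E} (hC : G.Circuit C) : 4 ≤ C.card ∨ G.verts.card ≤ C.card + 1 := by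
  have hX : G.vset C ⊆ G.verts := Finset.filter_subset _ _
  have hmem : ∀ x, x ∈ G.vset C ↔ ∃ f ∈ C, G.inc f x := fun x => mem_vset hG hC.sub
  have hdeg : ∀ v ∈ G.vset C, (C ∩ G.cut {v}).card = 2 := by
    intro v hv
    obtain ⟨f, hf, hfv⟩ := (hmem v).1 hv
    exact hC.deg hG (h3 v (hX hv)).le hf hfv
  have hcard : (G.vset C).card = C.card := by
    have h := handshake hG hC.sub
    rw [← Finset.sum_subset hX (fun v _ hv => by
      rw [Finset.card_eq_zero, Finset.eq_empty_iff_forall_notMem]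
      intro f hf
      rw [Finset.mem_inter, mem_star hG] at hf
      exact hv ((hmem v).2 ⟨f, hf.1, hf.2.2⟩)), Finset.sum_congr rfl hdeg, Finset.sum_const,
      smul_eq_mul] at h
    omega
  have hcut : (G.cut (G.vset C)).card ≤ (G.vset C).card := by
    have hsub : G.cut (G.vset C) ⊆ (G.vset C).biUnion (fun v => G.cut {v} \ C) := by
      intro e he
      obtain ⟨a, b, ha, hb, haX, hbX⟩ := exists_of_mem_cut he
      rw [Finset.mem_biUnion]
      refine ⟨a, haX, Finset.mem_sdiff.2 ⟨(mem_star hG).2 ⟨cut_sub _ he, ha⟩, fun heC => ?_⟩⟩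
      exact hbX ((hmem b).2 ⟨e, heC, hb⟩)
    refine (Finset.card_le_card hsub).trans (Finset.card_biUnion_le.trans ?_)
    rw [Finset.card_eq_sum_ones]
    refine Finset.sum_le_sum fun v hv => ?_
    have h1 := hdeg v hv
    have h2 := h3 v (hX hv)
    have h5 := Finset.card_sdiff_add_card_inter (G.cut {v}) C
    rw [Finset.inter_comm] at h5
    omega
  have h2 := hC.two_le_card hG
  have h5 := h4 _ hX (by omega)
  have h6 := Finset.card_sdiff_add_card_eq_card hX
  by_contra hcon
  push Not at hcon
  have := h5 (by omega)
  omega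

/-! ### Improving on the Euler bound -/

/-- In a cyclically 4-edge-connected cubic graph, a nonempty set of at most three edges that meets
every member of a maximal double cover evenly is the star of a vertex: it is a cut by `dual_cut`. -/
lemma even_star (hG : G.Good) (h4 : G.Cyc4) {ι : Type} [Fintype ι] {S : ι → Finset E}
    (hS : ∀ i, G.Circuit (S i))
    (hd : ∀ e ∈ G.edges, (Finset.univ.filter (fun i => e ∈ S i)).card = 2)
    (hcard : Fintype.card ι + G.verts.card = G.edges.card + 2) {T : Finset E} (hT : T ⊆ G.edges)
    (hTn : T.Nonempty) (hT3 : T.card ≤ 3) (hev : ∀ i, Even (T ∩ S i).card) :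
    ∃ v ∈ G.verts, T = G.cut {v} := by
  obtain ⟨X, hX, rfl⟩ := dual_cut hG hS hd hcard hT hev
  exact small_cut hG.wf h4 hX hTn hT3

/-- Distinct members of a maximal double cover have at most one common edge: two common edges would
meet all members evenly, but a star has three edges. -/
lemma share_one (hG : G.Good) (h3 : ∀ v ∈ G.verts, (G.cut {v}).card = 3) (h4 : G.Cyc4)
    {ι : Type} [Fintype ι] {S : ι → Finset E}
    (hS : ∀ i, G.Circuit (S i))
    (hd : ∀ e ∈ G.edges, (Finset.univ.filter (fun i => e ∈ S i)).card = 2)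
    (hcard : Fintype.card ι + G.verts.card = G.edges.card + 2) {i j : ι} (hij : i ≠ j) {g g' : E}
    (hgi : g ∈ S i) (hgj : g ∈ S j) (hgi' : g' ∈ S i) (hgj' : g' ∈ S j) : g = g' := by
  by_contra hgg
  have hgE := (hS i).sub hgi
  have hgE' := (hS i).sub hgi'
  have hf := card_pair_of_filter (hd g hgE) hij hgi hgj
  have hf' := card_pair_of_filter (hd g' hgE') hij hgi' hgj'
  have hk : ∀ k, g ∈ S k ↔ g' ∈ S k := by
    intro k
    have e1 := Finset.ext_iff.1 hf k
    have e2 := Finset.ext_iff.1 hf' k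
    simp only [Finset.mem_filter, Finset.mem_univ, true_and] at e1 e2
    rw [e1, e2]
  obtain ⟨v, hv, hT⟩ := even_star hG h4 hS hd hcard (T := {g, g'}) (by
      intro x; simp only [Finset.mem_insert, Finset.mem_singleton]
      rintro (rfl | rfl) <;> assumption) ⟨g, by simp⟩ (by rw [Finset.card_pair hgg]; norm_num) (by
      intro k
      by_cases h : g ∈ S k
      · rw [Finset.insert_inter_of_mem h, Finset.singleton_inter_of_mem ((hk k).1 h),
          Finset.card_pair hgg]
        exact ⟨1, rfl⟩
      · rw [Finset.insert_inter_of_notMem h,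
          Finset.singleton_inter_of_notMem (fun h' => h ((hk k).2 h'))]
        simp)
  have := h3 v hv
  rw [← hT, Finset.card_pair hgg] at this
  omega

/-- Three members of a maximal double cover that pairwise share an edge meet in a common vertex. -/
lemma triple_star (hG : G.Good) (h4 : G.Cyc4) {ι : Type} [Fintype ι] {S : ι → Finset E}
    (hS : ∀ i, G.Circuit (S i))
    (hd : ∀ e ∈ G.edges, (Finset.univ.filter (fun i => e ∈ S i)).card = 2)
    (hcard : Fintype.card ι + G.verts.card = G.edges.card + 2) {i j k : ι} (hij : i ≠ j)
    (hik : i ≠ k) (hjk : j ≠ k) {x y z : E} (hxi : x ∈ S i) (hxj : x ∈ S j) (hyi : y ∈ S i)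
    (hyk : y ∈ S k) (hzj : z ∈ S j) (hzk : z ∈ S k) : ∃ v, G.inc x v ∧ G.inc y v := by
  have mem : ∀ {g : E} {a b : ι}, a ≠ b → g ∈ S a → g ∈ S b → ∀ l, g ∈ S l ↔ l = a ∨ l = b := by
    intro g a b hab ha hb l
    have := Finset.ext_iff.1 (card_pair_of_filter (hd g ((hS a).sub ha)) hab ha hb) l
    simpa using this
  have mx := mem hij hxi hxj
  have my := mem hik hyi hyk
  have mz := mem hjk hzj hzk
  have hxy : x ≠ y := by
    rintro rfl
    rcases (mx k).1 hyk with h | h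
    · exact hik h.symm
    · exact hjk h.symm
  have hxz : x ≠ z := by
    rintro rfl
    rcases (mx k).1 hzk with h | h
    · exact hik h.symm
    · exact hjk h.symm
  have hyz : y ≠ z := by
    rintro rfl
    rcases (my j).1 hzj with h | h
    · exact hij h.symm
    · exact hjk h
  have hc3 : ({x, y, z} : Finset E).card = 3 :=
    Finset.card_eq_three.2 ⟨x, y, z, hxy, hxz, hyz, rfl⟩
  obtain ⟨v, hv, hT⟩ := even_star hG h4 hS hd hcard (T := {x, y, z}) (by
      intro w; simp only [Finset.mem_insert, Finset.mem_singleton]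
      rintro (rfl | rfl | rfl)
      · exact (hS i).sub hxi
      · exact (hS i).sub hyi
      · exact (hS j).sub hzj) ⟨x, by simp⟩ hc3.le (by
      intro l
      have h2 : ∀ a b : E, a ≠ b → Even ({a, b} : Finset E).card := fun a b h => by
        rw [Finset.card_pair h]; exact ⟨1, rfl⟩
      by_cases h1 : l = i
      · subst h1
        have : z ∉ S l := fun h => by rcases (mz l).1 h with h | h <;> tauto
        rw [Finset.insert_inter_of_mem hxi, Finset.insert_inter_of_mem hyi,
          Finset.singleton_inter_of_notMem this]
        exact h2 x y hxy
      by_cases h1' : l = j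
      · subst h1'
        have : y ∉ S l := fun h => by rcases (my l).1 h with h | h <;> tauto
        rw [Finset.insert_inter_of_mem hxj, Finset.insert_inter_of_notMem this,
          Finset.singleton_inter_of_mem hzj]
        exact h2 x z hxz
      have hx' : x ∉ S l := fun h => by rcases (mx l).1 h with h | h <;> tauto
      rw [Finset.insert_inter_of_notMem hx']
      by_cases h1'' : l = k
      · subst h1''
        rw [Finset.insert_inter_of_mem hyk, Finset.singleton_inter_of_mem hzk]
        exact h2 y z hyz
      have hy' : y ∉ S l := fun h => by rcases (my l).1 h with h | h <;> tauto
      have hz' : z ∉ S l := fun h => by rcases (mz l).1 h with h | h <;> tauto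
      rw [Finset.insert_inter_of_notMem hy', Finset.singleton_inter_of_notMem hz']
      simp)
  refine ⟨v, ?_, ?_⟩
  · exact ((mem_star hG.wf).1 (by rw [← hT]; simp : x ∈ G.cut {v})).2
  · exact ((mem_star hG.wf).1 (by rw [← hT]; simp : y ∈ G.cut {v})).2

/-- The circuit `C = S c` and its neighbours `S (n g)`, `g ∈ C`, are replaced by three circuits, one
for each colour of a colouring of `C` in which edges with a common end receive different colours. -/
theorem recolour (hG : G.Good) (h3 : ∀ v ∈ G.verts, (G.cut {v}).card = 3) (h4 : G.Cyc4)
    {ι : Type} [Fintype ι] {S : ι → Finset E} (hS : ∀ i, G.Circuit (S i))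
    (hd : ∀ e ∈ G.edges, (Finset.univ.filter (fun i => e ∈ S i)).card = 2)
    (hcard : Fintype.card ι + G.verts.card = G.edges.card + 2) (c : ι) :
    ∃ m, G.HasCDC m ∧ m + (S c).card = Fintype.card ι + 2 := by
  have hwf := hG.wf
  have hn : ∀ g, ∃ j, g ∈ S c → j ≠ c ∧ g ∈ S j ∧ ∀ l, g ∈ S l ↔ l = c ∨ l = j := by
    intro g
    by_cases hg : g ∈ S c
    · obtain ⟨j, hj, hjc⟩ := Finset.exists_mem_ne
        (by rw [hd g ((hS c).sub hg)]; norm_num :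
          1 < (Finset.univ.filter (fun i => g ∈ S i)).card) c
      have hj' := (Finset.mem_filter.1 hj).2
      refine ⟨j, fun _ => ⟨hjc, hj', fun l => ?_⟩⟩
      have := Finset.ext_iff.1 (card_pair_of_filter (hd g ((hS c).sub hg)) hjc.symm hg hj') l
      simpa using this
    · exact ⟨c, fun h => absurd h hg⟩
  choose n hn using hn
  have hnc : ∀ g ∈ S c, n g ≠ c := fun g hg => (hn g hg).1
  have hng : ∀ g ∈ S c, g ∈ S (n g) := fun g hg => (hn g hg).2.1
  have hinj : ∀ g ∈ S c, ∀ g' ∈ S c, n g = n g' → g = g' := fun g hg g' hg' h =>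
    share_one hG h3 h4 hS hd hcard (hnc g hg).symm hg (hng g hg) hg' (h ▸ hng g' hg')
  obtain ⟨r, hr⟩ : ∃ r : E → E → Prop, ∀ g g', r g g' ↔ g ≠ g' ∧ ∃ v, G.inc g v ∧ G.inc g' v :=
    ⟨_, fun _ _ => Iff.rfl⟩
  obtain ⟨col, hcol⟩ := greedy r (fun a b h => by
      obtain ⟨h1, v, h2, h5⟩ := (hr a b).1 h
      exact (hr b a).2 ⟨h1.symm, v, h5, h2⟩) (S c) (by
      intro g hg
      have hsub : (S c).filter (fun b => r g b) ⊆
          (S c ∩ G.cut {G.s g}).erase g ∪ (S c ∩ G.cut {G.t g}).erase g := by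
        intro b hb
        obtain ⟨hb, hgb⟩ := Finset.mem_filter.1 hb
        obtain ⟨hne, v, hgv, hbv⟩ := (hr g b).1 hgb
        have hbE := (hS c).sub hb
        rw [Finset.mem_union, Finset.mem_erase, Finset.mem_erase, Finset.mem_inter,
          Finset.mem_inter, mem_star hwf, mem_star hwf]
        rcases hgv with rfl | rfl
        · exact Or.inl ⟨hne.symm, hb, hbE, hbv⟩
        · exact Or.inr ⟨hne.symm, hb, hbE, hbv⟩
      refine (Finset.card_le_card hsub).trans ((Finset.card_union_le _ _).trans ?_)
      have hgE := (hS c).sub hg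
      have key : ∀ v, G.inc g v → ((S c ∩ G.cut {v}).erase g).card = 1 := by
        intro v hv
        have := (hS c).deg hwf (h3 v (edge_ends hwf hgE hv)).le hg hv
        rw [Finset.card_erase_of_mem (Finset.mem_inter.2 ⟨hg, (mem_star hwf).2 ⟨hgE, hv⟩⟩), this]
      rw [key _ (Or.inl rfl), key _ (Or.inr rfl)])
  have hdis : ∀ g ∈ S c, ∀ g' ∈ S c, g ≠ g' → col g = col g' → ∀ h ∈ S (n g), h ∉ S (n g') := by
    intro g hg g' hg' hne hcc h hh hh'
    have := triple_star hG h4 hS hd hcard (hnc g hg).symm (hnc g' hg').symm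
      (fun h => hne (hinj g hg g' hg' h)) hg (hng g hg) hg' (hng g' hg') hh hh'
    exact hcol g hg g' hg' hne ((hr g g').2 ⟨hne, this⟩) hcc
  obtain ⟨R, hR⟩ : ∃ R : ι → Prop, ∀ i, R i ↔ i = c ∨ ∃ g ∈ S c, n g = i := ⟨_, fun _ => Iff.rfl⟩
  let D : Fin 3 → Finset E := fun k =>
    symmDiff (S c) (((S c).filter (fun g => col g = k)).biUnion (fun g => S (n g)))
  have hDc : ∀ k, G.Circuit (D k) := by
    intro k
    apply circuit_merge hwf hG.deg (hS c)
    · exact fun g _ => hS _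
    · intro g hg
      obtain ⟨hg, -⟩ := Finset.mem_filter.1 hg
      ext g'
      rw [Finset.mem_inter, Finset.mem_singleton]
      constructor
      · rintro ⟨h1, h2⟩
        exact (share_one hG h3 h4 hS hd hcard (hnc g hg).symm hg (hng g hg) h1 h2).symm
      · rintro rfl; exact ⟨hg, hng g' hg⟩
    · intro g hg g' hg' hne
      obtain ⟨hg, hgk⟩ := Finset.mem_filter.1 hg
      obtain ⟨hg', hgk'⟩ := Finset.mem_filter.1 hg'
      rw [Finset.disjoint_left]
      exact hdis g hg g' hg' hne (hgk.trans hgk'.symm)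
  have hDm : ∀ k e, e ∈ D k ↔ (e ∈ S c ∧ ¬ ∃ g ∈ S c, col g = k ∧ e ∈ S (n g)) ∨
      ((∃ g ∈ S c, col g = k ∧ e ∈ S (n g)) ∧ e ∉ S c) := by
    intro k e
    simp only [D, Finset.mem_symmDiff, Finset.mem_biUnion, Finset.mem_filter, and_assoc]
  -- the number of indices that are replaced
  have hRcard : (Finset.univ.filter R).card = (S c).card + 1 := by
    have : Finset.univ.filter R = insert c ((S c).image n) := by
      ext i
      simp [hR]
    rw [this, Finset.card_insert_of_notMem, Finset.card_image_of_injOn]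
    · exact fun g hg g' hg' h => hinj g hg g' hg' h
    · rw [Finset.mem_image]
      rintro ⟨g, hg, h⟩
      exact hnc g hg h
  -- an edge is covered as often by the new circuits as by the replaced ones
  have hcount : ∀ e ∈ G.edges, (Finset.univ.filter (fun k => e ∈ D k)).card
      = (Finset.univ.filter (fun i => R i ∧ e ∈ S i)).card := by
    intro e he
    by_cases hec : e ∈ S c
    · have h1 : Finset.univ.filter (fun i => R i ∧ e ∈ S i) = {c, n e} := by
        ext i
        simp only [Finset.mem_filter, Finset.mem_univ, true_and, Finset.mem_insert,
          Finset.mem_singleton, (hn e hec).2.2, hR]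
        constructor
        · exact fun h => h.2
        · rintro (rfl | rfl)
          · simp
          · exact ⟨Or.inr ⟨e, hec, rfl⟩, Or.inr rfl⟩
      have h2 : Finset.univ.filter (fun k => e ∈ D k) = Finset.univ.erase (col e) := by
        ext k
        rw [Finset.mem_filter, Finset.mem_erase, hDm]
        have : (∃ g ∈ S c, col g = k ∧ e ∈ S (n g)) ↔ k = col e := by
          constructor
          · rintro ⟨g, hg, rfl, heg⟩
            rw [share_one hG h3 h4 hS hd hcard (hnc g hg).symm hg (hng g hg) hec heg]
          · rintro rfl; exact ⟨e, hec, rfl, hng e hec⟩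
        rw [this]
        simp [hec]
      rw [h1, h2, Finset.card_pair (hnc e hec).symm, Finset.card_erase_of_mem (Finset.mem_univ _)]
      simp
    · have h1 : Finset.univ.filter (fun i => R i ∧ e ∈ S i)
          = ((S c).filter (fun g => e ∈ S (n g))).image n := by
        ext i
        simp only [Finset.mem_filter, Finset.mem_univ, true_and, hR, Finset.mem_image]
        constructor
        · rintro ⟨rfl | ⟨g, hg, rfl⟩, h⟩
          · exact absurd h hec
          · exact ⟨g, ⟨hg, h⟩, rfl⟩
        · rintro ⟨g, ⟨hg, h⟩, rfl⟩
          exact ⟨Or.inr ⟨g, hg, rfl⟩, h⟩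
      have h2 : Finset.univ.filter (fun k => e ∈ D k)
          = ((S c).filter (fun g => e ∈ S (n g))).image col := by
        ext k
        rw [Finset.mem_filter, hDm, Finset.mem_image]
        simp only [hec, not_false_eq_true, and_true, false_and, false_or, Finset.mem_univ, true_and,
          Finset.mem_filter]
        constructor
        · rintro ⟨g, hg, h, h'⟩; exact ⟨g, ⟨hg, h'⟩, h⟩
        · rintro ⟨g, ⟨hg, h'⟩, h⟩; exact ⟨g, hg, h, h'⟩
      rw [h1, h2, Finset.card_image_of_injOn, Finset.card_image_of_injOn]
      · intro g hg g' hg' h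
        exact hinj g (Finset.mem_filter.1 hg).1 g' (Finset.mem_filter.1 hg').1 h
      · intro g hg g' hg' h
        by_contra hne
        exact hdis g (Finset.mem_filter.1 hg).1 g' (Finset.mem_filter.1 hg').1 hne h e
          (Finset.mem_filter.1 hg).2 (Finset.mem_filter.1 hg').2
  refine ⟨_, ⟨{i // ¬ R i} ⊕ Fin 3, inferInstance, Sum.elim (fun i => S i) D, rfl, ?_, ?_⟩, ?_⟩
  · rintro (i | k)
    · exact hS i
    · exact hDc k
  · intro e he
    have h1 : (Finset.univ.filter
        (fun x => e ∈ (Sum.elim (fun i : {i // ¬ R i} => S i) D : _ → Finset E) x)).card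
        = (Finset.univ.filter (fun i : {i // ¬ R i} => e ∈ S i)).card
          + (Finset.univ.filter (fun k => e ∈ D k)).card := by
      rw [Finset.card_filter, Fintype.sum_sum_type, Finset.card_filter, Finset.card_filter]
      rfl
    have h2 := hd e he
    have h5 : (Finset.univ.filter (fun i : {i // ¬ R i} => e ∈ S i)).card
        = (Finset.univ.filter (fun i => ¬ R i ∧ e ∈ S i)).card := by
      rw [← Finset.card_image_of_injective _ Subtype.val_injective]
      congr 1
      ext i
      simp [and_comm]
    rw [h1, h5, hcount e he]
    rw [← h2, ← Finset.card_filter_add_card_filter_not R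
      (s := Finset.univ.filter (fun i => e ∈ S i)), Finset.filter_filter, Finset.filter_filter,
      add_comm]
    simp only [and_comm]
  · have h5 := Finset.card_filter_add_card_filter_not R (s := (Finset.univ : Finset ι))
    rw [hRcard, Finset.card_univ] at h5
    rw [Fintype.card_sum, Fintype.card_fin, Fintype.card_subtype]
    omega

/-- A cyclically 4-edge-connected cubic graph on at least four vertices has a double cover with one
circuit less than
`|E| - |V| + 2`, and with two less if it has more than four vertices: a member of a maximal cover has
at least three, respectively four edges. -/
theorem exists_improved (hG : G.Good) (h3 : ∀ v ∈ G.verts, (G.cut {v}).card = 3) (h4 : G.Cyc4)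
    (hV : 4 ≤ G.verts.card) : ∃ m, G.HasCDC m ∧ m + G.verts.card + 1 ≤ G.edges.card + 2 ∧
      (5 ≤ G.verts.card → m + G.verts.card + 2 ≤ G.edges.card + 2) := by
  obtain ⟨m, ⟨ι, _, S, hm, hS, hd⟩, hmc⟩ := exists_max _ G le_rfl hG
  obtain ⟨v, hv, hv3⟩ := hG.branch
  obtain ⟨e, he⟩ := Finset.card_pos.1 (by omega : 0 < (G.cut {v}).card)
  obtain ⟨c, hc⟩ := Finset.card_pos.1 (by rw [hd e (cut_sub _ he)]; norm_num :
    0 < (Finset.univ.filter (fun i => e ∈ S i)).card)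
  obtain ⟨m', hm', hc'⟩ := recolour hG h3 h4 hS hd (by omega) c
  have := circuit_length hG.wf h3 h4 (hS c)
  exact ⟨m', hm', by omega, by omega⟩

/-! ### Graphs with few parallel edges -/

/-- All pairs of parallel edges have `y` as a common end. -/
def ParallelAt (G : MG α E) (y : α) : Prop :=
  ∀ a b e f, e ∈ G.edges → f ∈ G.edges → e ≠ f → a ≠ b → G.inc e a → G.inc e b → G.inc f a →
    G.inc f b → a = y ∨ b = y

lemma inc_of_contract {X : Finset α} {x a : α} {e : E} (h : (G.contract X x).inc e a)
    (ha : a ≠ x) : G.inc e a ∧ a ∉ X := by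
  rcases h with h | h
  · simp only [contract] at h
    split_ifs at h with h1
    · exact absurd h.symm ha
    · exact ⟨Or.inl h, h ▸ h1⟩
  · simp only [contract] at h
    split_ifs at h with h1
    · exact absurd h.symm ha
    · exact ⟨Or.inr h, h ▸ h1⟩

lemma ParallelAt.contract {y x : α} (h : G.ParallelAt y) {X : Finset α} (hy : y ∈ X) :
    (G.contract X x).ParallelAt x := by
  intro a b e f he hf hef hab h1 h2 h3 h4
  by_contra hcon
  push Not at hcon
  obtain ⟨h1, ha⟩ := inc_of_contract h1 hcon.1
  obtain ⟨h2, hb⟩ := inc_of_contract h2 hcon.2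
  obtain ⟨h3, -⟩ := inc_of_contract h3 hcon.1
  obtain ⟨h4, -⟩ := inc_of_contract h4 hcon.2
  rcases h a b e f (contract_edges_sub _ _ he) (contract_edges_sub _ _ hf) hef hab h1 h2 h3 h4
    with rfl | rfl
  · exact ha hy
  · exact hb hy

lemma contract_cubic {X : Finset α} {x : α} (hx : x ∈ X)
    (h3 : ∀ v ∈ G.verts, v ∉ X → (G.cut {v}).card = 3) :
    ∀ v ∈ (G.contract X x).verts, v ≠ x → ((G.contract X x).cut {v}).card = 3 := by
  intro v hv hvx
  simp only [contract, Finset.mem_insert, Finset.mem_sdiff] at hv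
  rcases hv with h | ⟨h1, h2⟩
  · exact absurd h hvx
  · exact (contract_cut_other hx h1 h2).symm ▸ h3 v h1 h2

lemma cubic_handshake (hG : G.WF) (h3 : ∀ v ∈ G.verts, (G.cut {v}).card = 3) :
    3 * G.verts.card = 2 * G.edges.card := by
  rw [← handshake hG (Finset.Subset.refl G.edges), Finset.sum_congr rfl (g := fun _ => 3),
    Finset.sum_const, smul_eq_mul, mul_comm]
  intro v hv
  rw [Finset.inter_eq_right.2 (cut_sub _), h3 v hv]

lemma glue_bound (hG : G.WF) {X : Finset α} {x y : α} (hX : X ⊆ G.verts) (hx : x ∈ X)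
    (hy : y ∈ G.verts \ X) (h2 : 2 ≤ (G.cut X).card) (h3 : (G.cut X).card ≤ 3) {k₁ k₂ : ℕ}
    (h₁ : ∃ m, (G.contract X x).HasCDC m ∧
      m + (G.contract X x).verts.card + k₁ ≤ (G.contract X x).edges.card + 2)
    (h₂ : ∃ m, (G.contract (G.verts \ X) y).HasCDC m ∧
      m + (G.contract (G.verts \ X) y).verts.card + k₂
        ≤ (G.contract (G.verts \ X) y).edges.card + 2) :
    ∃ m, G.HasCDC m ∧ m + G.verts.card + k₁ + k₂ ≤ G.edges.card + 2 := by
  obtain ⟨m₁, hm₁, hk₁⟩ := h₁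
  obtain ⟨m₂, hm₂, hk₂⟩ := h₂
  obtain ⟨m, hm, hmc⟩ := glue hG hx hy h2 h3 hm₂ hm₁
  have e1 := card_contract_verts hX hx
  have e2 := card_contract_verts Finset.sdiff_subset hy
  have e3 := card_contract_edges hG (X := X) (x := x) (y := y)
  have e4 := Finset.card_sdiff_add_card_eq_card hX
  exact ⟨m, hm, by omega⟩

/-- A graph on at least three vertices that is cubic and without parallel edges away from a vertex
`y` has a double cover with one circuit less than the Euler bound `|E| - |V| + 2`. -/
theorem rooted_bound : ∀ (n : ℕ) (G : MG α E) (y : α), G.verts.card ≤ n → G.Good → y ∈ G.verts →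
    (∀ v ∈ G.verts, v ≠ y → (G.cut {v}).card = 3) → G.ParallelAt y → 3 ≤ G.verts.card →
    ∃ m, G.HasCDC m ∧ m + G.verts.card + 1 ≤ G.edges.card + 2 := by
  intro n
  induction n with
  | zero => intro G y hn _ _ _ _ h; omega
  | succ n ih =>
    intro G y hn hG hy h3 hp hV
    have hwf := hG.wf
    by_cases hy3 : (G.cut {y}).card = 3
    · have hcub : ∀ v ∈ G.verts, (G.cut {v}).card = 3 := fun v hv => by
        by_cases h : v = y
        · exact h ▸ hy3
        · exact h3 v hv h
      have hh := cubic_handshake hwf hcub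
      by_cases h4 : G.Cyc4
      · obtain ⟨m, hm, hm1, -⟩ := exists_improved hG hcub h4 (by omega)
        exact ⟨m, hm, hm1⟩
      · -- the side of the cut that contains `y` is contracted to `y`
        obtain ⟨X, hX, hX2, hY2, hc, hyX⟩ : ∃ X ⊆ G.verts, 2 ≤ X.card ∧ 2 ≤ (G.verts \ X).card ∧
            (G.cut X).card ≤ 3 ∧ y ∈ X := by
          simp only [Cyc4, not_forall, not_le] at h4
          obtain ⟨X, hX, hX2, hY2, hc⟩ := h4
          by_cases hyX : y ∈ X
          · exact ⟨X, hX, hX2, hY2, by omega, hyX⟩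
          · exact ⟨G.verts \ X, Finset.sdiff_subset, hY2, by rwa [Finset.sdiff_sdiff_eq_self hX],
              by rw [cut_compl hwf]; omega, Finset.mem_sdiff.2 ⟨hy, hyX⟩⟩
        obtain ⟨z, hz⟩ := Finset.card_pos.1 (by omega : 0 < (G.verts \ X).card)
        obtain ⟨g1, hc2⟩ := split_good hG hcub hX hX2 hY2 hc hyX
        obtain ⟨g2, -⟩ := split_good hG hcub Finset.sdiff_subset hY2
          (by rwa [Finset.sdiff_sdiff_eq_self hX]) (by rw [cut_compl hwf]; omega) hz
        have e1 := card_contract_verts hX hyX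
        have e4 := Finset.card_sdiff_add_card_eq_card hX
        refine glue_bound (k₁ := 1) (k₂ := 0) hwf hX hyX hz hc2 hc ?_ ?_
        · exact ih _ y (by omega) g1 (Finset.mem_insert_self _ _)
            (contract_cubic hyX (fun v hv _ => hcub v hv)) (hp.contract hyX) (by omega)
        · obtain ⟨m, hm, hmc⟩ := exists_max _ _ le_rfl g2
          exact ⟨m, hm, by omega⟩
    · obtain ⟨w, e, f, hw, hyw, hef, hc, hew, hfw, hgood, hcv, hce, -⟩ := exists_suppress hG hy hy3
      -- with only three vertices, the two vertices other than `y` would be joined by two edges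
      have hV4 : 4 ≤ G.verts.card := by
        by_contra hlt
        have hc1 := Finset.card_sdiff_add_card_eq_card (pair_sub hy hw)
        rw [Finset.card_pair hyw] at hc1
        obtain ⟨z, hz⟩ := Finset.card_eq_one.1 (by omega : (G.verts \ {y, w}).card = 1)
        have hz' : z ∈ G.verts \ {y, w} := by rw [hz]; simp
        simp only [Finset.mem_sdiff, Finset.mem_insert, Finset.mem_singleton, not_or] at hz'
        have hwz : w ≠ z := fun h => hz'.2.2 h.symm
        have hcomp : G.verts \ {w, z} = {y} := by
          ext a
          have := Finset.ext_iff.1 hz a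
          simp only [Finset.mem_sdiff, Finset.mem_insert, Finset.mem_singleton, not_or] at this ⊢
          constructor
          · rintro ⟨h1, h2, h3⟩
            by_contra h4
            exact h3 (this.1 ⟨h1, h4, h2⟩)
          · rintro rfl
            exact ⟨hy, hyw, fun h => hz'.2.1 h.symm⟩
        have h1 := cut_pair hwf hwz
        rw [← cut_compl hwf, hcomp, hc, Finset.card_pair hef, h3 w hw hyw.symm,
          h3 z hz'.1 hz'.2.1] at h1
        obtain ⟨g, g', hgg, hgs⟩ := Finset.card_eq_two.1
          (by omega : (G.cut {w} ∩ G.cut {z}).card = 2)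
        have hg : g ∈ G.cut {w} ∩ G.cut {z} := by rw [hgs]; simp
        have hg' : g' ∈ G.cut {w} ∩ G.cut {z} := by rw [hgs]; simp
        rw [Finset.mem_inter, mem_star hwf, mem_star hwf] at hg hg'
        rcases hp w z g g' hg.1.1 hg'.1.1 hgg hwz hg.1.2 hg.2.2 hg'.1.2 hg'.2.2 with h | h
        · exact hyw h.symm
        · exact hz'.2.1 h
      obtain ⟨m, hm, hmc⟩ := ih _ w (by omega) hgood (Finset.mem_insert_self _ _)
        (contract_cubic (by simp) (fun v hv hvX => h3 v hv (by rintro rfl; simp at hvX)))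
        (hp.contract (by simp)) (by omega)
      exact ⟨m, suppress hwf hef hc hew hyw hfw hm, by omega⟩

/-- A cubic graph of the class without parallel edges and with more than four vertices has a double
cover by at most half as many circuits as there are vertices. -/
theorem cubic_bound (hG : G.Good) (hcub : ∀ v ∈ G.verts, (G.cut {v}).card = 3)
    (hp : ∀ y, G.ParallelAt y) (hV : 5 ≤ G.verts.card) :
    ∃ m, G.HasCDC m ∧ 2 * m ≤ G.verts.card := by
  have hwf := hG.wf
  have hh := cubic_handshake hwf hcub
  suffices h : ∃ m, G.HasCDC m ∧ m + G.verts.card + 2 ≤ G.edges.card + 2 by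
    obtain ⟨m, hm, hmc⟩ := h
    exact ⟨m, hm, by omega⟩
  by_cases h4 : G.Cyc4
  · obtain ⟨m, hm, -, hm2⟩ := exists_improved hG hcub h4 (by omega)
    exact ⟨m, hm, hm2 hV⟩
  · simp only [Cyc4, not_forall, not_le] at h4
    obtain ⟨X, hX, hX2, hY2, hc⟩ := h4
    obtain ⟨x, hx⟩ := Finset.card_pos.1 (by omega : 0 < X.card)
    obtain ⟨y, hy⟩ := Finset.card_pos.1 (by omega : 0 < (G.verts \ X).card)
    obtain ⟨g1, hc2⟩ := split_good hG hcub hX hX2 hY2 (by omega) hx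
    obtain ⟨g2, -⟩ := split_good hG hcub Finset.sdiff_subset hY2
      (by rwa [Finset.sdiff_sdiff_eq_self hX]) (by rw [cut_compl hwf]; omega) hy
    have e1 := card_contract_verts hX hx
    have e2 := card_contract_verts Finset.sdiff_subset hy
    have e4 := Finset.card_sdiff_add_card_eq_card hX
    refine glue_bound (k₁ := 1) (k₂ := 1) hwf hX hx hy hc2 (by omega) ?_ ?_
    · exact rooted_bound _ _ x le_rfl g1 (Finset.mem_insert_self _ _)
        (contract_cubic hx (fun v hv _ => hcub v hv)) ((hp x).contract hx) (by omega)
    · exact rooted_bound _ _ y le_rfl g2 (Finset.mem_insert_self _ _)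
        (contract_cubic hy (fun v hv _ => hcub v hv)) ((hp y).contract hy) (by omega)

/-! ### From simple graphs to multigraphs and back -/

lemma connected_of_cross {W : Type*} [Nonempty W] (H : SimpleGraph W)
    (h : ∀ Z : Set W, ∀ x ∈ Z, ∀ y ∉ Z, ∃ a ∈ Z, ∃ b ∉ Z, H.Adj a b) : H.Connected := by
  refine ⟨fun x y => ?_⟩
  by_contra hxy
  obtain ⟨a, ha, b, hb, hab⟩ := h {z | H.Reachable x z} x (Reachable.refl x) y hxy
  exact hb (ha.trans hab.reachable)

lemma cross_of_connected {W : Type*} {H : SimpleGraph W} (h : H.Connected) (Z : Set W)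
    {x y : W} (hx : x ∈ Z) (hy : y ∉ Z) : ∃ a ∈ Z, ∃ b ∉ Z, H.Adj a b := by
  obtain ⟨p⟩ := h.preconnected x y
  obtain ⟨d, -, h1, h2⟩ := p.exists_boundary_dart Z hx hy
  exact ⟨_, h1, _, h2, d.adj⟩

section OfGraph

variable {V : Type*} [Fintype V] (H : SimpleGraph V)

/-- A simple graph as a multigraph: the edges are unordered pairs, with arbitrarily ordered ends. -/
noncomputable def ofGraph : MG V (Sym2 V) where
  verts := Finset.univ
  edges := Finset.univ.filter (· ∈ H.edgeSet)
  s e := (Quot.out e).1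
  t e := (Quot.out e).2

variable {H}

lemma ofGraph_ends (e : Sym2 V) : s((ofGraph H).s e, (ofGraph H).t e) = e := Quot.out_eq e

lemma ofGraph_edges {e : Sym2 V} : e ∈ (ofGraph H).edges ↔ e ∈ H.edgeSet := by
  simp [ofGraph]

lemma ofGraph_inc {e : Sym2 V} {v : V} : (ofGraph H).inc e v ↔ v ∈ e := by
  conv_rhs => rw [← ofGraph_ends (H := H) e, Sym2.mem_iff]
  simp only [inc, eq_comm]

lemma ofGraph_wf : (ofGraph H).WF := by
  intro e he
  refine ⟨Finset.mem_univ _, Finset.mem_univ _, ?_⟩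
  rw [ofGraph_edges, ← ofGraph_ends (H := H) e, mem_edgeSet] at he
  exact he.ne

lemma ofGraph_cut {X : Finset V} {e : Sym2 V} :
    e ∈ (ofGraph H).cut X ↔ ∃ a ∈ X, ∃ b ∉ X, H.Adj a b ∧ e = s(a, b) := by
  rw [mem_cut, ofGraph_edges]
  have he := ofGraph_ends (H := H) e
  constructor
  · rintro ⟨h1, h2⟩
    rw [← he, mem_edgeSet] at h1
    by_cases hs : (ofGraph H).s e ∈ X
    · exact ⟨_, hs, _, fun ht => h2 ⟨fun _ => ht, fun _ => hs⟩, h1, he.symm⟩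
    · have ht : (ofGraph H).t e ∈ X := by tauto
      exact ⟨_, ht, _, hs, h1.symm, by rw [Sym2.eq_swap]; exact he.symm⟩
  · rintro ⟨a, ha, b, hb, hab, h⟩
    refine ⟨by rw [h]; exact hab, ?_⟩
    have : s((ofGraph H).s e, (ofGraph H).t e) = s(a, b) := he.trans h
    rcases Sym2.eq_iff.1 this with ⟨h1, h2⟩ | ⟨h1, h2⟩ <;> rw [h1, h2] <;> tauto

/-- The edges of `F` at `v` correspond to the neighbours of `v` along `F`. -/
lemma ofGraph_card_star {F : Finset (Sym2 V)} (hF : F ⊆ (ofGraph H).edges) (v : V) :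
    {w | s(v, w) ∈ F}.ncard = (F ∩ (ofGraph H).cut {v}).card := by
  have hinj : Function.Injective (fun w : V => s(v, w)) := fun a b h => Sym2.congr_right.1 h
  rw [← Set.ncard_image_of_injective _ hinj, ← Set.ncard_coe_finset]
  congr 1
  ext e
  simp only [Set.mem_image, Set.mem_ofPred_eq, Finset.coe_inter, Set.mem_inter_iff,
    Finset.mem_coe, mem_star ofGraph_wf, ofGraph_inc]
  constructor
  · rintro ⟨w, hw, rfl⟩
    exact ⟨hw, hF hw, Sym2.mem_mk_left _ _⟩
  · rintro ⟨h1, h2, h3⟩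
    obtain ⟨w, rfl⟩ := Sym2.mem_iff_exists.1 h3
    exact ⟨w, h1, rfl⟩

lemma ofGraph_star (hcubic : ∀ v : V, (H.neighborSet v).ncard = 3) (v : V) :
    ((ofGraph H).cut {v}).card = 3 := by
  have := ofGraph_card_star (H := H) (Finset.Subset.refl _) v
  rw [Finset.inter_eq_right.2 (cut_sub _)] at this
  rw [← this, ← hcubic v]
  congr 1
  ext w
  simp [ofGraph_edges]

lemma ofGraph_parallel (y : V) : (ofGraph H).ParallelAt y := by
  intro a b e f _ _ hef hab h1 h2 h3 h4
  rw [ofGraph_inc] at h1 h2 h3 h4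
  exact absurd (((Sym2.mem_and_mem_iff hab).1 ⟨h1, h2⟩).trans
    ((Sym2.mem_and_mem_iff hab).1 ⟨h3, h4⟩).symm) hef

/-- A 2-connected cubic graph is 2-edge-connected: after one end of a cut edge is removed, another
edge still crosses the cut. -/
lemma ofGraph_two (h2 : IsKConnected 2 H) (hcubic : ∀ v : V, (H.neighborSet v).ncard = 3)
    {X : Finset V} (hX : X.Nonempty) (hX2 : X ≠ Finset.univ) :
    2 ≤ ((ofGraph H).cut X).card := by
  obtain ⟨x, hx⟩ := hX
  obtain ⟨y, hy⟩ : ∃ y, y ∉ X := by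
    by_contra hcon
    push Not at hcon
    exact hX2 (Finset.eq_univ_iff_forall.2 hcon)
  -- a cut edge avoiding any set of at most one vertex that leaves both sides nonempty
  have key : ∀ S : Set V, S.ncard < 2 → ∀ x ∈ X, x ∉ S → ∀ y ∉ X, y ∉ S →
      ∃ a ∈ X, ∃ b ∉ X, a ∉ S ∧ H.Adj a b := by
    intro S hS x hx hxS y hy hyS
    obtain ⟨a, ha, b, hb, hab⟩ := cross_of_connected (h2.2 S hS) {z | z.1 ∈ X}
      (x := ⟨x, hxS⟩) (y := ⟨y, hyS⟩) hx hy
    exact ⟨a.1, ha, b.1, hb, a.2, hab⟩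
  obtain ⟨a, ha, b, hb, -, hab⟩ := key ∅ (by simp) x hx (by simp) y hy (by simp)
  by_cases hXa : X = {a}
  · rw [hXa, ofGraph_star hcubic]; omega
  · obtain ⟨z, hz, hza⟩ : ∃ z ∈ X, z ≠ a := by
      by_contra hcon
      push Not at hcon
      exact hXa (Finset.eq_singleton_iff_unique_mem.2 ⟨ha, hcon⟩)
    obtain ⟨c, hc, d, hd, hca, hcd⟩ := key {a} (by simp) z hz hza b hb
      (fun h => hb (by rw [Set.mem_singleton_iff.1 h]; exact ha))
    refine Finset.one_lt_card.2 ⟨s(a, b), ofGraph_cut.2 ⟨a, ha, b, hb, hab, rfl⟩, s(c, d),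
      ofGraph_cut.2 ⟨c, hc, d, hd, hcd, rfl⟩, fun h => ?_⟩
    rcases Sym2.eq_iff.1 h with ⟨h1, -⟩ | ⟨h1, -⟩
    · exact hca h1.symm
    · exact hd (h1 ▸ ha)

lemma ofGraph_joins {e : Sym2 V} (he : e ∈ (ofGraph H).edges) {A B : Finset V}
    (h : (ofGraph H).joins e A B) : ∃ a ∈ A, ∃ b ∈ B, H.Adj a b := by
  rw [ofGraph_edges, ← ofGraph_ends (H := H) e, mem_edgeSet] at he
  rcases h with h | h
  · exact ⟨_, h.1, _, h.2, he⟩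
  · exact ⟨_, h.1, _, h.2, he.symm⟩

lemma ofGraph_conn {X : Finset V} (hX : X.Nonempty) (h : (ofGraph H).Conn X) :
    (H.induce (X : Set V)).Connected := by
  have : Nonempty (X : Set V) := hX.to_subtype
  refine connected_of_cross _ fun Z x hx y hy => ?_
  obtain ⟨e, he, hj⟩ := h (X.filter fun v => ∃ hv : v ∈ (X : Set V), (⟨v, hv⟩ : (X : Set V)) ∈ Z)
    (Finset.filter_subset _ _) ⟨x.1, Finset.mem_filter.2 ⟨x.2, x.2, hx⟩⟩ (fun h => by
      have h1 := (Finset.ext_iff.1 h y.1).2 y.2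
      obtain ⟨-, _, h2⟩ := Finset.mem_filter.1 h1
      exact hy h2)
  obtain ⟨a, ha, b, hb, hab⟩ := ofGraph_joins he hj
  rw [Finset.mem_filter] at ha
  obtain ⟨ha, haX, haZ⟩ := ha
  rw [Finset.mem_sdiff, Finset.mem_filter] at hb
  exact ⟨⟨a, haX⟩, haZ, ⟨b, hb.1⟩, fun h => hb.2 ⟨hb.1, hb.1, h⟩, hab⟩

lemma ofGraph_minor (h : (ofGraph H).HasK33) :
    HasGraphMinor H (completeBipartiteGraph (Fin 3) (Fin 3)) := by
  obtain ⟨f, hf, hd, hj⟩ := h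
  refine ⟨fun w => f w, fun w => (hf w).1, fun w => ofGraph_conn (hf w).1 (hf w).2.2,
    fun a b hab => Finset.disjoint_coe.2 (hd hab), ?_⟩
  rintro (i | i) (j | j) hij
  · simp at hij
  · obtain ⟨e, he, h⟩ := hj i j
    exact ofGraph_joins he h
  · obtain ⟨e, he, h⟩ := hj j i
    obtain ⟨a, ha, b, hb, hab⟩ := ofGraph_joins he h
    exact ⟨b, hb, a, ha, hab.symm⟩
  · simp at hij

lemma ofGraph_good (hplanar : IsPlanar H) (h2 : IsKConnected 2 H)
    (hcubic : ∀ v : V, (H.neighborSet v).ncard = 3) (hn : 4 < Fintype.card V) :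
    (ofGraph H).Good where
  wf := ofGraph_wf
  two X _ hX hX2 := ofGraph_two h2 hcubic hX hX2
  deg v _ := (ofGraph_star hcubic v).le
  branch := by
    have : Nonempty V := Fintype.card_pos_iff.1 (by omega)
    exact ⟨Classical.arbitrary V, Finset.mem_univ _, ofGraph_star hcubic _⟩
  k33 h := hplanar.2 (ofGraph_minor h)

/-- The subgraph formed by a set of edges and their ends. -/
def toSub (H : SimpleGraph V) (C : Finset (Sym2 V)) : H.Subgraph where
  verts := {v | ∃ w, H.Adj v w ∧ s(v, w) ∈ C}
  Adj a b := H.Adj a b ∧ s(a, b) ∈ C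
  adj_sub h := h.1
  edge_vert {a b} h := ⟨b, h⟩
  symm := ⟨fun _ _ h => ⟨h.1.symm, by rw [Sym2.eq_swap]; exact h.2⟩⟩

omit [Fintype V] in
lemma toSub_edgeSet {C : Finset (Sym2 V)} {e : Sym2 V} (he : e ∈ H.edgeSet) :
    e ∈ (toSub H C).edgeSet ↔ e ∈ C := by
  induction e with
  | h a b =>
    rw [Subgraph.mem_edgeSet]
    exact ⟨fun h => h.2, fun h => ⟨he, h⟩⟩

lemma toSub_isCycle (hcubic : ∀ v : V, (H.neighborSet v).ncard = 3) {C : Finset (Sym2 V)}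
    (hC : (ofGraph H).Circuit C) : IsCycleSubgraph (toSub H C) := by
  have hadj : ∀ {a b}, s(a, b) ∈ C → H.Adj a b := fun h => ofGraph_edges.1 (hC.sub h)
  constructor
  · obtain ⟨e, he⟩ := hC.ne
    have hne : Nonempty (toSub H C).verts := by
      induction e with
      | h a b => exact ⟨a, b, hadj he, he⟩
    refine connected_of_cross _ fun Z x hx y hy => ?_
    obtain ⟨x, x', hxx, hx'⟩ := x
    obtain ⟨y, y', hyy, hy'⟩ := y
    obtain ⟨e, heC, hec⟩ := hC.cross
      (X := Finset.univ.filter fun v => ∃ hv : v ∈ (toSub H C).verts,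
        (⟨v, hv⟩ : (toSub H C).verts) ∈ Z) (x := x) (y := y)
      (Finset.mem_filter.2 ⟨Finset.mem_univ _, _, hx⟩)
      (fun h => by
        obtain ⟨-, _, h⟩ := Finset.mem_filter.1 h
        exact hy h) hx' (ofGraph_inc.2 (Sym2.mem_mk_left _ _)) hy'
      (ofGraph_inc.2 (Sym2.mem_mk_left _ _))
    obtain ⟨a, ha, b, hb, hab, rfl⟩ := ofGraph_cut.1 hec
    obtain ⟨-, hav, haZ⟩ := Finset.mem_filter.1 ha
    have hbv : b ∈ (toSub H C).verts := ⟨a, hab.symm, by rw [Sym2.eq_swap]; exact heC⟩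
    exact ⟨⟨a, hav⟩, haZ, ⟨b, hbv⟩,
      fun h => hb (Finset.mem_filter.2 ⟨Finset.mem_univ _, hbv, h⟩), hab, heC⟩
  · rintro v ⟨w, -, hw⟩
    have h1 := hC.deg ofGraph_wf (ofGraph_star hcubic v).le hw
      (ofGraph_inc.2 (Sym2.mem_mk_left _ _))
    have h2 : (toSub H C).neighborSet v = {w | s(v, w) ∈ C} := by
      ext u
      exact ⟨fun h => h.2, fun h => ⟨hadj h, h⟩⟩
    rw [h2, ofGraph_card_star hC.sub, ← h1]
    congr!

end OfGraph

end MG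

/-- Every planar 2-connected cubic simple graph on `n > 4` vertices has a cycle double
cover of size at most `n/2`. -/
theorem statement_14 {V : Type*} [Fintype V] (G : SimpleGraph V)
    (hplanar : IsPlanar G) (h2 : IsKConnected 2 G)
    (hcubic : ∀ v : V, (G.neighborSet v).ncard = 3)
    (hn : 4 < Fintype.card V) :
    ∃ S : Multiset G.Subgraph, IsCDC G S ∧
      2 * Multiset.card S ≤ Fintype.card V := by
  obtain ⟨m, ⟨ι, _, S, hι, hS, hcov⟩, hm⟩ := MG.cubic_bound
    (MG.ofGraph_good hplanar h2 hcubic hn) (fun v _ => MG.ofGraph_star hcubic v)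
    MG.ofGraph_parallel (by simpa [MG.ofGraph] using Nat.succ_le_of_lt hn)
  refine ⟨(Finset.univ : Finset ι).val.map fun i => MG.toSub G (S i), ⟨?_, ?_⟩, ?_⟩
  · intro C hC
    obtain ⟨i, -, rfl⟩ := Multiset.mem_map.1 hC
    exact MG.toSub_isCycle hcubic (hS i)
  · intro e he
    rw [← hcov e (MG.ofGraph_edges.2 he), Multiset.countP_map, Finset.card_def, Finset.filter_val]
    simp only [MG.toSub_edgeSet he]
    congr!
  · rw [Multiset.card_map, Finset.card_val, Finset.card_univ, hι]
    simpa [MG.ofGraph] using hm
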